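/- arXiv:2303.05932 — 2 statements merged into one kernel-verified Lean document; each statement's English description precedes it below -/
import Mathlib

section
/- For every natural number m, the symmetric group S_m has exactly one irreducible complex character of 2-defect zero if m is a triangular number, and has no irreducible complex character of 2-defect zero otherwise. -/
open Classical

/-- A natural number is triangular if it is of the form `k * (k + 1) / 2`. -/
def IsTriangular (m : ℕ) : Prop := ∃ k : ℕ, m = k * (k + 1) / 2


namespace SymDZ

/-- homogeneous expansion of a product of linear forms -/
lemma prod_lin_expand {R ι : Type*} [CommRing R] (y : ι → R) (S : Finset ι) (a b : R) :
    ∏ k ∈ S, (b - a * y k) = ∑ t ∈ Finset.range (S.card + 1),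
      a ^ t * b ^ (S.card - t) * ∑ T ∈ S.powersetCard t, ∏ k ∈ T, (- y k) := by
  have h1 : ∏ k ∈ S, (b - a * y k) = ∏ k ∈ S, (a * (- y k) + b) := by
    apply Finset.prod_congr rfl; intros; ring
  rw [h1, Finset.prod_add, Finset.sum_powerset]
  apply Finset.sum_congr rfl
  intro t _
  rw [Finset.mul_sum]
  apply Finset.sum_congr rfl
  intro T hT
  rw [Finset.mem_powersetCard] at hT
  rw [Finset.prod_mul_distrib, Finset.prod_const, Finset.prod_const, hT.2,
    Finset.card_sdiff_of_subset hT.1, hT.2]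
  ring

/-- coefficient matrix -/
noncomputable def coefMat {R : Type*} [CommRing R] {n : ℕ} (y : Fin n → R) :
    Matrix (Fin n) (Fin n) R :=
  Matrix.of fun t j => ∑ T ∈ (Finset.univ.erase j).powersetCard t, ∏ k ∈ T, (- y k)

lemma proj_mul_coefMat {R : Type*} [CommRing R] {n : ℕ} (y v w : Fin n → R) (i j : Fin n) :
    (Matrix.projVandermonde v w * coefMat y) i j
      = ∏ k ∈ Finset.univ.erase j, (w i - v i * y k) := by
  rw [prod_lin_expand, Matrix.mul_apply]
  have hc : (Finset.univ.erase j).card + 1 = n := by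
    rw [Finset.card_erase_add_one (Finset.mem_univ j)]; simp
  rw [hc, ← Fin.sum_univ_eq_sum_range (fun t => v i ^ t * w i ^ ((Finset.univ.erase j).card - t) *
    ∑ T ∈ (Finset.univ.erase j).powersetCard t, ∏ k ∈ T, (- y k))]
  apply Finset.sum_congr rfl
  intro t _
  rw [Matrix.projVandermonde_apply, coefMat, Matrix.of_apply, Fin.val_rev]
  have : (Finset.univ.erase j).card - (t:ℕ) = n - (t + 1) := by omega
  rw [this]

lemma prod_ne_pairs {R : Type*} [CommRing R] {n : ℕ} (y : Fin n → R) :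
    ∏ j, ∏ k ∈ Finset.univ.erase j, (y j - y k) =
      (∏ i : Fin n, ∏ j ∈ Finset.Ioi i, (y i - y j)) *
      (∏ i : Fin n, ∏ j ∈ Finset.Ioi i, (y j - y i)) := by
  have h2 : (∏ i : Fin n, ∏ j ∈ Finset.Ioi i, (y j - y i)) =
      ∏ i : Fin n, ∏ j ∈ Finset.Iio i, (y i - y j) := by
    apply Finset.prod_comm'
    intro x z; simp
  rw [h2, ← Finset.prod_mul_distrib]
  apply Finset.prod_congr rfl
  intro i _
  rw [← Finset.prod_union]
  · congr 1
    ext k; simp [eq_comm, lt_or_lt_iff_ne]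
  · rw [Finset.disjoint_left]; intro a; simp; intro h; exact h.le

lemma det_coefMat {R : Type*} [CommRing R] [IsDomain R] {n : ℕ} (y : Fin n → R)
    (hy : Function.Injective y) :
    (coefMat y).det = (Matrix.vandermonde y).det := by
  have h : Matrix.projVandermonde 1 y * coefMat y =
      Matrix.diagonal (fun j => ∏ k ∈ Finset.univ.erase j, (y j - y k)) := by
    ext i j
    rw [proj_mul_coefMat, Matrix.diagonal_apply]
    split_ifs with hij
    · subst hij; simp
    · apply Finset.prod_eq_zero (i := i)
      · simp [hij]
      · simp
  have h2 := congrArg Matrix.det h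
  rw [Matrix.det_mul, Matrix.det_diagonal, prod_ne_pairs, Matrix.det_projVandermonde] at h2
  rw [Matrix.det_vandermonde]
  simp only [Pi.one_apply, one_mul] at h2
  refine mul_left_cancel₀ ?_ h2
  rw [Finset.prod_ne_zero_iff]; intro i _
  rw [Finset.prod_ne_zero_iff]; intro j hj
  rw [sub_ne_zero]
  intro h; have := hy h; simp [this] at hj

/-- Cauchy determinant -/
lemma cauchy_det {R : Type*} [CommRing R] [IsDomain R] {n : ℕ} (x y : Fin n → R)
    (hy : Function.Injective y) (u : Fin n → Fin n → R) (hu : ∀ i j, (1 - x i * y j) * u i j = 1) :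
    (Matrix.vandermonde x).det * (Matrix.vandermonde y).det * ∏ i, ∏ j, u i j =
      (Matrix.of u).det := by
  have h : Matrix.projVandermonde x 1 * coefMat y =
      Matrix.of (fun i j => (∏ k, (1 - x i * y k)) * u i j) := by
    ext i j
    rw [proj_mul_coefMat, Matrix.of_apply, ← Finset.mul_prod_erase _ _ (Finset.mem_univ j),
      mul_right_comm, hu, one_mul]
    rfl
  have h2 := congrArg Matrix.det h
  rw [Matrix.det_mul, det_coefMat y hy, ← Matrix.vandermonde_eq_projVandermonde] at h2
  rw [h2]
  have h3 := Matrix.det_mul_column (fun i => ∏ k, (1 - x i * y k)) (Matrix.of u)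
  simp only [Matrix.of_apply] at h3
  rw [h3, mul_right_comm, ← Finset.prod_mul_distrib]
  have : ∀ i, (∏ k, (1 - x i * y k)) * ∏ k, u i k = 1 := by
    intro i; rw [← Finset.prod_mul_distrib]; simp [hu]
  simp [this]


/-- geometric series in a monomial -/
noncomputable def geo {τ : Type*} (v : τ →₀ ℕ) : MvPowerSeries τ ℤ :=
  fun d => if ∃ t : ℕ, d = t • v then 1 else 0

lemma coeff_geo {τ : Type*} (v d : τ →₀ ℕ) :
    MvPowerSeries.coeff d (geo v) = if ∃ t : ℕ, d = t • v then 1 else 0 := rfl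

lemma geo_inv {τ : Type*} (v : τ →₀ ℕ) (hv : v ≠ 0) :
    (1 - MvPowerSeries.monomial v (1:ℤ)) * geo v = 1 := by
  ext d
  rw [sub_mul, one_mul, map_sub, MvPowerSeries.coeff_monomial_mul, coeff_geo, MvPowerSeries.coeff_one]
  by_cases hd : v ≤ d
  · have hd0 : d ≠ 0 := by
      rintro rfl; exact hv (le_antisymm hd (zero_le))
    rw [if_pos hd, coeff_geo, if_neg hd0, one_mul]
    have : (∃ t : ℕ, d = t • v) ↔ (∃ t : ℕ, d - v = t • v) := by
      constructor
      · rintro ⟨t, rfl⟩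
        rcases t with _ | t
        · simp at hd0
        · exact ⟨t, by rw [succ_nsmul, add_tsub_cancel_right]⟩
      · rintro ⟨t, ht⟩
        exact ⟨t + 1, by rw [succ_nsmul, ← ht, tsub_add_cancel_of_le hd]⟩
    simp [this]
  · rw [if_neg hd, sub_zero]
    have : (∃ t : ℕ, d = t • v) ↔ d = 0 := by
      constructor
      · rintro ⟨t, rfl⟩
        rcases t with _ | t
        · simp
        · exfalso; apply hd; rw [succ_nsmul]; exact le_add_self
      · rintro rfl; exact ⟨0, by simp⟩
    simp [this]

lemma coeff_prod_geo {τ ι : Type*} [Fintype ι] (v : ι → τ →₀ ℕ) (hv : ∀ s, v s ≠ 0) (d : τ →₀ ℕ) :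
    MvPowerSeries.coeff d (∏ s, geo (v s)) = Nat.card {A : ι → ℕ // ∑ s, A s • v s = d} := by
  rw [MvPowerSeries.coeff_prod]
  simp only [coeff_geo]
  have h1 : ∀ l : ι →₀ τ →₀ ℕ, (∏ i, if ∃ t : ℕ, l i = t • v i then (1:ℤ) else 0) =
      if (∀ i, ∃ t : ℕ, l i = t • v i) then 1 else 0 := by
    intro l
    split_ifs with h
    · apply Finset.prod_eq_one; intro i _; rw [if_pos (h i)]
    · push Not at h
      obtain ⟨i, hi⟩ := h
      apply Finset.prod_eq_zero (Finset.mem_univ i); rw [if_neg]; push Not; exact hi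
  rw [Finset.sum_congr rfl (fun l _ => h1 l), Finset.sum_boole]
  congr 1
  rw [← Fintype.card_coe, ← Nat.card_eq_fintype_card]
  symm
  have hmem : ∀ A : {A : ι → ℕ // ∑ s, A s • v s = d},
      (Finsupp.equivFunOnFinite.symm (fun s => A.1 s • v s)) ∈
      Finset.filter (fun l : ι →₀ τ →₀ ℕ => ∀ i, ∃ t : ℕ, l i = t • v i)
        (Finset.univ.finsuppAntidiag d) := by
    rintro ⟨A, hA⟩
    simp only [Finset.mem_filter, Finset.mem_finsuppAntidiag]
    refine ⟨⟨by simpa using hA, by simp⟩, fun i => ⟨A i, by simp⟩⟩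
  refine Nat.card_eq_of_bijective (fun A => ⟨_, hmem A⟩) ⟨?_, ?_⟩
  · rintro ⟨A, hA⟩ ⟨B, hB⟩ h
    simp only [Subtype.mk.injEq, EmbeddingLike.apply_eq_iff_eq] at h
    ext s
    have := congrFun h s
    obtain ⟨z, hz⟩ := Finsupp.ne_iff.1 (hv s)
    have h3 := DFunLike.congr_fun this z
    simp only [Finsupp.smul_apply, smul_eq_mul] at h3
    exact Nat.eq_of_mul_eq_mul_right (Nat.pos_of_ne_zero hz) h3
  · rintro ⟨l, hl⟩
    simp only [Finset.mem_filter, Finset.mem_finsuppAntidiag] at hl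
    choose A hA using hl.2
    have hf : (Finsupp.equivFunOnFinite.symm (fun s => A s • v s)) = l := by
      ext1 s; simp [hA s]
    refine ⟨⟨A, ?_⟩, ?_⟩
    · rw [← hl.1.1]; exact Finset.sum_congr rfl (fun s _ => (hA s).symm)
    · simp only [Subtype.mk.injEq]; exact hf

/-- exponent vector -/
noncomputable def expo {n : ℕ} (a b : Fin n → ℕ) : (Fin n ⊕ Fin n) →₀ ℕ :=
  Finsupp.equivFunOnFinite.symm (Sum.elim a b)

lemma prod_X_expo {n : ℕ} (a b : Fin n → ℕ) :
    (∏ i, (MvPowerSeries.X (Sum.inl i) : MvPowerSeries (Fin n ⊕ Fin n) ℤ) ^ a i) *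
    (∏ i, (MvPowerSeries.X (Sum.inr i) : MvPowerSeries (Fin n ⊕ Fin n) ℤ) ^ b i) =
    MvPowerSeries.monomial (expo a b) 1 := by
  simp only [MvPowerSeries.X_pow_eq, MvPowerSeries.prod_monomial,
    MvPowerSeries.monomial_mul_monomial, Finset.prod_const_one, mul_one]
  congr 2
  ext s
  rcases s with i | i <;>
  simp [expo, Finsupp.single_apply]

/-- exponent of `x_i y_j` -/
noncomputable def ev {n : ℕ} (i j : Fin n) : (Fin n ⊕ Fin n) →₀ ℕ :=
  Finsupp.single (Sum.inl i) 1 + Finsupp.single (Sum.inr j) 1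

lemma ev_ne {n : ℕ} (i j : Fin n) : ev i j ≠ 0 := by
  intro h
  have := DFunLike.congr_fun h (Sum.inl i)
  simp [ev] at this

/-- number of contingency tables -/
noncomputable def NN {n : ℕ} (l : Fin n → ℕ) (σ τ : Equiv.Perm (Fin n)) : ℕ :=
  Nat.card {A : Fin n × Fin n → ℕ // (∀ i, ∑ j, A (i, j) + (σ i : ℕ) = l i) ∧
    (∀ j, ∑ i, A (i, j) + (τ j : ℕ) = l j)}

lemma coeff_NN {n : ℕ} (l : Fin n → ℕ) (σ τ : Equiv.Perm (Fin n)) :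
    MvPowerSeries.coeff (expo l l) (MvPowerSeries.monomial (expo (fun i => (σ i : ℕ)) (fun i => (τ i : ℕ))) 1 *
      ∏ s : Fin n × Fin n, geo (ev s.1 s.2)) = (NN l σ τ : ℤ) := by
  have key : ∀ A : Fin n × Fin n → ℕ, ((∀ i, ∑ j, A (i, j) + (σ i : ℕ) = l i) ∧
    (∀ j, ∑ i, A (i, j) + (τ j : ℕ) = l j)) ↔
    ∑ s, A s • ev s.1 s.2 + expo (fun i => (σ i : ℕ)) (fun i => (τ i : ℕ)) = expo l l := by
    intro A
    rw [DFunLike.ext_iff, Sum.forall, Fintype.sum_prod_type]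
    simp [ev, expo, Finsupp.single_apply]
  rw [MvPowerSeries.coeff_monomial_mul, NN]
  simp only [key]
  split_ifs with h
  · rw [one_mul, coeff_prod_geo _ (fun s => ev_ne _ _)]
    congr 1
    apply Nat.card_congr
    apply Equiv.subtypeEquivRight
    intro A
    exact eq_tsub_iff_add_eq_of_le h
  · symm
    rw [Nat.cast_eq_zero, Nat.card_eq_zero]
    left
    refine ⟨fun A => h ?_⟩
    rw [← A.2]; exact le_add_self

lemma sum_NN {n : ℕ} (l : Fin n → ℕ) (hl : StrictMono l) :
    ∑ σ : Equiv.Perm (Fin n), ∑ τ : Equiv.Perm (Fin n),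
      ((Equiv.Perm.sign σ : ℤ) * (Equiv.Perm.sign τ : ℤ)) * (NN l σ τ : ℤ) = 1 := by
  have : IsDomain (MvPowerSeries (Fin n ⊕ Fin n) ℤ) := NoZeroDivisors.to_isDomain _
  have hc := cauchy_det (R := MvPowerSeries (Fin n ⊕ Fin n) ℤ)
    (fun i => MvPowerSeries.X (Sum.inl i)) (fun i => MvPowerSeries.X (Sum.inr i))
    (by intro i j h; simpa using MvPowerSeries.X_inj.1 h)
    (fun i j => geo (ev i j)) (by
      intro i j
      have := geo_inv (ev i j) (ev_ne i j)
      rw [← this]; congr 2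
      simp [ev, MvPowerSeries.X, MvPowerSeries.monomial_mul_monomial])
  have h2 := congrArg (MvPowerSeries.coeff (expo l l)) hc
  rw [← Matrix.det_transpose, ← Matrix.det_transpose (Matrix.vandermonde _),
    Matrix.det_apply', Matrix.det_apply', Finset.sum_mul_sum, Finset.sum_mul] at h2
  have h3 : ∀ σ : Equiv.Perm (Fin n), ∀ x : Fin n → MvPowerSeries (Fin n ⊕ Fin n) ℤ,
    ∏ i, (Matrix.vandermonde x).transpose (σ i) i = ∏ i, x i ^ (σ i : ℕ) := fun σ x => rfl
  simp only [h3, Finset.sum_mul, map_sum] at h2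
  have h4 : ∀ σ τ : Equiv.Perm (Fin n), MvPowerSeries.coeff (expo l l)
     (((((Equiv.Perm.sign σ : ℤ) : MvPowerSeries (Fin n ⊕ Fin n) ℤ)) *
       ∏ i, (MvPowerSeries.X (Sum.inl i) : MvPowerSeries (Fin n ⊕ Fin n) ℤ) ^ (σ i : ℕ)) *
      ((((Equiv.Perm.sign τ : ℤ) : MvPowerSeries (Fin n ⊕ Fin n) ℤ)) *
       ∏ i, (MvPowerSeries.X (Sum.inr i) : MvPowerSeries (Fin n ⊕ Fin n) ℤ) ^ (τ i : ℕ)) *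
      ∏ i, ∏ j, geo (ev i j)) =
      ((Equiv.Perm.sign σ : ℤ) * (Equiv.Perm.sign τ : ℤ)) * (NN l σ τ : ℤ) := by
    intro σ τ
    rw [← coeff_NN, ← prod_X_expo, Fintype.prod_prod_type, mul_mul_mul_comm, mul_assoc,
      ← Int.cast_mul, ← zsmul_eq_mul, map_zsmul, smul_eq_mul]
  simp only [h4] at h2
  rw [h2, Matrix.det_apply', map_sum]
  have h5 : ∀ σ : Equiv.Perm (Fin n), MvPowerSeries.coeff (expo l l)
      ((((Equiv.Perm.sign σ : ℤ) : MvPowerSeries (Fin n ⊕ Fin n) ℤ)) *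
        ∏ i, (Matrix.of (fun i j => geo (ev i j))) (σ i) i) = if σ = 1 then 1 else 0 := by
    intro σ
    rw [← zsmul_eq_mul, map_zsmul, smul_eq_mul]
    simp only [Matrix.of_apply]
    rw [coeff_prod_geo _ (fun s => ev_ne _ _)]
    have key : ∀ A : Fin n → ℕ, ∑ s, A s • ev (σ s) s = expo l l ↔ (A = l ∧ σ = 1) := by
      intro A
      rw [DFunLike.ext_iff, Sum.forall]
      have e1 : ∀ i, (∑ s, A s • ev (σ s) s) (Sum.inl i) = A (σ.symm i) := by
        intro i
        simp [ev, Finsupp.finsetSum_apply, Finsupp.single_apply, ← Equiv.eq_symm_apply]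
      have e2 : ∀ i, (∑ s, A s • ev (σ s) s) (Sum.inr i) = A i := by
        intro i
        simp [ev, Finsupp.finsetSum_apply, Finsupp.single_apply]
      simp only [e1, e2]
      simp only [expo, Finsupp.equivFunOnFinite_symm_apply_apply, Sum.elim_inl, Sum.elim_inr]
      constructor
      · rintro ⟨h, h'⟩
        refine ⟨funext h', ?_⟩
        ext i : 1
        have := h (σ i)
        rw [Equiv.symm_apply_apply, h' i] at this
        simpa using (hl.injective this).symm
      · rintro ⟨rfl, rfl⟩; exact ⟨fun a => rfl, fun a => rfl⟩
    simp only [key]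
    split_ifs with h
    · subst h; simp
    · simp [h]
  simp only [h5]
  simp


/-- content of a function -/
noncomputable def cont {m : ℕ} {κ : Type*} (F : Fin m → κ) (i : κ) : ℕ := Fintype.card {x // F x = i}

lemma sum_cont {m : ℕ} {κ : Type*} [Fintype κ] (F : Fin m → κ) : ∑ i, cont F i = m := by
  unfold cont
  rw [← Fintype.card_sigma, Fintype.card_congr (Equiv.sigmaFiberEquiv F), Fintype.card_fin]

lemma card_stab {m : ℕ} {κ : Type*} [Fintype κ] (F : Fin m → κ) :
    (Finset.univ.filter (fun g : Equiv.Perm (Fin m) => F ∘ g = F)).card = ∏ i, (cont F i).factorial := by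
  rw [← Fintype.card_subtype]
  have := DomMulAct.stabilizer_card F
  unfold cont
  convert this

lemma exists_cont {m : ℕ} {κ : Type*} [Fintype κ] (a : κ → ℕ) (ha : ∑ i, a i = m) :
    ∃ F : Fin m → κ, cont F = a := by
  have e : Fin m ≃ (Σ i, Fin (a i)) := Fintype.equivOfCardEq (by simp [ha])
  refine ⟨fun x => (e x).1, ?_⟩
  ext i
  unfold cont
  have e2 : {x // (e x).1 = i} ≃ Fin (a i) :=
    (e.subtypeEquiv (q := fun y => y.1 = i) (fun x => Iff.rfl)).trans (Equiv.sigmaSubtype i)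
  rw [Fintype.card_congr e2, Fintype.card_fin]

lemma exists_perm {m : ℕ} {κ : Type*} (F F' : Fin m → κ) (h : cont F = cont F') :
    ∃ g : Equiv.Perm (Fin m), F ∘ g = F' := by
  have e : ∀ i, {x // F' x = i} ≃ {x // F x = i} := fun i =>
    Fintype.equivOfCardEq (congrFun h i).symm
  refine ⟨Equiv.ofFiberEquiv e, ?_⟩
  ext x
  exact Equiv.ofFiberEquiv_map e x

lemma card_cont {m : ℕ} {κ : Type*} [Fintype κ] (a : κ → ℕ) (ha : ∑ i, a i = m) :
    (Finset.univ.filter (fun F : Fin m → κ => cont F = a)).card * ∏ i, (a i).factorial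
      = m.factorial := by
  obtain ⟨F0, hF0⟩ := exists_cont a ha
  have h1 : (Finset.univ : Finset (Equiv.Perm (Fin m))).card = m.factorial := by
    rw [Finset.card_univ, Fintype.card_perm, Fintype.card_fin]
  rw [← h1, Finset.card_eq_sum_card_fiberwise (f := fun g : Equiv.Perm (Fin m) => F0 ∘ g)
    (t := Finset.univ.filter (fun F : Fin m → κ => cont F = a)), ← smul_eq_mul, ← Finset.sum_const]
  · apply Finset.sum_congr rfl
    intro F hF
    simp only [Finset.mem_filter, Finset.mem_univ, true_and] at hF
    obtain ⟨h, hh⟩ := exists_perm F0 F (hF0.trans hF.symm)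
    subst hF0
    rw [← card_stab]
    apply Finset.card_bij (fun g _ => g * h)
    · intro g hg
      simp only [Finset.mem_filter, Finset.mem_univ, true_and] at hg ⊢
      rw [Equiv.Perm.coe_mul, ← Function.comp_assoc, hg, hh]
    · intro g _ g' _ e; exact mul_right_cancel e
    · intro g hg
      simp only [Finset.mem_filter, Finset.mem_univ, true_and] at hg ⊢
      refine ⟨g * h⁻¹, ?_, by simp⟩
      rw [Equiv.Perm.coe_mul, ← Function.comp_assoc, hg, ← hh, Function.comp_assoc,
        ← Equiv.Perm.coe_mul]
      simp
  · intro g _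
    simp only [Finset.coe_filter, Finset.mem_univ, true_and, Set.mem_ofPred_eq]
    rw [← hF0]
    ext i
    unfold cont
    exact Fintype.card_congr (g.subtypeEquiv (fun x => Iff.rfl))

lemma burnside {m : ℕ} {κ : Type*} [Fintype κ] (p : (κ → ℕ) → Prop)
    (hp : ∀ A, p A → ∑ i, A i = m) :
    ∑ g : Equiv.Perm (Fin m), (Finset.univ.filter
      (fun F : Fin m → κ => F ∘ g = F ∧ p (cont F))).card = m.factorial * Nat.card {A // p A} := by
  have h1 : ∑ g : Equiv.Perm (Fin m), (Finset.univ.filter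
      (fun F : Fin m → κ => F ∘ g = F ∧ p (cont F))).card =
      ∑ F ∈ Finset.univ.filter (fun F : Fin m → κ => p (cont F)), ∏ i, (cont F i).factorial := by
    simp only [← card_stab, Finset.card_filter]
    rw [Finset.sum_filter, Finset.sum_comm]
    apply Finset.sum_congr rfl
    intro F _
    by_cases h : p (cont F) <;> simp [h]
  rw [h1]
  set S := Finset.filter p (Finset.piAntidiag (Finset.univ : Finset κ) m) with hS
  have h2 : Nat.card {A // p A} = S.card := by
    rw [← Fintype.card_coe, ← Nat.card_eq_fintype_card]
    apply Nat.card_congr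
    apply Equiv.subtypeEquivRight
    intro A
    simp only [hS, Finset.mem_filter, Finset.mem_piAntidiag]
    exact ⟨fun h => ⟨⟨hp A h, by simp⟩, h⟩, fun h => h.2⟩
  rw [h2, ← Finset.sum_fiberwise_of_maps_to (t := S) (g := fun F => cont F)]
  · rw [mul_comm, ← smul_eq_mul, ← Finset.sum_const]
    apply Finset.sum_congr rfl
    intro A hA
    simp only [hS, Finset.mem_filter, Finset.mem_piAntidiag] at hA
    rw [← card_cont A hA.1.1, ← smul_eq_mul, ← Finset.sum_const, Finset.filter_filter]
    apply Finset.sum_congr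
    · ext F; simp only [Finset.mem_filter, Finset.mem_univ, true_and]
      constructor
      · exact fun h => h.2
      · rintro rfl; exact ⟨hA.2, rfl⟩
    · intro F hF
      simp only [Finset.mem_filter, Finset.mem_univ, true_and] at hF
      rw [hF]
  · intro F hF
    simp only [Finset.mem_filter, Finset.mem_univ, true_and] at hF
    simp [hS, hF, sum_cont]

/-- permutation character -/
noncomputable def P {m n : ℕ} (α : Fin n → ℤ) (g : Equiv.Perm (Fin m)) : ℂ :=
  ((Finset.univ.filter (fun F : Fin m → Fin n => F ∘ g = F ∧ ∀ i, (cont F i : ℤ) = α i)).card : ℂ)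

lemma P_inv {m n : ℕ} (α : Fin n → ℤ) (g : Equiv.Perm (Fin m)) : P α g⁻¹ = P α g := by
  unfold P
  congr 3
  ext F
  have : F ∘ ⇑g⁻¹ = F ↔ F ∘ ⇑g = F := by
    constructor
    · intro h; conv_lhs => rw [← h]
      rw [Function.comp_assoc, ← Equiv.Perm.coe_mul]; simp
    · intro h; conv_lhs => rw [← h]
      rw [Function.comp_assoc, ← Equiv.Perm.coe_mul]; simp
  rw [this]

/-- alternating sum of permutation characters -/
noncomputable def chi {m n : ℕ} (l : Fin n → ℕ) (g : Equiv.Perm (Fin m)) : ℂ :=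
  ∑ σ : Equiv.Perm (Fin n), ((Equiv.Perm.sign σ : ℤ) : ℂ) * P (fun i => (l i : ℤ) - (σ i : ℕ)) g

lemma cont_fst {m n : ℕ} (F : Fin m → Fin n × Fin n) (i : Fin n) :
    cont (fun x => (F x).1) i = ∑ j, cont F (i, j) := by
  simp only [cont, ← Nat.card_eq_fintype_card]
  rw [← Nat.card_sigma]
  apply Nat.card_congr
  exact {
    toFun := fun x => ⟨(F x.1).2, ⟨x.1, Prod.ext x.2 rfl⟩⟩
    invFun := fun y => ⟨y.2.1, by rw [y.2.2]⟩
    left_inv := fun x => rfl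
    right_inv := by
      rintro ⟨j, ⟨x, hx⟩⟩
      have : j = (F x).2 := by rw [hx]
      subst this; rfl }

lemma cont_snd {m n : ℕ} (F : Fin m → Fin n × Fin n) (j : Fin n) :
    cont (fun x => (F x).2) j = ∑ i, cont F (i, j) := by
  simp only [cont, ← Nat.card_eq_fintype_card]
  rw [← Nat.card_sigma]
  apply Nat.card_congr
  exact {
    toFun := fun x => ⟨(F x.1).1, ⟨x.1, Prod.ext rfl x.2⟩⟩
    invFun := fun y => ⟨y.2.1, by rw [y.2.2]⟩
    left_inv := fun x => rfl
    right_inv := by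
      rintro ⟨j, ⟨x, hx⟩⟩
      have : j = (F x).1 := by rw [hx]
      subst this; rfl }

lemma P_inner {m n : ℕ} (l : Fin n → ℕ) (hl : ∑ i, l i = m + ∑ i : Fin n, (i : ℕ))
    (σ τ : Equiv.Perm (Fin n)) :
    ∑ g : Equiv.Perm (Fin m), P (fun i => (l i : ℤ) - (σ i : ℕ)) g * P (fun i => (l i : ℤ) - (τ i : ℕ)) g
      = (m.factorial : ℂ) * (NN l σ τ : ℂ) := by
  unfold NN
  rw [← Nat.cast_mul, ← burnside]
  · rw [Nat.cast_sum]
    apply Finset.sum_congr rfl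
    intro g _
    unfold P
    rw [← Nat.cast_mul, ← Finset.card_product]
    congr 1
    symm
    apply Finset.card_bij (fun F _ => (fun x => (F x).1, fun x => (F x).2))
    · intro F hF
      simp only [Finset.mem_filter, Finset.mem_univ, true_and, Finset.mem_product] at hF ⊢
      obtain ⟨h1, h2, h3⟩ := hF
      refine ⟨⟨?_, ?_⟩, ⟨?_, ?_⟩⟩
      · ext1 x; exact congrArg Prod.fst (congrFun h1 x)
      · intro i; rw [cont_fst]; have := h2 i; omega
      · ext1 x; exact congrArg Prod.snd (congrFun h1 x)
      · intro i; rw [cont_snd]; have := h3 i; omega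
    · intro F _ F' _ h
      simp only [Prod.mk.injEq] at h
      ext1 x
      exact Prod.ext (congrFun h.1 x) (congrFun h.2 x)
    · rintro ⟨f, f'⟩ h
      simp only [Finset.mem_filter, Finset.mem_univ, true_and, Finset.mem_product] at h ⊢
      refine ⟨fun x => (f x, f' x), ⟨?_, ?_, ?_⟩, rfl⟩
      · ext1 x; exact Prod.ext (congrFun h.1.1 x) (congrFun h.2.1 x)
      · intro i; have h1 := cont_fst (fun x => (f x, f' x)) i
        have h2 := h.1.2 i
        simp only at h1
        rw [← h1]
        change (cont f i) + _ = _
        omega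
      · intro i; have h1 := cont_snd (fun x => (f x, f' x)) i
        have h2 := h.2.2 i
        rw [← h1]
        change (cont f' i) + _ = _
        omega
  · rintro A ⟨h1, -⟩
    have h2 : ∑ i, (∑ j, A (i, j) + (σ i : ℕ)) = ∑ i, l i := Finset.sum_congr rfl (fun i _ => h1 i)
    rw [Finset.sum_add_distrib, Equiv.sum_comp σ (fun i => (i : ℕ)), hl] at h2
    rw [Fintype.sum_prod_type]
    omega

lemma chi_norm {m n : ℕ} (l : Fin n → ℕ) (hl : ∑ i, l i = m + ∑ i : Fin n, (i : ℕ))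
    (hm : StrictMono l) :
    ∑ g : Equiv.Perm (Fin m), chi l g * chi l g⁻¹ = (m.factorial : ℂ) := by
  have h : ∀ g : Equiv.Perm (Fin m), chi l g * chi l g⁻¹ = ∑ σ : Equiv.Perm (Fin n), ∑ τ : Equiv.Perm (Fin n),
      (((Equiv.Perm.sign σ : ℤ) : ℂ) * ((Equiv.Perm.sign τ : ℤ) : ℂ)) *
      (P (fun i => (l i : ℤ) - (σ i : ℕ)) g * P (fun i => (l i : ℤ) - (τ i : ℕ)) g) := by
    intro g
    unfold chi
    simp only [P_inv]
    rw [Finset.sum_mul_sum]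
    refine Finset.sum_congr rfl (fun σ _ => Finset.sum_congr rfl (fun τ _ => ?_))
    ring
  simp only [h]
  rw [Finset.sum_comm]
  have h2 : ∀ σ : Equiv.Perm (Fin n), ∑ g : Equiv.Perm (Fin m), ∑ τ : Equiv.Perm (Fin n),
      (((Equiv.Perm.sign σ : ℤ) : ℂ) * ((Equiv.Perm.sign τ : ℤ) : ℂ)) *
      (P (fun i => (l i : ℤ) - (σ i : ℕ)) g * P (fun i => (l i : ℤ) - (τ i : ℕ)) g) =
      ∑ τ : Equiv.Perm (Fin n), (m.factorial : ℂ) *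
      ((((Equiv.Perm.sign σ : ℤ) : ℂ) * ((Equiv.Perm.sign τ : ℤ) : ℂ)) * (NN l σ τ : ℂ)) := by
    intro σ
    rw [Finset.sum_comm]
    apply Finset.sum_congr rfl
    intro τ _
    rw [← Finset.mul_sum, P_inner l hl]
    ring
  simp only [h2]
  have h3 := congrArg (fun z : ℤ => (z : ℂ)) (sum_NN l hm)
  push_cast at h3
  simp only [← Finset.mul_sum, h3, mul_one]


lemma P_one {m n : ℕ} (l : Fin n → ℕ) (hl : ∑ i, l i = m + ∑ i : Fin n, (i : ℕ))
    (σ : Equiv.Perm (Fin n)) :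
    P (m := m) (fun i => (l i : ℤ) - (σ i : ℕ)) 1 * ∏ i, ((l i).factorial : ℂ) =
      (m.factorial : ℂ) * ∏ i, ((l i).descFactorial (σ i) : ℂ) := by
  by_cases h : ∀ i, (σ i : ℕ) ≤ l i
  · have hs : ∑ i, (l i - (σ i : ℕ)) = m := by
      have h2 : ∑ i, ((l i - (σ i : ℕ)) + (σ i : ℕ)) = ∑ i, l i :=
        Finset.sum_congr rfl (fun i _ => Nat.sub_add_cancel (h i))
      rw [Finset.sum_add_distrib, Equiv.sum_comp σ (fun i => (i : ℕ)), hl] at h2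
      omega
    have hc := card_cont (fun i => l i - (σ i : ℕ)) hs
    have hP : P (m := m) (fun i => (l i : ℤ) - (σ i : ℕ)) 1 =
        ((Finset.univ.filter (fun F : Fin m → Fin n => cont F = (fun i => l i - (σ i : ℕ)))).card : ℂ) := by
      unfold P
      congr 3
      ext F
      rw [funext_iff (f := cont F)]
      simp only [Equiv.Perm.coe_one, Function.comp_id, true_and]
      constructor
      · intro hh i; have := hh i; have := h i; omega
      · intro hh i; have := hh i; have := h i; omega
    rw [hP, ← hc]
    push_cast
    rw [mul_assoc, ← Finset.prod_mul_distrib]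
    congr 1
    apply Finset.prod_congr rfl
    intro i _
    rw [← Nat.cast_mul, Nat.factorial_mul_descFactorial (h i)]
  · push Not at h
    obtain ⟨i, hi⟩ := h
    have hz : ∏ i, ((l i).descFactorial (σ i) : ℂ) = 0 := by
      apply Finset.prod_eq_zero (Finset.mem_univ i)
      rw [Nat.descFactorial_eq_zero_iff_lt.2 hi]; simp
    rw [hz]
    have hP : P (m := m) (fun i => (l i : ℤ) - (σ i : ℕ)) 1 = 0 := by
      unfold P
      rw [Nat.cast_eq_zero, Finset.card_eq_zero, Finset.filter_eq_empty_iff]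
      rintro F _ ⟨-, hF⟩
      have h2 := hF i
      simp only at h2
      omega
    rw [hP]; simp

/-- product of the hook lengths -/
noncomputable def hookProd {n : ℕ} (l : Fin n → ℕ) : ℕ :=
  ∏ i, ∏ t ∈ (Finset.range (l i)).filter (fun t => t ∉ Set.range l), (l i - t)

lemma fact_hook {n : ℕ} (l : Fin n → ℕ) (hm : StrictMono l) :
    ∏ i, (l i).factorial = hookProd l * ∏ i, ∏ j ∈ Finset.Iio i, (l i - l j) := by
  unfold hookProd
  rw [← Finset.prod_mul_distrib]
  apply Finset.prod_congr rfl
  intro i _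
  rw [← Nat.descFactorial_self, Nat.descFactorial_eq_prod_range,
    ← Finset.prod_filter_mul_prod_filter_not (Finset.range (l i)) (fun t => t ∉ Set.range l)]
  congr 1
  have : (Finset.range (l i)).filter (fun t => ¬ (t ∉ Set.range l)) = (Finset.Iio i).image l := by
    ext t
    simp only [not_not, Finset.mem_filter, Finset.mem_range, Set.mem_range, Finset.mem_image,
      Finset.mem_Iio]
    constructor
    · rintro ⟨h, j, rfl⟩; exact ⟨j, hm.lt_iff_lt.1 h, rfl⟩
    · rintro ⟨j, hj, rfl⟩; exact ⟨hm hj, j, rfl⟩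
  rw [this, Finset.prod_image (fun a _ b _ h => hm.injective h)]

lemma chi_one {m n : ℕ} (l : Fin n → ℕ) (hl : ∑ i, l i = m + ∑ i : Fin n, (i : ℕ))
    (hm : StrictMono l) :
    (hookProd l : ℂ) * chi (m := m) l 1 = (m.factorial : ℂ) := by
  have h1 : chi (m := m) l 1 * ∏ i, ((l i).factorial : ℂ) =
      (m.factorial : ℂ) * (Matrix.vandermonde (fun i => (l i : ℂ))).det := by
    rw [Matrix.det_eval_matrixOfPolynomials_eq_det_vandermonde (fun i => (l i : ℂ))
      (fun i => descPochhammer ℂ i) (fun i => descPochhammer_natDegree ℂ i)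
      (fun i => monic_descPochhammer ℂ i), ← Matrix.det_transpose, Matrix.det_apply']
    unfold chi
    rw [Finset.sum_mul, Finset.mul_sum]
    apply Finset.sum_congr rfl
    intro σ _
    rw [mul_assoc, P_one l hl]
    simp only [Matrix.transpose_apply, Matrix.of_apply, descPochhammer_eval_eq_descFactorial]
    ring
  have h2 : (Matrix.vandermonde (fun i => (l i : ℂ))).det =
      ((∏ i, ∏ j ∈ Finset.Iio i, (l i - l j) : ℕ) : ℂ) := by
    rw [Matrix.det_vandermonde]
    push_cast
    rw [Finset.prod_comm' (t' := Finset.univ) (s' := fun i => Finset.Iio i)]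
    · apply Finset.prod_congr rfl
      intro i _
      apply Finset.prod_congr rfl
      intro j hj
      rw [Nat.cast_sub (hm (Finset.mem_Iio.1 hj)).le]
    · intro x z; simp
  have h3 : ((∏ i, ∏ j ∈ Finset.Iio i, (l i - l j) : ℕ) : ℂ) ≠ 0 := by
    rw [Nat.cast_ne_zero, Finset.prod_ne_zero_iff]
    intro i _
    rw [Finset.prod_ne_zero_iff]
    intro j hj
    have := hm (Finset.mem_Iio.1 hj)
    omega
  rw [h2, ← Nat.cast_prod, fact_hook l hm] at h1
  apply mul_right_cancel₀ h3
  rw [← h1]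
  push_cast
  ring

lemma hookProd_odd_iff {n : ℕ} (l : Fin n → ℕ) :
    ¬ 2 ∣ hookProd l ↔ ∀ i, ∀ t, t < l i → t ∉ Set.range l → ¬ 2 ∣ l i - t := by
  unfold hookProd
  rw [Nat.prime_two.prime.dvd_finsetProd_iff]
  simp only [Nat.prime_two.prime.dvd_finsetProd_iff]
  push Not
  simp only [Finset.mem_univ, true_implies, Finset.mem_filter, Finset.mem_range, and_imp]


lemma P_perm {m n : ℕ} (α : Fin n → ℤ) (s : Equiv.Perm (Fin n)) :
    P (m := m) (α ∘ s) = P α := by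
  ext g
  unfold P
  congr 1
  apply Finset.card_bij (fun F _ => s ∘ F)
  · intro F hF
    simp only [Finset.mem_filter, Finset.mem_univ, true_and] at hF ⊢
    refine ⟨by rw [Function.comp_assoc, hF.1], fun i => ?_⟩
    have h := hF.2 (s.symm i)
    simp only [Function.comp_apply, Equiv.apply_symm_apply] at h
    rw [← h]
    unfold cont
    congr 1
    refine @Fintype.card_congr _ _ (_) (_) (Equiv.subtypeEquivRight ?_)
    intro x
    simp [Equiv.eq_symm_apply]
  · intro F _ F' _ h
    ext1 x
    exact s.injective (congrFun h x)
  · intro F hF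
    simp only [Finset.mem_filter, Finset.mem_univ, true_and] at hF ⊢
    refine ⟨s.symm ∘ F, ⟨by rw [Function.comp_assoc, hF.1], fun i => ?_⟩, by ext1 x; simp⟩
    have h := hF.2 (s i)
    simp only [Function.comp_apply]
    rw [← h]
    unfold cont
    congr 1
    refine @Fintype.card_congr _ _ (_) (_) (Equiv.subtypeEquivRight ?_)
    intro x
    simp [Equiv.symm_apply_eq]

lemma P_good {m n : ℕ} (α : Fin n → ℤ) (h : ¬ ((∀ i, 0 ≤ α i) ∧ ∑ i, α i = m)) :
    P (m := m) α = 0 := by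
  ext g
  unfold P
  rw [Pi.zero_apply, Nat.cast_eq_zero, Finset.card_eq_zero, Finset.filter_eq_empty_iff]
  rintro F _ ⟨-, hF⟩
  apply h
  refine ⟨fun i => by rw [← hF i]; positivity, ?_⟩
  rw [← Finset.sum_congr rfl (fun i _ => hF i), ← Nat.cast_sum, sum_cont]

lemma sq_lt {n : ℕ} (β : Fin n → ℤ) (hβ : Monotone β) (σ : Equiv.Perm (Fin n)) (hσ : σ ≠ 1) :
    ∑ i, β i ^ 2 < ∑ i, (β i + ((i : ℕ) : ℤ) - ((σ i : ℕ) : ℤ)) ^ 2 := by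
  have hmono : Monotone (fun i : Fin n => ((i : ℕ) : ℤ)) := by
    intro i j hij; simpa using hij
  have h1 := (hβ.monovary hmono).sum_mul_comp_perm_le_sum_mul (σ := σ)
  have h2 : 0 < ∑ i : Fin n, (((i : ℕ) : ℤ) - ((σ i : ℕ) : ℤ)) ^ 2 := by
    obtain ⟨i, hi⟩ : ∃ i, σ i ≠ i := by
      by_contra hc
      push Not at hc
      exact hσ (Equiv.ext hc)
    apply Finset.sum_pos' (fun i _ => sq_nonneg _) ⟨i, Finset.mem_univ i, ?_⟩
    have : ((i : ℕ) : ℤ) - ((σ i : ℕ) : ℤ) ≠ 0 := by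
      intro h; apply hi; apply Fin.ext; omega
    positivity
  have h3 : ∑ i, (β i + ((i : ℕ) : ℤ) - ((σ i : ℕ) : ℤ)) ^ 2 = ∑ i, β i ^ 2 +
      2 * (∑ i, β i * ((i : ℕ) : ℤ) - ∑ i, β i * ((σ i : ℕ) : ℤ)) +
      ∑ i : Fin n, (((i : ℕ) : ℤ) - ((σ i : ℕ) : ℤ)) ^ 2 := by
    rw [← Finset.sum_sub_distrib, Finset.mul_sum, ← Finset.sum_add_distrib,
      ← Finset.sum_add_distrib]
    apply Finset.sum_congr rfl
    intros; ring
  rw [h3]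
  linarith

lemma chi_span {m n : ℕ} (φ : (Equiv.Perm (Fin m) → ℂ) →ₗ[ℂ] ℂ)
    (h : ∀ l : Fin n → ℕ, StrictMono l → ∑ i, l i = m + ∑ i : Fin n, (i : ℕ) → φ (chi l) = 0)
    (α : Fin n → ℤ) : φ (P α) = 0 := by
  suffices H : ∀ N : ℕ, ∀ α : Fin n → ℤ, ((m : ℤ) ^ 2 - ∑ i, α i ^ 2).toNat = N → φ (P α) = 0 from
    H _ α rfl
  intro N
  induction N using Nat.strong_induction_on with
  | _ N ih =>
  intro α hN
  by_cases hg : ((∀ i, 0 ≤ α i) ∧ ∑ i, α i = m)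
  swap
  · rw [P_good α hg, map_zero]
  set s := Tuple.sort α with hs
  have hmono : Monotone (α ∘ s) := Tuple.monotone_sort α
  rw [← P_perm α s]
  set β := α ∘ s with hβ
  have hβ0 : ∀ i, 0 ≤ β i := fun i => hg.1 _
  have hβs : ∑ i, β i = m := by rw [← hg.2]; exact Equiv.sum_comp s α
  have hβN : ((m : ℤ) ^ 2 - ∑ i, β i ^ 2).toNat = N := by
    rw [← hN]
    congr 2
    exact Equiv.sum_comp s (fun i => α i ^ 2)
  let l : Fin n → ℕ := fun i => (β i).toNat + i
  have hli : ∀ i, (l i : ℤ) = β i + (i : ℕ) := by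
    intro i; simp only [l]; push_cast; rw [Int.toNat_of_nonneg (hβ0 i)]
  have hl : StrictMono l := by
    intro i j hij
    have h1 := hmono hij.le
    have h2 : (i : ℕ) < j := hij
    have := hli i
    have := hli j
    omega
  have hls : ∑ i, l i = m + ∑ i : Fin n, (i : ℕ) := by
    zify
    simp only [hli, Finset.sum_add_distrib, hβs]
  have hc := h l hl hls
  have hexp : chi (m := m) l = ∑ σ : Equiv.Perm (Fin n), ((Equiv.Perm.sign σ : ℤ) : ℂ) •
      P (fun i => (l i : ℤ) - (σ i : ℕ)) := by
    ext g
    simp [chi, Finset.sum_apply]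
  rw [hexp, map_sum, Finset.sum_eq_single 1] at hc
  · simp only [Equiv.Perm.sign_one, Units.val_one, Int.cast_one, one_smul, hli,
      Equiv.Perm.coe_one, id, add_sub_cancel_right] at hc
    exact hc
  · intro σ _ hσ
    rw [map_smul]
    have hlt := sq_lt β hmono σ hσ
    simp only [hli]
    by_cases hg' : ((∀ i, 0 ≤ β i + ((i : ℕ) : ℤ) - ((σ i : ℕ) : ℤ)) ∧
      ∑ i, (β i + ((i : ℕ) : ℤ) - ((σ i : ℕ) : ℤ)) = m)
    · have hle : ∑ i, (β i + ((i : ℕ) : ℤ) - ((σ i : ℕ) : ℤ)) ^ 2 ≤ (m : ℤ) ^ 2 := by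
        rw [← hg'.2]
        exact Finset.sum_sq_le_sq_sum_of_nonneg (fun i _ => hg'.1 i)
      rw [ih _ _ _ rfl, smul_zero]
      omega
    · rw [P_good _ hg', map_zero, smul_zero]
  · simp

lemma P_ones {m : ℕ} (g : Equiv.Perm (Fin m)) :
    P (n := m) (fun _ => 1) g = if g = 1 then (m.factorial : ℂ) else 0 := by
  split_ifs with h
  · subst h
    have := card_cont (m := m) (κ := Fin m) (fun _ => 1) (by simp)
    simp only [Nat.factorial_one, Finset.prod_const_one, mul_one] at this
    rw [← this]
    unfold P
    congr 3
    ext F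
    rw [funext_iff (f := cont F)]
    simp
  · unfold P
    rw [Nat.cast_eq_zero, Finset.card_eq_zero, Finset.filter_eq_empty_iff]
    rintro F _ ⟨hF1, hF⟩
    apply h
    have hinj : Function.Injective F := by
      intro x y hxy
      have h1 : (cont F (F y) : ℤ) = 1 := hF (F y)
      have h1 : cont F (F y) = 1 := by exact_mod_cast h1
      unfold cont at h1
      obtain ⟨z, hz⟩ := (@Fintype.card_eq_one_iff _ (_)).1 h1
      have hx := hz ⟨x, hxy⟩
      have hy := hz ⟨y, rfl⟩
      exact congrArg Subtype.val (hx.trans hy.symm)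
    ext1 x
    exact hinj (congrFun hF1 x)


/-- The set of irreducible characters. -/
def Irr (G : Type) [Group G] : Set (G → ℂ) :=
  {f | ∃ V : FDRep ℂ G, CategoryTheory.Simple V ∧ V.character = f}

lemma simple_of_irred {G : Type} [Group G] [Fintype G] {V : Type} [AddCommGroup V] [Module ℂ V]
    [FiniteDimensional ℂ V] (ρ : Representation ℂ G V) (h : ρ.IsIrreducible) :
    CategoryTheory.Simple (FDRep.of ρ) := by
  rw [FDRep.simple_iff_char_is_norm_one]
  have hne : (Nat.card G : ℂ) ≠ 0 := by
    rw [Nat.cast_ne_zero]; exact Nat.card_pos.ne'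
  have := invertibleOfNonzero hne
  have key := Representation.char_orthonormal ρ ρ
  rw [if_pos ⟨Representation.Equiv.refl ρ⟩] at key
  have h2 : ∑ g : G, ρ.character g * ρ.character g⁻¹ = Nat.card G := by
    field_simp at key
    simpa using key
  exact h2

lemma char_mem_closure {G : Type} [Group G] [Fintype G] (N : ℕ) :
    ∀ (V : Type) [AddCommGroup V] [Module ℂ V]
    [FiniteDimensional ℂ V] (ρ : Representation ℂ G V), Module.finrank ℂ V = N →
    ρ.character ∈ AddSubgroup.closure (Irr G) := by
  induction N using Nat.strong_induction_on with
  | _ N ih =>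
  intro V _ _ _ ρ hN
  by_cases hirr : ρ.IsIrreducible
  · apply AddSubgroup.subset_closure
    exact ⟨FDRep.of ρ, simple_of_irred ρ hirr, rfl⟩
  by_cases hV : Subsingleton V
  · have : ρ.character = 0 := by
      ext g
      have : ρ g = 0 := Subsingleton.elim _ _
      simp [Representation.character, this]
    rw [this]
    exact zero_mem _
  have hne : NeZero (Nat.card G : ℂ) := ⟨by
    rw [Nat.cast_ne_zero]; exact Nat.card_pos.ne'⟩
  have hss : ρ.IsSemisimpleRepresentation := by
    rw [Representation.isSemisimpleRepresentation_iff_isSemisimpleModule_asModule]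
    infer_instance
  have hnt : Nontrivial (Subrepresentation ρ) := by
    refine ⟨⊥, ⊤, fun h => hV ?_⟩
    have h2 : (⊥ : Submodule ℂ V) = ⊤ := congrArg Subrepresentation.toSubmodule h
    exact (Submodule.subsingleton_iff ℂ).1 (subsingleton_of_bot_eq_top h2)
  obtain ⟨W, hW0, hW1⟩ : ∃ W : Subrepresentation ρ, W ≠ ⊥ ∧ W ≠ ⊤ := by
    by_contra hc
    push Not at hc
    exact hirr ⟨fun a => or_iff_not_imp_left.2 (hc a)⟩
  obtain ⟨W', hW'⟩ := exists_isCompl W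
  have hcompl : IsCompl W.toSubmodule W'.toSubmodule := by
    refine ⟨disjoint_iff.2 ?_, codisjoint_iff.2 ?_⟩
    · exact congrArg Subrepresentation.toSubmodule (disjoint_iff.1 hW'.1)
    · exact congrArg Subrepresentation.toSubmodule (codisjoint_iff.1 hW'.2)
  have hfin := Submodule.finrank_add_eq_of_isCompl hcompl
  have p1 : 0 < Module.finrank ℂ W.toSubmodule := by
    rw [Nat.pos_iff_ne_zero, Ne, Submodule.finrank_eq_zero]
    exact fun h => hW0 (Subrepresentation.toSubmodule_injective h)
  have p2 : Module.finrank ℂ W.toSubmodule < Module.finrank ℂ V := by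
    apply Submodule.finrank_lt
    exact fun h => hW1 (Subrepresentation.toSubmodule_injective h)
  have hadd : ρ.character = W.toRepresentation.character + W'.toRepresentation.character := by
    ext g
    have hinter : DirectSum.IsInternal
        (fun b : Bool => cond b W.toSubmodule W'.toSubmodule) := by
      rw [DirectSum.isInternal_submodule_iff_isCompl _ (i := true) (j := false) (by simp)
        (by ext b; cases b <;> simp)]
      exact hcompl
    have := LinearMap.trace_eq_sum_trace_restrict (f := ρ g) hinter (fun b => by
      cases b
      · exact W'.apply_mem_toSubmodule g
      · exact W.apply_mem_toSubmodule g)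
    rw [Fintype.sum_bool] at this
    exact this
  rw [hadd]
  exact add_mem (ih _ (by omega) _ W.toRepresentation rfl) (ih _ (by omega) _ W'.toRepresentation rfl)

/-- The inner product. -/
noncomputable def ip {G : Type} [Group G] [Fintype G] (f f' : G → ℂ) : ℂ :=
  ∑ g, f g * f' g⁻¹

lemma ip_irr {G : Type} [Group G] [Fintype G] {f f' : G → ℂ} (hf : f ∈ Irr G) (hf' : f' ∈ Irr G) :
    ip f f' = if f = f' then (Nat.card G : ℂ) else 0 := by
  obtain ⟨V, hV, rfl⟩ := hf
  obtain ⟨W, hW, rfl⟩ := hf'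
  have hne : (Nat.card G : ℂ) ≠ 0 := by
    rw [Nat.cast_ne_zero]; exact Nat.card_pos.ne'
  have := invertibleOfNonzero hne
  have key := FDRep.char_orthonormal V W
  unfold ip
  by_cases hi : Nonempty (V ≅ W)
  · rw [if_pos hi] at key
    rw [if_pos (FDRep.char_iso hi.some)]
    field_simp at key
    exact_mod_cast key
  · rw [if_neg hi] at key
    have h0 : ∑ g : G, V.character g * W.character g⁻¹ = 0 := by
      rcases mul_eq_zero.1 (by exact_mod_cast key) with h | h
      · exact absurd h (inv_ne_zero hne)
      · exact h
    rw [if_neg, h0]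
    intro he
    have h1 := (FDRep.simple_iff_char_is_norm_one V).1 hV
    rw [← he] at h0
    rw [h0] at h1
    exact hne h1.symm

lemma ip_sum_left {G ι : Type} [Group G] [Fintype G] (s : Finset ι) (a : ι → ℂ) (F : ι → G → ℂ)
    (f : G → ℂ) : ip (∑ i ∈ s, a i • F i) f = ∑ i ∈ s, a i * ip (F i) f := by
  unfold ip
  simp only [Finset.sum_apply, Pi.smul_apply, smul_eq_mul, Finset.sum_mul, Finset.mul_sum]
  rw [Finset.sum_comm]
  simp only [mul_assoc]

lemma ip_sum_right {G ι : Type} [Group G] [Fintype G] (s : Finset ι) (a : ι → ℂ) (F : ι → G → ℂ)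
    (f : G → ℂ) : ip f (∑ i ∈ s, a i • F i) = ∑ i ∈ s, a i * ip f (F i) := by
  unfold ip
  simp only [Finset.sum_apply, Pi.smul_apply, smul_eq_mul, Finset.mul_sum]
  rw [Finset.sum_comm]
  simp only [mul_left_comm]

lemma irr_of_norm {G : Type} [Group G] [Fintype G] {f : G → ℂ}
    (hf : f ∈ AddSubgroup.closure (Irr G)) (hn : ip f f = Nat.card G) :
    f ∈ Irr G ∨ -f ∈ Irr G := by
  have hne : (Nat.card G : ℂ) ≠ 0 := by
    rw [Nat.cast_ne_zero]; exact Nat.card_pos.ne'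
  have hf' : f ∈ Submodule.span ℤ (Irr G) := by
    have := Submodule.span_int_eq_addSubgroupClosure (Irr G)
    rw [← Submodule.mem_toAddSubgroup, this]; exact hf
  obtain ⟨c, hc, hsum⟩ := Submodule.mem_span_set.1 hf'
  have hsum' : f = ∑ i ∈ c.support, (c i : ℂ) • i := by
    rw [← hsum, Finsupp.sum]
    apply Finset.sum_congr rfl
    intro i _
    rw [Int.cast_smul_eq_zsmul]
  have h1 : ip f f = (Nat.card G : ℂ) * ((∑ i ∈ c.support, (c i)^2 : ℤ) : ℂ) := by
    conv_lhs => rw [hsum', ip_sum_left]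
    push_cast
    rw [Finset.mul_sum]
    apply Finset.sum_congr rfl
    intro i hi
    rw [ip_sum_right, Finset.sum_eq_single_of_mem i hi]
    · rw [ip_irr (hc hi) (hc hi), if_pos rfl]; ring
    · intro j hj hji
      rw [ip_irr (hc hi) (hc hj), if_neg (Ne.symm hji), mul_zero]
  rw [hn] at h1
  have h2 : (∑ i ∈ c.support, (c i)^2 : ℤ) = 1 := by
    have : ((∑ i ∈ c.support, (c i)^2 : ℤ) : ℂ) = 1 := by
      apply mul_left_cancel₀ hne
      rw [← h1, mul_one]
    exact_mod_cast this
  have hpos : ∀ i ∈ c.support, 1 ≤ (c i)^2 := by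
    intro i hi
    have : c i ≠ 0 := Finsupp.mem_support_iff.1 hi
    have := sq_pos_of_ne_zero this
    omega
  have hcard : c.support.card = 1 := by
    have hle : (c.support.card : ℤ) ≤ 1 := by
      rw [← h2]
      calc (c.support.card : ℤ) = ∑ i ∈ c.support, (1 : ℤ) := by simp
        _ ≤ _ := Finset.sum_le_sum hpos
    have h0 : c.support.card ≠ 0 := by
      intro h0
      rw [Finset.card_eq_zero] at h0
      rw [h0] at h2
      simp at h2
    omega
  obtain ⟨i, hi⟩ := Finset.card_eq_one.1 hcard
  have hmem : i ∈ Irr G := hc (by rw [hi]; simp)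
  rw [hi, Finset.sum_singleton] at h2
  rw [hi, Finset.sum_singleton] at hsum'
  rcases mul_self_eq_one_iff.1 ((sq _).symm.trans h2) with h | h
  · left
    rw [hsum', h]
    simpa using hmem
  · right
    rw [hsum', h]
    simpa using hmem


lemma cont_comp {m : ℕ} {κ : Type*} (F : Fin m → κ) (g : Equiv.Perm (Fin m)) (i : κ) :
    cont (F ∘ g) i = cont F i := by
  unfold cont
  refine @Fintype.card_congr _ _ (_) (_) (g.subtypeEquiv ?_)
  intro x
  rfl

/-- words of given content -/
abbrev TT (m : ℕ) {n : ℕ} (α : Fin n → ℤ) : Type :=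
  {F : Fin m → Fin n // ∀ i, (cont F i : ℤ) = α i}

/-- the action map on words -/
def actT {m n : ℕ} (α : Fin n → ℤ) (g : Equiv.Perm (Fin m)) (F : TT m α) : TT m α :=
  ⟨F.1 ∘ g, fun i => by rw [cont_comp]; exact F.2 i⟩

/-- the permutation representation on functions on words -/
noncomputable def repT {m n : ℕ} (α : Fin n → ℤ) :
    Representation ℂ (Equiv.Perm (Fin m)) (TT m α → ℂ) where
  toFun g := LinearMap.funLeft ℂ ℂ (actT α g)
  map_one' := by
    ext; rfl
  map_mul' g h := by
    ext; rfl

lemma repT_char {m n : ℕ} (α : Fin n → ℤ) : (repT (m := m) α).character = P α := by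
  ext g
  unfold Representation.character
  rw [LinearMap.trace_eq_matrix_trace ℂ (Pi.basisFun ℂ (TT m α))]
  unfold Matrix.trace P
  have h1 : ∀ x : TT m α, Matrix.diag ((LinearMap.toMatrix (Pi.basisFun ℂ (TT m α))
      (Pi.basisFun ℂ (TT m α))) ((repT (m := m) α) g)) x = if x.1 ∘ g = x.1 then 1 else 0 := by
    intro x
    rw [Matrix.diag_apply, LinearMap.toMatrix_apply]
    simp only [Pi.basisFun_apply, Pi.basisFun_repr]
    change (Pi.single x 1 : TT m α → ℂ) (actT α g x) = _
    rw [Pi.single_apply]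
    congr 1
    rw [Subtype.ext_iff]
    rfl
  rw [Finset.sum_congr rfl (fun x _ => h1 x), ← Finset.sum_filter, Finset.sum_const, nsmul_eq_mul,
    mul_one]
  congr 1
  apply Finset.card_bij (fun x _ => x.1)
  · intro x hx
    simp only [Finset.mem_filter, Finset.mem_univ, true_and] at hx ⊢
    exact ⟨hx, x.2⟩
  · intro x _ y _ h
    exact Subtype.ext h
  · intro F hF
    simp only [Finset.mem_filter, Finset.mem_univ, true_and] at hF
    exact ⟨⟨F, hF.2⟩, by simpa using hF.1, rfl⟩

lemma chi_mem {m n : ℕ} (l : Fin n → ℕ) :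
    chi (m := m) l ∈ AddSubgroup.closure (Irr (Equiv.Perm (Fin m))) := by
  have : chi (m := m) l = ∑ σ : Equiv.Perm (Fin n), (Equiv.Perm.sign σ : ℤ) •
      P (m := m) (fun i => (l i : ℤ) - (σ i : ℕ)) := by
    ext g
    simp [chi, Finset.sum_apply]
  rw [this]
  refine sum_mem fun σ _ => zsmul_mem ?_ _
  rw [← repT_char]
  exact char_mem_closure _ _ _ rfl

/-- admissible beta-sets -/
def Valid (m : ℕ) (l : Fin m → ℕ) : Prop :=
  StrictMono l ∧ ∑ i, l i = m + ∑ i : Fin m, (i : ℕ)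

lemma chi_irr {m : ℕ} (l : Fin m → ℕ) (hl : Valid m l) :
    chi (m := m) l ∈ Irr (Equiv.Perm (Fin m)) ∨ -chi (m := m) l ∈ Irr (Equiv.Perm (Fin m)) := by
  apply irr_of_norm (chi_mem l)
  unfold ip
  rw [chi_norm l hl.2 hl.1, Nat.card_perm, Nat.card_fin]

lemma irr_eq_chi {m : ℕ} (f : Equiv.Perm (Fin m) → ℂ) (hf : f ∈ Irr (Equiv.Perm (Fin m))) :
    ∃ l, Valid m l ∧ (f = chi l ∨ f = - chi l) := by
  by_contra hc
  push Not at hc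
  let φ : (Equiv.Perm (Fin m) → ℂ) →ₗ[ℂ] ℂ :=
    { toFun := fun x => ip x f
      map_add' := by intro x y; simp [ip, add_mul, Finset.sum_add_distrib]
      map_smul' := by intro c x; simp [ip, Finset.mul_sum, mul_assoc] }
  have h := chi_span (m := m) φ (fun l h1 h2 => by
    have hv : Valid m l := ⟨h1, h2⟩
    have hcl := hc l hv
    change ip (chi l) f = 0
    rcases chi_irr l hv with h | h
    · rw [ip_irr h hf, if_neg (Ne.symm hcl.1)]
    · have h3 := ip_irr h hf
      rw [if_neg (Ne.symm hcl.2)] at h3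
      have : ip (-chi l) f = - ip (chi l) f := by simp [ip]
      rw [this, neg_eq_zero] at h3
      exact h3) (fun _ => 1)
  change ip _ f = 0 at h
  unfold ip at h
  simp only [P_ones] at h
  simp only [ite_mul, zero_mul, Finset.sum_ite_eq', Finset.mem_univ, if_true, inv_one] at h
  rcases mul_eq_zero.1 h with h | h
  · exact Nat.factorial_ne_zero m (by exact_mod_cast h)
  · obtain ⟨V, hV, rfl⟩ := hf
    have h1 := (FDRep.simple_iff_char_is_norm_one V).1 hV
    rw [FDRep.char_one, Nat.cast_eq_zero] at h
    have hs : Subsingleton V := Module.finrank_zero_iff.1 h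
    have h0 : ∀ g, V.character g = 0 := by
      intro g
      have : V.ρ g = 0 := by ext x; exact Subsingleton.elim _ _
      unfold FDRep.character
      rw [this, map_zero]
    simp only [h0, mul_zero, Finset.sum_const_zero, Nat.card_perm, Nat.card_fin] at h1
    exact Nat.factorial_ne_zero m (by exact_mod_cast h1.symm)

lemma dim_hook {m : ℕ} (l : Fin m → ℕ) (hl : Valid m l) (V : FDRep ℂ (Equiv.Perm (Fin m)))
    (h : V.character = chi l ∨ V.character = - chi l) :
    hookProd l * Module.finrank ℂ V = m.factorial := by
  have h1 := chi_one (m := m) l hl.2 hl.1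
  have h2 := FDRep.char_one V
  rcases h with h | h
  · rw [← h, h2] at h1
    exact_mod_cast h1
  · have h3 : chi (m := m) l 1 = - (Module.finrank ℂ V : ℂ) := by
      rw [← h2, h]; simp
    rw [h3] at h1
    have h4 : (hookProd l : ℤ) * -(Module.finrank ℂ V : ℤ) = (m.factorial : ℤ) := by
      exact_mod_cast h1
    have h5 : (0 : ℤ) < m.factorial := by exact_mod_cast Nat.factorial_pos m
    have h6 : (0 : ℤ) ≤ (hookProd l : ℤ) * (Module.finrank ℂ V : ℤ) := by positivity
    nlinarith

lemma dz_iff {m : ℕ} (l : Fin m → ℕ) (hl : Valid m l) (V : FDRep ℂ (Equiv.Perm (Fin m)))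
    (h : V.character = chi l ∨ V.character = - chi l) :
    padicValNat 2 (Module.finrank ℂ V) = padicValNat 2 (Nat.card (Equiv.Perm (Fin m))) ↔
    ∀ i t, t < l i → t ∉ Set.range l → ¬ 2 ∣ l i - t := by
  rw [← hookProd_odd_iff, Nat.card_perm, Nat.card_fin]
  have h1 := dim_hook l hl V h
  have hne : hookProd l * Module.finrank ℂ V ≠ 0 := by rw [h1]; exact Nat.factorial_ne_zero m
  have ha := left_ne_zero_of_mul hne
  have hb := right_ne_zero_of_mul hne
  rw [← h1, padicValNat.mul ha hb]
  have : ¬ 2 ∣ hookProd l ↔ padicValNat 2 (hookProd l) = 0 := by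
    rw [padicValNat.eq_zero_iff]
    simp [ha]
  rw [this]
  omega


/-- the beta-set with `a` even and `b` odd elements, closed under subtracting two -/
def XX (a b : ℕ) : Finset ℕ :=
  (Finset.range a).image (fun x => 2 * x) ∪ (Finset.range b).image (fun x => 2 * x + 1)

lemma XX_disj (a b : ℕ) : Disjoint ((Finset.range a).image (fun x => 2 * x))
    ((Finset.range b).image (fun x => 2 * x + 1)) := by
  rw [Finset.disjoint_left]
  intro x hx hy
  simp only [Finset.mem_image, Finset.mem_range] at hx hy
  obtain ⟨y, _, rfl⟩ := hx
  obtain ⟨z, _, hz⟩ := hy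
  omega

lemma XX_card (a b : ℕ) : (XX a b).card = a + b := by
  unfold XX
  rw [Finset.card_union_of_disjoint (XX_disj a b), Finset.card_image_of_injective,
    Finset.card_image_of_injective, Finset.card_range, Finset.card_range]
  · intro x y h; simp only at h; omega
  · intro x y h; simp only at h; omega

lemma XX_sum (a b : ℕ) : ∑ x ∈ XX a b, x + a = a ^ 2 + b ^ 2 := by
  unfold XX
  rw [Finset.sum_union (XX_disj a b), Finset.sum_image, Finset.sum_image]
  · have h1 : ∀ a : ℕ, ∑ x ∈ Finset.range a, 2 * x + a = a ^ 2 := by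
      intro a
      induction a with
      | zero => simp
      | succ a ih => rw [Finset.sum_range_succ]; nlinarith
    have h2 : ∀ b : ℕ, ∑ x ∈ Finset.range b, (2 * x + 1) = b ^ 2 := by
      intro b
      induction b with
      | zero => simp
      | succ a ih => rw [Finset.sum_range_succ]; nlinarith
    rw [h2, ← h1 a]
    ring
  · intro x _ y _ h; simp only at h; omega
  · intro x _ y _ h; simp only at h; omega

lemma mem_XX (a b x : ℕ) : x ∈ XX a b ↔ (x % 2 = 0 ∧ x / 2 < a) ∨ (x % 2 = 1 ∧ x / 2 < b) := by
  unfold XX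
  simp only [Finset.mem_union, Finset.mem_image, Finset.mem_range]
  constructor
  · rintro (⟨y, hy, rfl⟩ | ⟨y, hy, rfl⟩) <;> omega
  · rintro (⟨h1, h2⟩ | ⟨h1, h2⟩)
    · exact Or.inl ⟨x / 2, h2, by omega⟩
    · exact Or.inr ⟨x / 2, h2, by omega⟩

lemma lower_eq_range (S : Finset ℕ) (h : ∀ x ∈ S, ∀ y < x, y ∈ S) :
    ∃ a, ∀ x, x ∈ S ↔ x < a := by
  refine ⟨S.card, ?_⟩
  have : S = Finset.range S.card := by
    have hsub : ∀ x ∈ S, x < S.card := by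
      intro x hx
      have : Finset.range (x + 1) ⊆ S := by
        intro y hy
        rw [Finset.mem_range] at hy
        rcases Nat.lt_succ_iff_lt_or_eq.1 hy with h1 | h1
        · exact h x hx y h1
        · rw [h1]; exact hx
      have := Finset.card_le_card this
      rw [Finset.card_range] at this
      omega
    apply Finset.eq_of_subset_of_card_le
    · intro x hx
      exact Finset.mem_range.2 (hsub x hx)
    · simp
  intro x
  conv_lhs => rw [this]
  exact Finset.mem_range

/-- The core condition. -/
def Core {m : ℕ} (l : Fin m → ℕ) : Prop :=
  ∀ i t, t < l i → t ∉ Set.range l → ¬ 2 ∣ l i - t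

lemma core_eq {m : ℕ} (l : Fin m → ℕ) (hc : Core l) :
    ∃ a b, Finset.univ.image l = XX a b := by
  have key : ∀ x ∈ Finset.univ.image l, ∀ t < x, 2 ∣ x - t → t ∈ Finset.univ.image l := by
    intro x hx t ht hd
    simp only [Finset.mem_image, Finset.mem_univ, true_and] at hx ⊢
    obtain ⟨i, rfl⟩ := hx
    by_contra hn
    exact hc i t ht (by simpa using hn) hd
  set X := Finset.univ.image l
  obtain ⟨a, ha⟩ := lower_eq_range ((X.filter (fun x => x % 2 = 0)).image (fun x => x / 2)) (by
    intro x hx y hy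
    simp only [Finset.mem_image, Finset.mem_filter] at hx ⊢
    obtain ⟨z, ⟨hz, hz2⟩, rfl⟩ := hx
    exact ⟨2 * y, ⟨key z hz (2 * y) (by omega) (by omega), by omega⟩, by omega⟩)
  obtain ⟨b, hb⟩ := lower_eq_range ((X.filter (fun x => x % 2 = 1)).image (fun x => x / 2)) (by
    intro x hx y hy
    simp only [Finset.mem_image, Finset.mem_filter] at hx ⊢
    obtain ⟨z, ⟨hz, hz2⟩, rfl⟩ := hx
    exact ⟨2 * y + 1, ⟨key z hz (2 * y + 1) (by omega) (by omega), by omega⟩, by omega⟩)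
  refine ⟨a, b, ?_⟩
  ext x
  rw [mem_XX, ← ha, ← hb]
  simp only [Finset.mem_image, Finset.mem_filter]
  constructor
  · intro hx
    rcases Nat.mod_two_eq_zero_or_one x with h | h
    · exact Or.inl ⟨h, x, ⟨hx, h⟩, rfl⟩
    · exact Or.inr ⟨h, x, ⟨hx, h⟩, rfl⟩
  · rintro (⟨h, y, ⟨hy, h2⟩, h3⟩ | ⟨h, y, ⟨hy, h2⟩, h3⟩)
    · have : y = x := by omega
      rwa [← this]
    · have : y = x := by omega
      rwa [← this]

lemma sum_fin_val (m : ℕ) : 2 * ∑ i : Fin m, (i : ℕ) + m = m ^ 2 := by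
  rw [Fin.sum_univ_eq_sum_range (fun i => i) m]
  induction m with
  | zero => simp
  | succ a ih => rw [Finset.sum_range_succ]; nlinarith

lemma core_params {m : ℕ} (l : Fin m → ℕ) (hl : Valid m l) (hc : Core l) :
    ∃ a b, Finset.univ.image l = XX a b ∧ a + b = m ∧ ((a : ℤ) - b) ^ 2 = 3 * a + b := by
  obtain ⟨a, b, hab⟩ := core_eq l hc
  have h1 : a + b = m := by
    rw [← XX_card, ← hab, Finset.card_image_of_injective _ hl.1.injective]
    simp
  refine ⟨a, b, hab, h1, ?_⟩
  have h2 := XX_sum a b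
  rw [← hab, Finset.sum_image (fun x _ y _ h => hl.1.injective h), hl.2] at h2
  have h3 := sum_fin_val m
  subst h1
  zify at h2 h3
  nlinarith

lemma core_tri {m a b : ℕ} (h : a + b = m) (h2 : ((a : ℤ) - b) ^ 2 = 3 * a + b) :
    ∃ k, m = k * (k + 1) / 2 := by
  rcases le_or_gt a b with hab | hab
  · obtain ⟨k, rfl⟩ := Nat.exists_eq_add_of_le hab
    refine ⟨k, ?_⟩
    have : k * (k + 1) = 2 * m := by
      subst h; zify; push_cast at h2; nlinarith
    omega
  · obtain ⟨k, rfl⟩ := Nat.exists_eq_add_of_lt hab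
    refine ⟨k, ?_⟩
    have : k * (k + 1) = 2 * m := by
      subst h; zify; push_cast at h2; nlinarith
    omega

lemma core_ab_unique {a b a' b' : ℕ} (h : a + b = a' + b') (h2 : ((a : ℤ) - b) ^ 2 = 3 * a + b)
    (h2' : ((a' : ℤ) - b') ^ 2 = 3 * a' + b') : a = a' ∧ b = b' := by
  have e : (a : ℤ) + b = a' + b' := by exact_mod_cast h
  have hb : (b' : ℤ) = a + b - a' := by omega
  have h3 : ((a : ℤ) - a') * (2 * (a - b + (a' - b') - 1)) = 0 := by
    rw [hb] at h2' ⊢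
    nlinarith
  rcases mul_eq_zero.1 h3 with h4 | h4 <;> omega

lemma core_unique {m : ℕ} (l l' : Fin m → ℕ) (hl : Valid m l) (hc : Core l)
    (hl' : Valid m l') (hc' : Core l') : l = l' := by
  obtain ⟨a, b, h1, h2, h3⟩ := core_params l hl hc
  obtain ⟨a', b', h1', h2', h3'⟩ := core_params l' hl' hc'
  obtain ⟨rfl, rfl⟩ := core_ab_unique (h2.trans h2'.symm) h3 h3'
  apply (hl.1.range_inj hl'.1).1
  have := congrArg (fun s : Finset ℕ => (s : Set ℕ)) (h1.trans h1'.symm)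
  simpa using this

lemma core_exists {m k : ℕ} (hk : m = k * (k + 1) / 2) : ∃ l, Valid m l ∧ Core l := by
  have hk2 : 2 * m = k * (k + 1) := by
    have := Nat.even_mul_succ_self k
    rw [even_iff_two_dvd] at this
    omega
  obtain ⟨a, b, hab, h2⟩ : ∃ a b : ℕ, a + b = m ∧ ((a : ℤ) - b) ^ 2 = 3 * a + b := by
    by_cases hpar : (m + k) % 2 = 0
    · have hle : k ≤ m := by
        rcases Nat.eq_zero_or_pos k with h | h <;> nlinarith
      obtain ⟨a, ha⟩ : ∃ a, m = k + 2 * a := ⟨(m - k) / 2, by omega⟩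
      refine ⟨a, a + k, by omega, ?_⟩
      zify at ha hk2
      push_cast
      nlinarith
    · have hle : k + 1 ≤ m := by
        rcases Nat.lt_or_ge k 2 with h | h
        · interval_cases k <;> omega
        · nlinarith
      obtain ⟨a, ha⟩ : ∃ a, m = k + 1 + 2 * a := ⟨(m - (k + 1)) / 2, by omega⟩
      refine ⟨a + k + 1, a, by omega, ?_⟩
      zify at ha hk2
      push_cast
      nlinarith
  have hcard : (XX a b).card = m := by rw [XX_card, hab]
  have hr : Set.range ((XX a b).orderEmbOfFin hcard) = XX a b := Finset.range_orderEmbOfFin _ _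
  have himg : Finset.univ.image ((XX a b).orderEmbOfFin hcard) = XX a b := by
    apply Finset.coe_injective
    simp
  refine ⟨(XX a b).orderEmbOfFin hcard, ⟨(OrderEmbedding.strictMono _), ?_⟩, ?_⟩
  · have h3 := XX_sum a b
    rw [← himg, Finset.sum_image (fun x _ y _ h => RelEmbedding.injective _ h)] at h3
    have h4 := sum_fin_val m
    subst hab
    zify at h3 h4 ⊢
    nlinarith
  · intro i t ht hn hd
    rw [hr, Finset.mem_coe, mem_XX] at hn
    have hi := Finset.orderEmbOfFin_mem (XX a b) hcard i
    rw [mem_XX] at hi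
    omega


end SymDZ

/-- For every natural number `m`, the symmetric group `S_m` has exactly one irreducible
complex character of 2-defect zero if `m` is a triangular number, and none otherwise.
Irreducible characters are counted as the character functions of simple objects of
`FDRep ℂ (S_m)`, and a character has 2-defect zero if the 2-adic valuation of its degree
equals the 2-adic valuation of the group order. -/
theorem symmetricGroup_defect_zero_count (m : ℕ) :
    Set.ncard { f : Equiv.Perm (Fin m) → ℂ |
      ∃ V : FDRep ℂ (Equiv.Perm (Fin m)), CategoryTheory.Simple V ∧ V.character = f ∧
        padicValNat 2 (Module.finrank ℂ V) =
          padicValNat 2 (Nat.card (Equiv.Perm (Fin m))) } =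
      (if IsTriangular m then 1 else 0) := by
  by_cases ht : IsTriangular m
  · rw [if_pos ht]
    obtain ⟨k, hk⟩ := ht
    obtain ⟨l, hl, hc⟩ := SymDZ.core_exists hk
    have hsub : ∀ V : FDRep ℂ (Equiv.Perm (Fin m)), CategoryTheory.Simple V →
        padicValNat 2 (Module.finrank ℂ V) = padicValNat 2 (Nat.card (Equiv.Perm (Fin m))) →
        (V.character = SymDZ.chi l ∨ V.character = - SymDZ.chi l) := by
      intro V hV hd
      obtain ⟨l', hl', h'⟩ := SymDZ.irr_eq_chi V.character ⟨V, hV, rfl⟩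
      have hc' := (SymDZ.dz_iff l' hl' V h').1 hd
      rw [SymDZ.core_unique l l' hl hc hl' hc']
      exact h'
    obtain ⟨V, hV, hVl⟩ : ∃ V : FDRep ℂ (Equiv.Perm (Fin m)), CategoryTheory.Simple V ∧
        (V.character = SymDZ.chi l ∨ V.character = - SymDZ.chi l) := by
      rcases SymDZ.chi_irr l hl with ⟨V, hV, h⟩ | ⟨V, hV, h⟩
      · exact ⟨V, hV, Or.inl h⟩
      · exact ⟨V, hV, Or.inr h⟩
    rw [Set.ncard_eq_one]
    refine ⟨V.character, ?_⟩
    ext f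
    simp only [Set.mem_ofPred_eq, Set.mem_singleton_iff]
    constructor
    · rintro ⟨W, hW, rfl, hd⟩
      have hWl := hsub W hW hd
      have e1 := SymDZ.dim_hook l hl V hVl
      have e2 := SymDZ.dim_hook l hl W hWl
      have p1 : 0 < Module.finrank ℂ V := Nat.pos_of_ne_zero fun h0 => by
        rw [h0, mul_zero] at e1
        exact Nat.factorial_ne_zero m e1.symm
      have contra : W.character = - V.character → W.character = V.character := by
        intro h
        exfalso
        have h1 := congrFun h 1
        rw [Pi.neg_apply, FDRep.char_one, FDRep.char_one] at h1
        have h2 : (Module.finrank ℂ W : ℤ) = - (Module.finrank ℂ V : ℤ) := by exact_mod_cast h1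
        omega
      rcases hVl with h1 | h1 <;> rcases hWl with h2 | h2
      · rw [h1, h2]
      · exact contra (by rw [h1, h2])
      · exact contra (by rw [h1, h2, neg_neg])
      · rw [h1, h2]
    · rintro rfl
      exact ⟨V, hV, rfl, (SymDZ.dz_iff l hl V hVl).2 hc⟩
  · rw [if_neg ht]
    refine (congrArg Set.ncard ?_).trans (Set.ncard_empty (Equiv.Perm (Fin m) → ℂ))
    rw [Set.eq_empty_iff_forall_notMem]
    rintro f ⟨V, hV, rfl, hd⟩
    obtain ⟨l, hl, h⟩ := SymDZ.irr_eq_chi V.character ⟨V, hV, rfl⟩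
    have hc := (SymDZ.dz_iff l hl V h).1 hd
    obtain ⟨a, b, -, h1, h2⟩ := SymDZ.core_params l hl hc
    exact ht (SymDZ.core_tri h1 h2)
end

section
/- For every prime ℓ and every integer n ≥ 1, the general linear group GL_n(𝔽_ℓ) has exactly ℓ − 1 irreducible complex characters of ℓ-defect zero. -/
open Matrix

namespace GLSt
set_option linter.unusedSectionVars false

section group
variable {n : ℕ} {F : Type} [Field F]

/-- Permutation matrices, as a homomorphism into the general linear group. -/
noncomputable def pm : Equiv.Perm (Fin n) →* GL (Fin n) F :=
  MonoidHom.toHomUnits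
    { toFun := fun w => Matrix.of fun i j => if i = w j then (1 : F) else 0
      map_one' := by
        ext i j; simp [Matrix.one_apply]; rfl
      map_mul' := by
        intro v w
        ext i j
        simp [Matrix.mul_apply]; rfl }

lemma pm_apply (w : Equiv.Perm (Fin n)) (i j : Fin n) :
    (pm w : GL (Fin n) F) i j = if i = w j then 1 else 0 := rfl

lemma mul_pm_apply (g : GL (Fin n) F) (w : Equiv.Perm (Fin n)) (i j : Fin n) :
    (g * pm w : GL (Fin n) F) i j = g i (w j) := by
  rw [Units.val_mul, Matrix.mul_apply]
  simp [pm_apply]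

lemma pm_mul_apply (g : GL (Fin n) F) (w : Equiv.Perm (Fin n)) (i j : Fin n) :
    (pm w * g : GL (Fin n) F) i j = g (w⁻¹ i) j := by
  rw [Units.val_mul, Matrix.mul_apply]
  rw [Finset.sum_eq_single (w⁻¹ i)]
  · simp [pm_apply]
  · intro k _ hk
    rw [pm_apply, if_neg, zero_mul]
    rintro rfl; simp at hk
  · simp

/-- Diagonal matrices. -/
noncomputable def dg : (Fin n → Fˣ) →* GL (Fin n) F :=
  MonoidHom.toHomUnits
    { toFun := fun d => Matrix.diagonal fun i => (d i : F)
      map_one' := by simp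
      map_mul' := by intro a b; simp }

lemma dg_apply (d : Fin n → Fˣ) (i j : Fin n) :
    (dg d : GL (Fin n) F) i j = if i = j then (d i : F) else 0 := by
  show Matrix.diagonal (fun i => (d i : F)) i j = _
  rw [Matrix.diagonal_apply]

lemma dg_mul_apply (g : GL (Fin n) F) (d : Fin n → Fˣ) (i j : Fin n) :
    (dg d * g : GL (Fin n) F) i j = d i * g i j := by
  rw [Units.val_mul]
  show (Matrix.diagonal (fun i => (d i : F)) * g.val) i j = _
  rw [Matrix.diagonal_mul]

lemma mul_dg_apply (g : GL (Fin n) F) (d : Fin n → Fˣ) (i j : Fin n) :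
    (g * dg d : GL (Fin n) F) i j = g i j * d j := by
  rw [Units.val_mul]
  show (g.val * Matrix.diagonal (fun i => (d i : F))) i j = _
  rw [Matrix.mul_diagonal]

/-- Elementary matrices. -/
noncomputable def xx (i j : Fin n) (h : i ≠ j) (t : F) : GL (Fin n) F :=
  ⟨Matrix.transvection i j t, Matrix.transvection i j (-t),
    by rw [Matrix.transvection_mul_transvection_same _ _ h]; simp,
    by rw [Matrix.transvection_mul_transvection_same _ _ h]; simp⟩

lemma xx_mul (i j : Fin n) (h : i ≠ j) (s t : F) :
    xx i j h s * xx i j h t = xx i j h (s + t) :=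
  Units.ext (Matrix.transvection_mul_transvection_same _ _ h s t)

lemma xx_zero (i j : Fin n) (h : i ≠ j) : xx i j h (0 : F) = 1 :=
  Units.ext (by simp [xx])

lemma xx_inv (i j : Fin n) (h : i ≠ j) (t : F) : (xx i j h t)⁻¹ = xx i j h (-t) := by
  rw [inv_eq_iff_mul_eq_one, xx_mul, add_neg_cancel, xx_zero]

lemma xx_apply (i j : Fin n) (h : i ≠ j) (t : F) (p q : Fin n) :
    (xx i j h t : GL (Fin n) F) p q = (if p = q then 1 else 0) + if i = p ∧ j = q then t else 0 := by
  show Matrix.transvection i j t p q = _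
  rw [Matrix.transvection, Matrix.add_apply, Matrix.one_apply, Matrix.single_apply]

lemma xx_mul_apply (i j : Fin n) (h : i ≠ j) (t : F) (g : GL (Fin n) F) (p q : Fin n) :
    (xx i j h t * g : GL (Fin n) F) p q = g p q + if p = i then t * g j q else 0 := by
  show (Matrix.transvection i j t * g.val) p q = _
  split_ifs with hp
  · subst hp; rw [Matrix.transvection_mul_apply_same]
  · rw [Matrix.transvection_mul_apply_of_ne _ _ _ _ hp, add_zero]

lemma mul_xx_apply (i j : Fin n) (h : i ≠ j) (t : F) (g : GL (Fin n) F) (p q : Fin n) :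
    (g * xx i j h t : GL (Fin n) F) p q = g p q + if q = j then t * g p i else 0 := by
  show (g.val * Matrix.transvection i j t) p q = _
  split_ifs with hp
  · subst hp; rw [Matrix.mul_transvection_apply_same]
  · rw [Matrix.mul_transvection_apply_of_ne _ _ _ _ hp, add_zero]

variable [Finite F]

variable (n F) in
/-- Upper triangular matrices. -/
def BB : Subgroup (GL (Fin n) F) :=
  let M : Submonoid (GL (Fin n) F) :=
    { carrier := {g | ∀ i j, j < i → g i j = 0}
      one_mem' := by
        intro i j h
        rw [Units.val_one, Matrix.one_apply_ne h.ne']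
      mul_mem' := by
        intro a b ha hb i j h
        rw [Units.val_mul, Matrix.mul_apply]
        refine Finset.sum_eq_zero fun k _ => ?_
        rcases lt_or_ge k i with hk | hk
        · rw [ha i k hk, zero_mul]
        · rw [hb k j (h.trans_le hk), mul_zero] }
  { M with
    inv_mem' := by
      intro x hx
      have h := Submonoid.pow_mem M hx (orderOf x - 1)
      have e : x⁻¹ = x ^ (orderOf x - 1) := by
        rw [inv_eq_iff_mul_eq_one, ← pow_succ', Nat.sub_add_cancel (orderOf_pos x),
          pow_orderOf_eq_one]
      rw [e]; exact h }

lemma mem_BB (g : GL (Fin n) F) : g ∈ BB n F ↔ ∀ i j, j < i → g i j = 0 := Iff.rfl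

variable (n F) in
/-- Upper unitriangular matrices. -/
def UU : Subgroup (GL (Fin n) F) :=
  let M : Submonoid (GL (Fin n) F) :=
    { carrier := {g | (∀ i j, j < i → g i j = 0) ∧ ∀ i, g i i = 1}
      one_mem' := ⟨(BB n F).one_mem, fun i => by simp⟩
      mul_mem' := by
        intro a b ha hb
        refine ⟨(BB n F).mul_mem ha.1 hb.1, fun i => ?_⟩
        rw [Units.val_mul, Matrix.mul_apply, Finset.sum_eq_single i]
        · rw [ha.2, hb.2, mul_one]
        · intro k _ hk
          rcases lt_or_gt_of_ne hk with hk | hk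
          · rw [ha.1 i k hk, zero_mul]
          · rw [hb.1 k i hk, mul_zero]
        · simp }
  { M with
    inv_mem' := by
      intro x hx
      have h := Submonoid.pow_mem M hx (orderOf x - 1)
      have e : x⁻¹ = x ^ (orderOf x - 1) := by
        rw [inv_eq_iff_mul_eq_one, ← pow_succ', Nat.sub_add_cancel (orderOf_pos x),
          pow_orderOf_eq_one]
      rw [e]; exact h }

lemma mem_UU (g : GL (Fin n) F) :
    g ∈ UU n F ↔ (∀ i j, j < i → g i j = 0) ∧ ∀ i, g i i = 1 := Iff.rfl

lemma UU_le_BB : UU n F ≤ BB n F := fun _ h => h.1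

lemma xx_mem (i j : Fin n) (h : i < j) (t : F) : xx i j h.ne t ∈ UU n F := by
  refine ⟨fun p q hpq => ?_, fun p => ?_⟩
  · rw [xx_apply, if_neg hpq.ne', if_neg, add_zero]
    rintro ⟨rfl, rfl⟩; exact absurd h hpq.not_gt
  · rw [xx_apply, if_pos rfl, if_neg, add_zero]
    rintro ⟨rfl, h'⟩; exact h.ne' h'

lemma dg_mem (d : Fin n → Fˣ) : dg d ∈ BB n F := by
  intro i j h
  rw [dg_apply, if_neg h.ne']

lemma dg_conj_mem (d : Fin n → Fˣ) (u : GL (Fin n) F) (hu : u ∈ UU n F) :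
    dg d * u * (dg d)⁻¹ ∈ UU n F := by
  rw [← map_inv]
  refine ⟨fun i j h => ?_, fun i => ?_⟩
  · rw [mul_dg_apply, dg_mul_apply, hu.1 i j h]; simp
  · rw [mul_dg_apply, dg_mul_apply, hu.2 i]; simp

/-- An upper triangular matrix is a diagonal times a unitriangular one. -/
lemma BB_decomp (b : GL (Fin n) F) (hb : b ∈ BB n F) :
    ∃ d : Fin n → Fˣ, ∃ u ∈ UU n F, b = dg d * u := by
  have hdet : b.val.det = ∏ i, b i i :=
    Matrix.det_of_isUpperTriangular (fun i j h => hb i j h)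
  have hne : ∀ i, b i i ≠ 0 := by
    intro i hi
    have h0 : b.val.det = 0 := by
      rw [hdet]; exact Finset.prod_eq_zero (Finset.mem_univ i) hi
    have := b.isUnit
    rw [Matrix.isUnit_iff_isUnit_det, h0] at this
    exact not_isUnit_zero this
  refine ⟨fun i => Units.mk0 _ (hne i), (dg fun i => Units.mk0 _ (hne i))⁻¹ * b, ?_, by group⟩
  rw [← map_inv]
  refine ⟨fun i j h => ?_, fun i => ?_⟩
  · rw [dg_mul_apply, hb i j h, mul_zero]
  · rw [dg_mul_apply]; simp [hne i]

lemma UU_mul_adj (u v : GL (Fin n) F) (hu : u ∈ UU n F) (hv : v ∈ UU n F) (i j : Fin n)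
    (h : (i : ℕ) + 1 = j) : (u * v : GL (Fin n) F) i j = u i j + v i j := by
  have hij : i < j := by rw [Fin.lt_def]; omega
  rw [Units.val_mul, Matrix.mul_apply, Finset.sum_eq_add i j hij.ne]
  · rw [hu.2, hv.2, one_mul, mul_one, add_comm]
  · intro k _ hk
    rcases lt_or_ge k i with h1 | h1
    · rw [hu.1 i k h1, zero_mul]
    · have : j < k := by
        have h2 := hk.1; have h3 := hk.2
        rw [Fin.lt_def]; rw [Fin.le_def] at h1; rw [Ne, Fin.ext_iff] at h2 h3; omega
      rw [hv.1 k j this, mul_zero]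
  · simp
  · simp

lemma swap_conj_mem (u : GL (Fin n) F) (hu : u ∈ UU n F) (i j : Fin n)
    (h : (i : ℕ) + 1 = j) (h0 : u i j = 0) :
    pm (Equiv.swap i j) * u * pm (Equiv.swap i j) ∈ UU n F := by
  refine ⟨fun p q hpq => ?_, fun p => ?_⟩
  · rw [mul_pm_apply, pm_mul_apply, Equiv.swap_inv]
    by_cases hc : Equiv.swap i j q < Equiv.swap i j p
    · exact hu.1 _ _ hc
    · have : p = j ∧ q = i := by
        rw [Equiv.swap_apply_def, Equiv.swap_apply_def] at hc
        simp only [Fin.ext_iff, Fin.lt_def] at *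
        split_ifs at hc <;> omega
      obtain ⟨rfl, rfl⟩ := this
      simpa using h0
  · rw [mul_pm_apply, pm_mul_apply, Equiv.swap_inv]
    exact hu.2 _

lemma swap_mul_self (i j : Fin n) :
    (pm (Equiv.swap i j) * pm (Equiv.swap i j) : GL (Fin n) F) = 1 := by
  rw [← map_mul, Equiv.swap_mul_self, map_one]

/-- the torus element occurring in the rank one relation -/
def hh (i j : Fin n) (t : Fˣ) : Fin n → Fˣ :=
  fun k => if k = i then -t⁻¹ else if k = j then t else 1

lemma rank_one_rel (i j : Fin n) (h : i ≠ j) (t : Fˣ) :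
    pm (Equiv.swap i j) * xx i j h (t : F) * pm (Equiv.swap i j) =
      xx i j h ((t⁻¹ : Fˣ) : F) * dg (hh i j t) * pm (Equiv.swap i j) * xx i j h ((t⁻¹ : Fˣ) : F) := by
  apply Units.ext
  ext p q
  rw [mul_pm_apply, pm_mul_apply, Equiv.swap_inv, mul_xx_apply, mul_assoc, xx_mul_apply,
    xx_mul_apply, dg_mul_apply, dg_mul_apply, dg_mul_apply, dg_mul_apply, xx_apply]
  simp only [pm_apply, hh, Equiv.swap_apply_def]
  by_cases hp : p = i
  · subst hp
    by_cases hq : q = p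
    · subst hq; simp [h, h.symm]
    · by_cases hq' : q = j
      · subst hq'; simp [h, h.symm]
      · simp [h, h.symm, hq, hq', Ne.symm hq, Ne.symm hq']
  · by_cases hp' : p = j
    · subst hp'
      by_cases hq : q = i
      · subst hq; simp [h, h.symm]
      · by_cases hq' : q = p
        · subst hq'; simp [h, h.symm]
        · simp [h, h.symm, hq, hq', Ne.symm hq, Ne.symm hq']
    · by_cases hq : q = i
      · subst hq; simp [h, h.symm, hp, hp', Ne.symm hp, Ne.symm hp']
      · by_cases hq' : q = j
        · subst hq'; simp [h, h.symm, hp, hp', Ne.symm hp, Ne.symm hp']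
        · simp [h, h.symm, hp, hp', hq, hq', Ne.symm hp, Ne.symm hp']

end group
end GLSt

open Matrix

namespace GLSt
set_option linter.unusedSectionVars false

section group2
variable {n : ℕ} {F : Type} [Field F] [Finite F]

lemma pm_conj_xx (w : Equiv.Perm (Fin n)) (i j : Fin n) (h : i ≠ j) (t : F) :
    pm w⁻¹ * xx i j h t * pm w =
      xx (w⁻¹ i) (w⁻¹ j) (fun e => h (w⁻¹.injective e)) t := by
  apply Units.ext
  ext p q
  rw [mul_pm_apply, pm_mul_apply, xx_apply, xx_apply, inv_inv]
  simp only [EmbeddingLike.apply_eq_iff_eq, Equiv.Perm.inv_eq_iff_eq]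

lemma xx_mul_pm (w : Equiv.Perm (Fin n)) (i j : Fin n) (h : i ≠ j) (t : F) :
    xx i j h t * pm w = pm w *
      xx (w⁻¹ i) (w⁻¹ j) (fun e => h (w⁻¹.injective e)) t := by
  rw [← pm_conj_xx, map_inv]; group

lemma dg_mul_pm (w : Equiv.Perm (Fin n)) (d : Fin n → Fˣ) :
    (dg d * pm w : GL (Fin n) F) = pm w * dg (d ∘ w) := by
  apply Units.ext
  ext p q
  rw [mul_pm_apply, pm_mul_apply, dg_apply, dg_apply]
  by_cases h : p = w q
  · subst h; simp
  · rw [if_neg h, if_neg]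
    rintro rfl; simp at h

lemma pm_swap_mem (H : Submonoid (GL (Fin n) F))
    (hs : ∀ i j : Fin n, (i : ℕ) + 1 = j → pm (Equiv.swap i j) ∈ H)
    (w : Equiv.Perm (Fin n)) : pm w ∈ H := by
  cases n with
  | zero =>
    rw [Subsingleton.elim w 1, map_one]; exact H.one_mem
  | succ m =>
    have hle : Submonoid.closure (Set.range fun i : Fin m ↦ Equiv.swap i.castSucc i.succ) ≤
        H.comap pm := by
      rw [Submonoid.closure_le]
      rintro _ ⟨i, rfl⟩
      exact hs _ _ (by simp)
    rw [Equiv.Perm.mclosure_swap_castSucc_succ] at hle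
    exact hle (Submonoid.mem_top w)

/-- Generation of the general linear group. -/
lemma generation (H : Submonoid (GL (Fin n) F))
    (hU : ∀ u ∈ UU n F, u ∈ H) (hT : ∀ d, dg d ∈ H)
    (hs : ∀ i j : Fin n, (i : ℕ) + 1 = j → pm (Equiv.swap i j) ∈ H) (g : GL (Fin n) F) :
    g ∈ H := by
  have hx : ∀ (i j : Fin n) (h : i ≠ j) (t : F), xx i j h t ∈ H := by
    intro i j h t
    rcases lt_or_gt_of_ne h with h1 | h1
    · exact hU _ (xx_mem i j h1 t)
    · have e := pm_conj_xx (Equiv.swap i j) j i h.symm t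
      simp only [Equiv.swap_inv, Equiv.swap_apply_left, Equiv.swap_apply_right] at e
      rw [← e]
      exact H.mul_mem (H.mul_mem (pm_swap_mem H hs _) (hU _ (xx_mem j i h1 t)))
        (pm_swap_mem H hs _)
  have key : ∃ g' ∈ H, g'.val = g.val := by
    refine Matrix.diagonal_transvection_induction_of_det_ne_zero
      (fun M => ∃ g' ∈ H, g'.val = M) g.val ?_ ?_ ?_ ?_
    · have := g.isUnit
      rw [Matrix.isUnit_iff_isUnit_det] at this
      exact this.ne_zero
    · intro D hD
      rw [Matrix.det_diagonal, Finset.prod_ne_zero_iff] at hD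
      refine ⟨dg fun i => Units.mk0 (D i) (hD i (Finset.mem_univ i)), hT _, ?_⟩
      ext i j
      rw [dg_apply, Matrix.diagonal_apply]
      simp
    · intro t
      exact ⟨xx t.i t.j t.hij t.c, hx _ _ _ _, rfl⟩
    · rintro A B _ _ ⟨a, ha, rfl⟩ ⟨b, hb, rfl⟩
      exact ⟨a * b, H.mul_mem ha hb, rfl⟩
  obtain ⟨g', h, e⟩ := key
  rwa [← Units.ext e]

/-- Bruhat decomposition (existence). -/
lemma bruhat (g : GL (Fin n) F) :
    ∃ u ∈ UU n F, ∃ w : Equiv.Perm (Fin n), ∃ b ∈ BB n F, g = u * pm w * b := by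
  let S : Set (GL (Fin n) F) :=
    {g | ∃ u ∈ UU n F, ∃ w : Equiv.Perm (Fin n), ∃ b ∈ BB n F, g = u * pm w * b}
  let H : Submonoid (GL (Fin n) F) :=
    { carrier := {h | ∀ g ∈ S, h * g ∈ S}
      one_mem' := by intro g hg; simpa using hg
      mul_mem' := by
        intro a b ha hb g hg
        rw [mul_assoc]; exact ha _ (hb _ hg) }
  have hg : g ∈ H := by
    refine generation H ?_ ?_ ?_ g
    · rintro v hv _ ⟨u, hu, w, b, hb, rfl⟩
      exact ⟨v * u, (UU n F).mul_mem hv hu, w, b, hb, by simp only [mul_assoc]⟩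
    · rintro d _ ⟨u, hu, w, b, hb, rfl⟩
      refine ⟨_, dg_conj_mem d u hu, w, dg (d ∘ w) * b, (BB n F).mul_mem (dg_mem _) hb, ?_⟩
      have := dg_mul_pm w d
      calc dg d * (u * pm w * b) = dg d * u * (dg d)⁻¹ * (dg d * pm w) * b := by group
        _ = _ := by rw [this]; group
    · rintro i j hij _ ⟨u, hu, w, b, hb, rfl⟩
      have hlt : i < j := by rw [Fin.lt_def]; omega
      set s : GL (Fin n) F := pm (Equiv.swap i j) with hs
      have ss : s * s = 1 := swap_mul_self i j
      set c := u i j with hc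
      set k := u * xx i j hlt.ne (-c) with hk
      have hkU : k ∈ UU n F := (UU n F).mul_mem hu (xx_mem i j hlt _)
      have hk0 : k i j = 0 := by
        rw [hk, UU_mul_adj _ _ hu (xx_mem i j hlt _) i j hij, xx_apply]
        simp [hlt.ne, hc]
      have hsk : s * k * s ∈ UU n F := swap_conj_mem k hkU i j hij hk0
      have hukx : u = k * xx i j hlt.ne c := by
        rw [hk, mul_assoc, xx_mul, neg_add_cancel, xx_zero, mul_one]
      -- it suffices to treat the root subgroup
      have red : ∃ v ∈ UU n F, ∃ w' : Equiv.Perm (Fin n), ∃ b' ∈ BB n F,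
          s * xx i j hlt.ne c * pm w = v * pm w' * b' := by
        rcases lt_or_gt_of_ne (fun e => hlt.ne (w⁻¹.injective e) : w⁻¹ i ≠ w⁻¹ j) with h1 | h1
        · refine ⟨1, (UU n F).one_mem, Equiv.swap i j * w, _,
            UU_le_BB (xx_mem (w⁻¹ i) (w⁻¹ j) h1 c), ?_⟩
          rw [mul_assoc, xx_mul_pm, map_mul, ← hs]; group
        · by_cases hc0 : c = 0
          · refine ⟨1, (UU n F).one_mem, Equiv.swap i j * w, 1, (BB n F).one_mem, ?_⟩
            rw [hc0, xx_zero, map_mul, ← hs]; group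
          · obtain ⟨t, ht⟩ : ∃ t : Fˣ, (t : F) = c := ⟨Units.mk0 c hc0, rfl⟩
            have h2 : (Equiv.swap i j * w)⁻¹ i < (Equiv.swap i j * w)⁻¹ j := by
              simpa [_root_.mul_inv_rev] using h1
            refine ⟨xx i j hlt.ne ((t⁻¹ : Fˣ) : F), xx_mem i j hlt _, w,
              dg (hh i j t ∘ w) * xx _ _ h2.ne ((t⁻¹ : Fˣ) : F),
              (BB n F).mul_mem (dg_mem _) (UU_le_BB (xx_mem _ _ h2 _)), ?_⟩
            have e := rank_one_rel i j hlt.ne t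
            have e2 := xx_mul_pm (Equiv.swap i j * w) i j hlt.ne ((t⁻¹ : Fˣ) : F)
            have e3 := dg_mul_pm w (hh i j t)
            rw [map_mul, ← hs] at e2
            rw [← hs, ht] at e
            calc s * xx i j hlt.ne c * pm w
                = s * xx i j hlt.ne c * (s * s) * pm w := by rw [ss, mul_one]
              _ = (s * xx i j hlt.ne c * s) * (s * pm w) := by group
              _ = xx i j hlt.ne ((t⁻¹ : Fˣ) : F) * dg (hh i j t) * s *
                    (xx i j hlt.ne ((t⁻¹ : Fˣ) : F) * (s * pm w)) := by rw [e]; group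
              _ = xx i j hlt.ne ((t⁻¹ : Fˣ) : F) * (dg (hh i j t) * ((s * s) * pm w)) *
                    xx _ _ h2.ne ((t⁻¹ : Fˣ) : F) := by rw [e2]; group
              _ = _ := by rw [ss, one_mul, e3]; group
      obtain ⟨v, hv, w', b', hb', e⟩ := red
      refine ⟨s * k * s * v, (UU n F).mul_mem hsk hv, w', b' * b, (BB n F).mul_mem hb' hb, ?_⟩
      calc s * (u * pm w * b) = s * (k * xx i j hlt.ne c * pm w * b) := by rw [← hukx]
        _ = s * k * (s * s) * (xx i j hlt.ne c * pm w) * b := by rw [ss]; group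
        _ = s * k * s * (s * xx i j hlt.ne c * pm w) * b := by group
        _ = _ := by rw [e]; group
  have h1 : (1 : GL (Fin n) F) ∈ S :=
    ⟨1, (UU n F).one_mem, 1, 1, (BB n F).one_mem, by simp⟩
  have h2 := hg 1 h1
  rw [mul_one] at h2
  exact h2

lemma perm_le_eq_one (π : Equiv.Perm (Fin n)) (h : ∀ i, i ≤ π i) : π = 1 := by
  have h1 : ∑ i : Fin n, (i : ℕ) = ∑ i : Fin n, (π i : ℕ) := (Equiv.sum_comp π (fun i => (i : ℕ))).symm
  have h2 := (Finset.sum_eq_sum_iff_of_le (s := Finset.univ) (f := fun i : Fin n => (i : ℕ))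
    (g := fun i => (π i : ℕ)) (fun i _ => h i)).1 h1
  ext i
  simpa using (h2 i (Finset.mem_univ i)).symm

/-- the longest element -/
def w0 : Equiv.Perm (Fin n) := Fin.revPerm

lemma exists_ascent (w : Equiv.Perm (Fin n)) (hw : w ≠ w0) :
    ∃ i j : Fin n, (i : ℕ) + 1 = j ∧ w⁻¹ i < w⁻¹ j := by
  by_contra hcon
  push Not at hcon
  apply hw
  have hanti : StrictAnti (w⁻¹ : Equiv.Perm (Fin n)) := by
    cases n with
    | zero => intro i; exact i.elim0
    | succ m =>
      rw [Fin.strictAnti_iff_succ_lt]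
      intro i
      refine lt_of_le_of_ne (hcon _ _ (by simp)) ?_
      intro e
      have := w⁻¹.injective e
      exact (Fin.castSucc_lt_succ (i := i)).ne this.symm
  have hmono : StrictMono (w⁻¹ * w0 : Equiv.Perm (Fin n)) := by
    intro a b hab
    exact hanti (by simpa [w0] using hab)
  have := perm_le_eq_one (w⁻¹ * w0) (fun i => hmono.le_apply)
  exact (inv_mul_eq_one.1 this)

lemma big_cell (u : GL (Fin n) F) (hu : u ∈ UU n F) (w : Equiv.Perm (Fin n))
    (h : (pm w0)⁻¹ * u * pm w ∈ BB n F) : w = w0 ∧ u = 1 := by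
  rw [← map_inv] at h
  have h' : ∀ p q : Fin n, q < p → u (w0 p) (w q) = 0 := by
    intro p q hpq
    have := h p q hpq
    rwa [mul_pm_apply, pm_mul_apply, inv_inv] at this
  have hw : w = w0 := by
    have := perm_le_eq_one (w⁻¹ * w0) (fun p => by
      by_contra hlt
      have := h' p _ (not_le.1 hlt)
      simp [hu.2] at this)
    exact (inv_mul_eq_one.1 this)
  refine ⟨hw, ?_⟩
  subst hw
  apply Units.ext
  ext a b
  rw [Units.val_one, Matrix.one_apply]
  split_ifs with hab
  · rw [hab, hu.2]
  · rcases lt_or_gt_of_ne hab with h1 | h1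
    · have := h' (w0 a) (w0 b) (by simpa [w0] using h1)
      simpa [w0] using this
    · exact hu.1 a b h1

/-- sum of the superdiagonal entries -/
def sd (g : GL (Fin n) F) : F :=
  ∑ p : Fin n × Fin n, if (p.1 : ℕ) + 1 = p.2 then g p.1 p.2 else 0

lemma sd_mul (u v : GL (Fin n) F) (hu : u ∈ UU n F) (hv : v ∈ UU n F) :
    sd (u * v) = sd u + sd v := by
  unfold sd
  rw [← Finset.sum_add_distrib]
  refine Finset.sum_congr rfl fun p _ => ?_
  split_ifs with h
  · exact UU_mul_adj u v hu hv _ _ h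
  · simp

lemma sd_xx (i j : Fin n) (h : (i : ℕ) + 1 = j) (hne : i ≠ j) (t : F) :
    sd (xx i j hne t) = t := by
  unfold sd
  rw [Finset.sum_eq_single (i, j)]
  · rw [if_pos h, xx_apply, if_neg hne]; simp
  · rintro ⟨p, q⟩ _ hpq
    split_ifs with h1
    · rw [xx_apply, if_neg (fun e : p = q => by simp [e] at h1), if_neg, add_zero]
      rintro ⟨rfl, rfl⟩; exact hpq rfl
    · rfl
  · simp

/-- Coordinates on the unitriangular group. -/
noncomputable def UUequiv : UU n F ≃ ((j : Fin n) → Fin j → F) where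
  toFun u := fun j i => u.1 ⟨i, i.2.trans j.2⟩ j
  invFun f :=
    let M : Matrix (Fin n) (Fin n) F := Matrix.of fun i j =>
      if h : (i : ℕ) < j then f j ⟨i, h⟩ else if i = j then 1 else 0
    have hM : M.det = 1 := by
      rw [Matrix.det_of_isUpperTriangular]
      · simp [M]
      · intro i j (h : j < i)
        simp only [M, Matrix.of_apply]
        rw [dif_neg (by rw [Fin.lt_def] at h; omega), if_neg h.ne']
    ⟨Matrix.GeneralLinearGroup.mkOfDetNeZero M (by rw [hM]; exact one_ne_zero), by
      refine ⟨fun i j h => ?_, fun i => ?_⟩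
      · show M i j = 0
        simp only [M, Matrix.of_apply]
        rw [dif_neg (by rw [Fin.lt_def] at h; omega), if_neg h.ne']
      · show M i i = 1
        simp [M]⟩
  left_inv := by
    rintro ⟨u, hu⟩
    apply Subtype.ext
    apply Units.ext
    ext i j
    show (if h : (i : ℕ) < j then u i j else if i = j then 1 else 0) = u i j
    split_ifs with h h'
    · rfl
    · rw [h', hu.2]
    · rw [hu.1]
      rw [Fin.lt_def]; rw [Fin.ext_iff] at h'; omega
  right_inv := by
    intro f
    funext j i
    show (if h : (i : ℕ) < j then f j ⟨i, h⟩ else _) = f j i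
    rw [dif_pos i.2]

lemma card_UU : Nat.card (UU n F) = ∏ j : Fin n, Nat.card F ^ (j : ℕ) := by
  rw [Nat.card_congr UUequiv, Nat.card_pi]
  refine Finset.prod_congr rfl fun j _ => ?_
  rw [Nat.card_pi]; simp

lemma val_card (ℓ : ℕ) [Fact ℓ.Prime] (n : ℕ) :
    padicValNat ℓ (Nat.card (UU n (ZMod ℓ))) = padicValNat ℓ (Nat.card (GL (Fin n) (ZMod ℓ))) := by
  have hp : ℓ.Prime := Fact.out
  have e : Nat.card (GL (Fin n) (ZMod ℓ)) =
      Nat.card (UU n (ZMod ℓ)) * ∏ j : Fin n, (ℓ ^ (n - (j : ℕ)) - 1) := by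
    rw [card_UU, Matrix.card_GL_field, ← Finset.prod_mul_distrib]
    refine Finset.prod_congr rfl fun j _ => ?_
    rw [ZMod.card, Nat.card_zmod, Nat.mul_sub, ← pow_add, mul_one,
      Nat.add_sub_cancel' j.2.le]
  have hnd : ¬ ℓ ∣ ∏ j : Fin n, (ℓ ^ (n - (j : ℕ)) - 1) := by
    rw [Prime.dvd_finsetProd_iff hp.prime]
    rintro ⟨j, _, hj⟩
    have h1 : ℓ ∣ ℓ ^ (n - (j : ℕ)) := dvd_pow_self _ (by omega)
    have h2 : 1 ≤ ℓ ^ (n - (j : ℕ)) := Nat.one_le_pow _ _ hp.pos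
    have h3 := Nat.dvd_sub h1 hj
    rw [Nat.sub_sub_self h2] at h3
    exact hp.one_lt.ne' (Nat.dvd_one.1 h3)
  have hne : ∏ j : Fin n, (ℓ ^ (n - (j : ℕ)) - 1) ≠ 0 := fun h0 => hnd (h0 ▸ dvd_zero _)
  rw [e, padicValNat.mul Nat.card_pos.ne' hne, padicValNat.eq_zero_of_not_dvd hnd, add_zero]

lemma UU_isPGroup (ℓ : ℕ) [Fact ℓ.Prime] (n : ℕ) : IsPGroup ℓ (UU n (ZMod ℓ)) := by
  apply IsPGroup.of_card (n := ∑ j : Fin n, (j : ℕ))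
  rw [card_UU, Nat.card_zmod, Finset.prod_pow_eq_pow_sum]

lemma det_dg (d : Fin n → Fˣ) : (dg d : GL (Fin n) F).det = ∏ i, d i := by
  ext
  rw [Matrix.GeneralLinearGroup.val_det_apply]
  show (Matrix.diagonal (fun i => (d i : F))).det = _
  rw [Matrix.det_diagonal]; simp

lemma det_UU (u : GL (Fin n) F) (hu : u ∈ UU n F) : u.det = 1 := by
  ext
  rw [Matrix.GeneralLinearGroup.val_det_apply,
    Matrix.det_of_isUpperTriangular (fun i j h => hu.1 i j h)]
  simp [hu.2]

end group2
end GLSt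

open Matrix

namespace GLSt
set_option linter.unusedSectionVars false

section lattice

/-- Irreducibility in elementary terms. -/
def Irr {G V : Type} [Group G] [AddCommGroup V] [Module ℂ V] (ρ : Representation ℂ G V) : Prop :=
  Nontrivial V ∧ ∀ W : Submodule ℂ V, (∀ g, ∀ x ∈ W, ρ g x ∈ W) → W = ⊥ ∨ W = ⊤

/-- The space of `lam`-eigenvectors of a subgroup. -/
def eig {G V : Type} [Group G] [AddCommGroup V] [Module ℂ V] (ρ : Representation ℂ G V)
    (U : Subgroup G) (lam : U →* ℂˣ) : Submodule ℂ V where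
  carrier := {x | ∀ u : U, ρ u x = (lam u : ℂ) • x}
  zero_mem' := by intro u; simp
  add_mem' := by intro a b ha hb u; rw [map_add, ha u, hb u, smul_add]
  smul_mem' := by intro c a ha u; rw [map_smul, ha u, smul_comm]

variable {G V : Type} [Group G] [AddCommGroup V] [Module ℂ V] [FiniteDimensional ℂ V]

lemma mem_eig (ρ : Representation ℂ G V) (U : Subgroup G) (lam : U →* ℂˣ) (x : V) :
    x ∈ eig ρ U lam ↔ ∀ u : U, ρ u x = (lam u : ℂ) • x := Iff.rfl

lemma schur (ρ : Representation ℂ G V) (h : Irr ρ) (T : Module.End ℂ V)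
    (hT : ∀ g, ρ g * T = T * ρ g) : ∃ c : ℂ, T = c • 1 := by
  have := h.1
  obtain ⟨c, hc⟩ := Module.End.exists_eigenvalue T
  refine ⟨c, ?_⟩
  rcases h.2 (T.eigenspace c) (by
    intro g x hx
    rw [Module.End.mem_eigenspace_iff] at hx ⊢
    have := congrArg (fun f => f x) (hT g)
    simp only [Module.End.mul_apply] at this
    rw [← this, hx, map_smul]) with h1 | h1
  · exact absurd h1 hc
  · ext x
    have : x ∈ T.eigenspace c := h1 ▸ Submodule.mem_top
    rw [Module.End.mem_eigenspace_iff] at this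
    simpa using this

lemma exists_valuation (ℓ : ℕ) [Fact ℓ.Prime] :
    ∃ O : ValuationSubring ℂ, (ℓ : O) ∈ IsLocalRing.maximalIdeal O := by
  have hp : ℓ.Prime := Fact.out
  let A : Subring ℂ := (Int.castRingHom ℂ).range
  have hI : Ideal.span {(ℓ : A)} ≠ ⊤ := by
    rw [Ne, Ideal.span_singleton_eq_top, isUnit_iff_exists_inv]
    rintro ⟨⟨_, ⟨k, rfl⟩⟩, e⟩
    have e1 : ((ℓ : ℂ)) * (k : ℂ) = 1 := by
      have := congrArg (Subtype.val) e
      simpa using this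
    have e2 : (ℓ : ℤ) * k = 1 := by exact_mod_cast e1
    have := Int.isUnit_iff.1 (IsUnit.of_mul_eq_one _ e2)
    have := hp.two_le
    omega
  obtain ⟨O, _, h2⟩ := Ideal.image_subset_nonunits_valuationSubring _ hI
  refine ⟨O, ?_⟩
  rw [ValuationSubring.valuation_lt_one_iff, ← ValuationSubring.mem_nonunits_iff]
  apply h2
  exact ⟨_, Ideal.subset_span rfl, by simp⟩

lemma unit_of_not_dvd (ℓ : ℕ) [Fact ℓ.Prime] (O : ValuationSubring ℂ)
    (hO : (ℓ : O) ∈ IsLocalRing.maximalIdeal O) (m : ℕ) (hm : ¬ ℓ ∣ m) : IsUnit (m : O) := by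
  have hp : ℓ.Prime := Fact.out
  by_contra hu
  have h1 : (m : O) ∈ IsLocalRing.maximalIdeal O := hu
  have hc : IsCoprime (ℓ : ℤ) (m : ℤ) := Nat.isCoprime_iff_coprime.2 ((hp.coprime_iff_not_dvd).2 hm)
  obtain ⟨a, b, hab⟩ := hc
  have : (a : O) * (ℓ : O) + (b : O) * (m : O) = 1 := by exact_mod_cast congrArg (Int.cast : ℤ → O) hab
  have h2 : (1 : O) ∈ IsLocalRing.maximalIdeal O := by
    rw [← this]
    exact Ideal.add_mem _ (Ideal.mul_mem_left _ _ hO) (Ideal.mul_mem_left _ _ h1)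
  exact (Ideal.ne_top_iff_one _).1 (IsLocalRing.maximalIdeal.isMaximal O).ne_top h2

lemma exists_lattice [Finite G] (O : ValuationSubring ℂ) (ρ : Representation ℂ G V) :
    ∃ (d : ℕ) (b : Module.Basis (Fin d) ℂ V), ∀ g, ∃ M : Matrix (Fin d) (Fin d) O,
      Matrix.toLin b b (M.map (algebraMap O ℂ)) = ρ g := by
  let b0 := Module.finBasis ℂ V
  let S : Set V := Set.range fun p : G × Fin (Module.finrank ℂ V) => ρ p.1 (b0 p.2)
  let L : Submodule O V := Submodule.span O S
  have hSfin : S.Finite := Set.finite_range _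
  have hfin : Module.Finite O L := Module.Finite.span_of_finite O hSfin
  have htf : Module.IsTorsionFree O L := by
    have : Module.IsTorsionFree O V := by
      rw [Module.isTorsionFree_iff_smul_eq_zero]
      intro r x hrx
      have : (r : ℂ) • x = 0 := hrx
      rcases smul_eq_zero.1 this with h | h
      · left; exact Subtype.ext h
      · right; exact h
    infer_instance
  have hflat : Module.Flat O L := by
    rw [Module.Flat.flat_iff_torsion_eq_bot_of_isBezout]
    exact Submodule.isTorsionFree_iff_torsion_eq_bot.1 htf
  have hfree : Module.Free O L := Module.free_of_flat_of_isLocalRing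
  let bL := Module.finBasis O L
  set d := Module.finrank O L
  have hLs : ∀ g, ∀ x ∈ L, ρ g x ∈ L := by
    intro g x hx
    induction hx using Submodule.span_induction with
    | mem x hx =>
      obtain ⟨⟨h, i⟩, rfl⟩ := hx
      refine Submodule.subset_span ⟨(g * h, i), ?_⟩
      simp
    | zero => simp
    | add x y _ _ hx hy => rw [map_add]; exact L.add_mem hx hy
    | smul c x _ hx =>
      have : ρ g (c • x) = c • ρ g x := (ρ g).map_smul (c : ℂ) x
      rw [this]; exact L.smul_mem c hx
  have hli : LinearIndependent ℂ (fun i => (bL i : V)) := by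
    rw [← LinearIndependent.iff_fractionRing O ℂ]
    exact bL.linearIndependent.map' L.subtype (Submodule.ker_subtype L)
  have hLspan : ∀ x ∈ L, x ∈ Submodule.span ℂ (Set.range fun i => (bL i : V)) := by
    intro x hx
    have h := bL.sum_repr ⟨x, hx⟩
    have h' := congrArg (L.subtype) h
    rw [map_sum] at h'
    have e : x = ∑ i, ((bL.repr ⟨x, hx⟩ i : O) : ℂ) • (bL i : V) := h'.symm
    rw [e]
    exact Submodule.sum_mem _ fun i _ => Submodule.smul_mem _ _ (Submodule.subset_span ⟨i, rfl⟩)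
  have hsp : ⊤ ≤ Submodule.span ℂ (Set.range fun i => (bL i : V)) := by
    rw [← b0.span_eq, Submodule.span_le]
    rintro _ ⟨i, rfl⟩
    refine hLspan _ (Submodule.subset_span ⟨(1, i), ?_⟩)
    simp
  refine ⟨d, Module.Basis.mk hli hsp, fun g => ?_⟩
  refine ⟨Matrix.of fun i j => bL.repr ⟨ρ g (bL j), hLs g _ (bL j).2⟩ i, ?_⟩
  refine (Module.Basis.mk hli hsp).ext fun j => ?_
  rw [Matrix.toLin_self]
  simp only [Module.Basis.mk_apply, Matrix.map_apply, Matrix.of_apply]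
  have h' := congrArg (L.subtype) (bL.sum_repr ⟨ρ g (bL j), hLs g _ (bL j).2⟩)
  rw [map_sum] at h'
  exact h'

lemma exists_fixed_vector (ℓ : ℕ) [Fact ℓ.Prime] {U : Type} [Group U] [Finite U] (hU : IsPGroup ℓ U)
    {k M : Type} [Field k] [CharP k ℓ] [AddCommGroup M] [Module k M] [Nontrivial M]
    (τ : Representation k U M) : ∃ x : M, x ≠ 0 ∧ ∀ u, τ u x = x := by
  letI : Algebra (ZMod ℓ) k := ZMod.algebra k ℓ
  letI : Module (ZMod ℓ) M := Module.compHom M (algebraMap (ZMod ℓ) k)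
  obtain ⟨v, hv⟩ := exists_ne (0 : M)
  let N : Submodule (ZMod ℓ) M := Submodule.span (ZMod ℓ) (Set.range fun u => τ u v)
  have hfin : Module.Finite (ZMod ℓ) N := Module.Finite.span_of_finite _ (Set.finite_range _)
  have : Finite N := Module.finite_of_finite (ZMod ℓ)
  have hsm : ∀ u (c : ZMod ℓ) (x : M), τ u (c • x) = c • τ u x := by
    intro u c x
    exact (τ u).map_smul (algebraMap (ZMod ℓ) k c) x
  have hN : ∀ u, ∀ x ∈ N, τ u x ∈ N := by
    intro g x hx
    induction hx using Submodule.span_induction with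
    | mem x hx =>
      obtain ⟨h, rfl⟩ := hx
      refine Submodule.subset_span ⟨g * h, ?_⟩
      simp
    | zero => simp
    | add x y _ _ hx hy => rw [map_add]; exact N.add_mem hx hy
    | smul c x _ hx => rw [hsm]; exact N.smul_mem c hx
  letI act : MulAction U N :=
    { smul := fun u x => ⟨τ u x, hN u x x.2⟩
      one_smul := by intro x; apply Subtype.ext; show τ 1 x.1 = x.1; simp
      mul_smul := by intro a b x; apply Subtype.ext; show τ (a * b) x.1 = τ a (τ b x.1); simp }
  have hnt : Nontrivial N := ⟨⟨⟨v, Submodule.subset_span ⟨1, by simp⟩⟩, 0, fun e => hv (congrArg Subtype.val e)⟩⟩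
  have hdvd : ℓ ∣ Nat.card N := by
    have := Module.natCard_eq_pow_finrank (K := ZMod ℓ) (V := N)
    rw [this, Nat.card_zmod]
    exact dvd_pow_self _ (Module.finrank_pos (R := ZMod ℓ) (M := N)).ne'
  have h0 : (0 : N) ∈ MulAction.fixedPoints U N := by
    intro u; apply Subtype.ext; show τ u (0 : M) = 0; simp
  obtain ⟨x, hx, hne⟩ := hU.exists_fixed_point_of_prime_dvd_card_of_fixed_point N hdvd h0
  exact ⟨x.1, fun e => hne (Subtype.ext e.symm), fun u => congrArg Subtype.val (hx u)⟩

end lattice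
end GLSt

open Matrix

namespace GLSt
set_option linter.unusedSectionVars false

section defect
variable {G V : Type} [Group G] [Finite G] [AddCommGroup V] [Module ℂ V] [FiniteDimensional ℂ V]

/-- Matrices over a subring acting on `V` through a basis. -/
noncomputable def phi (O : ValuationSubring ℂ) {d : ℕ} (b : Module.Basis (Fin d) ℂ V) :
    Matrix (Fin d) (Fin d) O →+* Module.End ℂ V :=
  (Matrix.toLinAlgEquiv b).toRingEquiv.toRingHom.comp (algebraMap O ℂ).mapMatrix

lemma phi_apply (O : ValuationSubring ℂ) {d : ℕ} (b : Module.Basis (Fin d) ℂ V)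
    (M : Matrix (Fin d) (Fin d) O) : phi O b M = Matrix.toLin b b (M.map (algebraMap O ℂ)) := rfl

lemma phi_injective (O : ValuationSubring ℂ) {d : ℕ} (b : Module.Basis (Fin d) ℂ V) :
    Function.Injective (phi O b) := by
  intro M N h
  rw [phi_apply, phi_apply] at h
  have h1 := (Matrix.toLin b b).injective h
  exact Matrix.map_injective Subtype.val_injective h1

lemma phi_smul (O : ValuationSubring ℂ) {d : ℕ} (b : Module.Basis (Fin d) ℂ V) (c : O)
    (M : Matrix (Fin d) (Fin d) O) : phi O b (c • M) = (c : ℂ) • phi O b M := by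
  rw [phi_apply, phi_apply, ← map_smul]
  congr 1

lemma rel_trace (ℓ : ℕ) [Fact ℓ.Prime] (O : ValuationSubring ℂ)
    (hO : (ℓ : O) ∈ IsLocalRing.maximalIdeal O)
    (ρ : Representation ℂ G V) (h : Irr ρ)
    (hd : padicValNat ℓ (Module.finrank ℂ V) = padicValNat ℓ (Nat.card G))
    (U : Subgroup G) [Fintype U] :
    ∃ (d : ℕ) (b : Module.Basis (Fin d) ℂ V) (R : G →* Matrix (Fin d) (Fin d) O)
      (A : Matrix (Fin d) (Fin d) O), 0 < d ∧ (∀ g, phi O b (R g) = ρ g) ∧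
      ∑ u : U, R u * A * R (u : G)⁻¹ = 1 := by
  classical
  have hp : ℓ.Prime := Fact.out
  have : Fintype G := Fintype.ofFinite G
  obtain ⟨d, b, hb⟩ := exists_lattice O ρ
  choose R0 hR0 using hb
  have hR0' : ∀ g, phi O b (R0 g) = ρ g := hR0
  let R : G →* Matrix (Fin d) (Fin d) O :=
    { toFun := R0
      map_one' := by apply phi_injective O b; rw [hR0', map_one, map_one]
      map_mul' := by
        intro x y; apply phi_injective O b; rw [map_mul, hR0', hR0', hR0', map_mul] }
  have hR : ∀ g, phi O b (R g) = ρ g := hR0'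
  have hfin : Module.finrank ℂ V = d := by
    rw [Module.finrank_eq_card_basis b, Fintype.card_fin]
  have := h.1
  have hdpos : 0 < d := by rw [← hfin]; exact Module.finrank_pos
  let z : Fin d := ⟨0, hdpos⟩
  let A0 : Matrix (Fin d) (Fin d) O := Matrix.single z z 1
  let S : Matrix (Fin d) (Fin d) O := ∑ g : G, R g⁻¹ * A0 * R g
  have hSc : ∀ g, R g * S = S * R g := by
    intro g
    simp only [S, Finset.mul_sum, Finset.sum_mul]
    rw [← Equiv.sum_comp (Equiv.mulRight g)]
    refine Finset.sum_congr rfl fun x _ => ?_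
    simp only [Equiv.coe_mulRight, _root_.mul_inv_rev, map_mul, ← mul_assoc]
    rw [← map_mul, mul_inv_cancel, map_one, one_mul]
  obtain ⟨c, hc⟩ := schur ρ h (phi O b S) (by
    intro g; rw [← hR, ← map_mul, ← map_mul, hSc])
  have hS1 : S.map (algebraMap O ℂ) = c • 1 := by
    apply (Matrix.toLin b b).injective
    rw [← phi_apply, hc, map_smul, Matrix.toLin_one]; rfl
  have hS2 : S = S z z • 1 := by
    have hcz : c = (S z z : ℂ) := by
      have := congrFun (congrFun hS1 z) z
      simpa using this.symm
    ext i j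
    have := congrFun (congrFun hS1 i) j
    rw [hcz] at this
    by_cases hij : i = j
    · subst hij; simpa using this
    · simpa [Matrix.one_apply, hij] using this
  set s := S z z
  have htr : (Nat.card G : O) = (d : O) * s := by
    have h1 : S.trace = Nat.card G := by
      simp only [S, Matrix.trace_sum]
      rw [Finset.sum_congr rfl (g := fun _ => (1 : O))]
      · simp [Nat.card_eq_fintype_card]
      · intro g _
        rw [Matrix.trace_mul_comm, ← mul_assoc, ← map_mul, mul_inv_cancel, map_one, one_mul]
        simp [A0]
    rw [← h1, hS2]
    simp [Matrix.trace_smul, mul_comm]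
  have hs : IsUnit s := by
    have hG0 : Nat.card G ≠ 0 := Nat.card_pos.ne'
    have e1 := Nat.ordProj_mul_ordCompl_eq_self (Nat.card G) ℓ
    have e2 := Nat.ordProj_mul_ordCompl_eq_self d ℓ
    have hv : d.factorization ℓ = (Nat.card G).factorization ℓ := by
      rw [Nat.factorization_def _ hp, Nat.factorization_def _ hp, ← hd, hfin]
    have n1 := Nat.not_dvd_ordCompl hp hG0
    rw [hv] at e2
    rw [← e1, ← e2] at htr
    push_cast at htr
    rw [mul_assoc] at htr
    have hl : ((ℓ : O) ^ (Nat.card G).factorization ℓ) ≠ 0 := by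
      apply pow_ne_zero
      intro e
      have : ((ℓ : O) : ℂ) = 0 := by rw [e]; rfl
      have : (ℓ : ℂ) = 0 := by simpa using this
      exact hp.ne_zero (by exact_mod_cast this)
    have h3 := mul_left_cancel₀ hl htr
    have h4 := unit_of_not_dvd ℓ O hO _ n1
    rw [h3] at h4
    exact isUnit_of_mul_isUnit_right h4
  obtain ⟨si, hsi⟩ := hs.exists_left_inv
  let Q := G ⧸ U
  have : Fintype Q := Fintype.ofFinite Q
  refine ⟨d, b, R, si • ∑ r : Q, R (r.out)⁻¹ * A0 * R r.out, hdpos, hR, ?_⟩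
  rw [← Equiv.sum_comp (Equiv.inv U)]
  have : S = ∑ u : U, ∑ r : Q, R (u : G)⁻¹ * (R (r.out)⁻¹ * A0 * R r.out) * R u := by
    rw [Finset.sum_comm, ← Fintype.sum_prod_type'
      (f := fun (r : Q) (u : U) => R (u : G)⁻¹ * (R (r.out)⁻¹ * A0 * R r.out) * R u)]
    simp only [S]
    symm
    refine Fintype.sum_bijective (fun x : Q × U => x.1.out * (x.2 : G)) ?_ _ _ ?_
    · constructor
      · rintro ⟨r, u⟩ ⟨r', u'⟩ e
        simp only at e
        have e1 : r = r' := by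
          have := congrArg (QuotientGroup.mk (s := U)) e
          rwa [QuotientGroup.mk_mul_of_mem _ u.2, QuotientGroup.mk_mul_of_mem _ u'.2,
            QuotientGroup.out_eq', QuotientGroup.out_eq'] at this
        subst e1
        rw [mul_right_inj] at e
        rw [Subtype.ext e]
      · intro g
        refine ⟨(QuotientGroup.mk g, ⟨(QuotientGroup.mk g : Q).out⁻¹ * g, ?_⟩), ?_⟩
        · rw [← QuotientGroup.eq, QuotientGroup.out_eq']
        · simp
    · intro x
      simp only [_root_.mul_inv_rev, map_mul, mul_assoc]
  have h2 : si • S = 1 := by rw [hS2, smul_smul, hsi, one_smul]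
  rw [← h2, this]
  simp only [Finset.smul_sum, Finset.mul_sum, Finset.sum_mul]
  simp

lemma lam_mem (O : ValuationSubring ℂ) (U : Subgroup G) (lam : U →* ℂˣ) (u : U) :
    (lam u : ℂ) ∈ O := by
  have h1 : (lam u : ℂ) ^ (Nat.card U) = 1 := by
    rw [← Units.val_pow_eq_pow_val, ← map_pow, pow_card_eq_one', map_one, Units.val_one]
  rw [← ValuationSubring.valuation_le_one_iff]
  have h2 : O.valuation (lam u : ℂ) ^ (Nat.card U) = 1 := by rw [← map_pow, h1, map_one]
  exact ((pow_eq_one_iff.1 h2).resolve_right Nat.card_pos.ne').le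

/-- A linear character with values in a valuation ring. -/
noncomputable def lamO (O : ValuationSubring ℂ) (U : Subgroup G) (lam : U →* ℂˣ) : U →* O where
  toFun u := ⟨lam u, lam_mem O U lam u⟩
  map_one' := by apply Subtype.ext; simp
  map_mul' := by intro x y; apply Subtype.ext; simp

lemma residue_charP (ℓ : ℕ) [Fact ℓ.Prime] (O : ValuationSubring ℂ)
    (hO : (ℓ : O) ∈ IsLocalRing.maximalIdeal O) : CharP (IsLocalRing.ResidueField O) ℓ := by
  have h : ((ℓ : ℕ) : IsLocalRing.ResidueField O) = 0 := by
    rw [← map_natCast (IsLocalRing.residue O), IsLocalRing.residue_eq_zero_iff]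
    exact hO
  obtain ⟨q, hq⟩ := CharP.exists (IsLocalRing.ResidueField O)
  have h1 := (CharP.cast_eq_zero_iff (IsLocalRing.ResidueField O) q ℓ).1 h
  rcases (Nat.dvd_prime Fact.out).1 h1 with h2 | h2
  · exact absurd h2 (CharP.char_ne_one (IsLocalRing.ResidueField O) q)
  · rwa [h2] at hq

lemma residue_lam (ℓ : ℕ) [Fact ℓ.Prime] (O : ValuationSubring ℂ)
    (hO : (ℓ : O) ∈ IsLocalRing.maximalIdeal O) (U : Subgroup G) (hU : IsPGroup ℓ U)
    (lam : U →* ℂˣ) (u : U) : IsLocalRing.residue O (lamO O U lam u) = 1 := by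
  have := residue_charP ℓ O hO
  obtain ⟨m, hm⟩ := hU u
  have h : IsLocalRing.residue O (lamO O U lam u) ^ (ℓ ^ m * 1) = 1 := by
    rw [mul_one, ← map_pow, ← map_pow, hm, map_one, map_one]
  have := ExpChar.prime (R := IsLocalRing.ResidueField O) (q := ℓ) Fact.out
  rw [ExpChar.pow_prime_pow_mul_eq_one_iff] at h
  simpa using h

lemma defect_zero_eig (ℓ : ℕ) [Fact ℓ.Prime] (ρ : Representation ℂ G V) (h : Irr ρ)
    (hd : padicValNat ℓ (Module.finrank ℂ V) = padicValNat ℓ (Nat.card G))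
    (U : Subgroup G) (hU : IsPGroup ℓ U) (lam mu : U →* ℂˣ) :
    eig ρ U lam ≠ ⊥ ∧ Module.finrank ℂ (eig ρ U lam) ≤ Module.finrank ℂ (eig ρ U mu) := by
  classical
  have : Fintype U := Fintype.ofFinite U
  obtain ⟨O, hO⟩ := exists_valuation ℓ
  have := residue_charP ℓ O hO
  obtain ⟨d, b, R, A, hdpos, hR, hA⟩ := rel_trace ℓ O hO ρ h hd U
  let N : (U →* ℂˣ) → Matrix (Fin d) (Fin d) O := fun l => ∑ u : U, lamO O U l u⁻¹ • R u
  have hN : ∀ l (v : U), R v * N l = lamO O U l v • N l := by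
    intro l v
    simp only [N, Finset.mul_sum, Finset.smul_sum]
    rw [← Equiv.sum_comp (Equiv.mulLeft v) (fun x : U => lamO O U l v • lamO O U l x⁻¹ • R (x : G))]
    refine Finset.sum_congr rfl fun u _ => ?_
    simp only [Equiv.coe_mulLeft, _root_.mul_inv_rev, smul_smul]
    rw [← map_mul, Subgroup.coe_mul, map_mul R, mul_smul_comm]
    congr 1
    rw [map_mul, map_mul, mul_left_comm, ← map_mul _ v, mul_inv_cancel, map_one, mul_one]
  have hN' : ∀ l x, phi O b (N l) x ∈ eig ρ U l := by
    intro l x v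
    rw [← hR, ← Module.End.mul_apply, ← map_mul, hN, phi_smul]
    rfl
  have hE : ∀ l, ∀ x ∈ eig ρ U l, phi O b (N l * A) x = x := by
    intro l x hx
    have h1 : phi O b (∑ u : U, R u * A * R (u : G)⁻¹) x = x := by rw [hA, map_one]; rfl
    conv_rhs => rw [← h1]
    simp only [N, Finset.sum_mul, map_sum, LinearMap.sum_apply]
    refine Finset.sum_congr rfl fun u _ => ?_
    rw [smul_mul_assoc, phi_smul, map_mul (phi O b) (R u * A), Module.End.mul_apply, hR]
    have := hx u⁻¹
    rw [Subgroup.coe_inv] at this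
    rw [this, map_smul]; rfl
  let res : Matrix (Fin d) (Fin d) O →+* Matrix (Fin d) (Fin d) (IsLocalRing.ResidueField O) :=
    (IsLocalRing.residue O).mapMatrix
  have hres : ∀ l, res (N l) = ∑ u : U, res (R u) := by
    intro l
    simp only [N, map_sum]
    refine Finset.sum_congr rfl fun u _ => ?_
    ext i j
    simp [res, Matrix.map_apply, residue_lam ℓ O hO U hU]
  constructor
  · intro hbot
    have h0 : N lam * A = 0 := by
      apply phi_injective O b
      rw [map_zero]
      ext x
      have := hN' lam (phi O b A x)
      rw [hbot, Submodule.mem_bot] at this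
      rw [map_mul, Module.End.mul_apply, this]; rfl
    have h1 : (∑ u : U, res (R u)) * res A = 0 := by rw [← hres lam, ← map_mul, h0, map_zero]
    let τ : Representation (IsLocalRing.ResidueField O) U (Fin d → IsLocalRing.ResidueField O) :=
      (Matrix.toLinAlgEquiv' : Matrix (Fin d) (Fin d) (IsLocalRing.ResidueField O) ≃ₐ[_] _).toRingEquiv.toRingHom.toMonoidHom.comp
        (res.toMonoidHom.comp (R.comp U.subtype))
    have hτ : ∀ u x, τ u x = res (R u) *ᵥ x := fun u x => rfl
    have : Nontrivial (Fin d → IsLocalRing.ResidueField O) :=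
      haveI : Nonempty (Fin d) := ⟨⟨0, hdpos⟩⟩
      inferInstance
    obtain ⟨x, hx0, hx⟩ := exists_fixed_vector ℓ hU τ
    apply hx0
    have h2 : (∑ u : U, res (R u) * res A * res (R (u : G)⁻¹)) *ᵥ x = x := by
      simp only [← map_mul, ← map_sum, hA]
      rw [map_one, Matrix.one_mulVec]
    rw [Matrix.sum_mulVec] at h2
    rw [← h2]
    have h3 : ∀ u : U, (res (R u) * res A * res (R (u : G)⁻¹)) *ᵥ x = (res (R u) * res A) *ᵥ x := by
      intro u
      rw [← Matrix.mulVec_mulVec]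
      congr 1
      exact hx u⁻¹
    simp only [h3]
    rw [← Matrix.sum_mulVec, ← Finset.sum_mul, h1, Matrix.zero_mulVec]
  · let f : eig ρ U lam →ₗ[ℂ] eig ρ U mu :=
      LinearMap.codRestrict _ ((phi O b (N mu * A)).comp (eig ρ U lam).subtype) (by
        intro x
        rw [LinearMap.comp_apply, map_mul, Module.End.mul_apply]
        exact hN' _ _)
    refine LinearMap.finrank_le_finrank_of_injective (f := f) ?_
    rw [← LinearMap.ker_eq_bot, LinearMap.ker_eq_bot']
    rintro ⟨x, hx⟩ hfx
    have hfx' : phi O b (N mu * A) x = 0 := congrArg Subtype.val hfx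
    apply Subtype.ext
    show x = 0
    let Z := 1 - (N lam * A - N mu * A)
    have hZ : phi O b Z x = 0 := by
      simp only [Z, map_sub, map_one, LinearMap.sub_apply, hE lam x hx, hfx']
      simp
    have hZd : IsUnit Z.det := by
      rw [← IsLocalRing.residue_ne_zero_iff_isUnit, RingHom.map_det]
      have : res Z = 1 := by
        simp only [Z, map_sub, map_mul, hres, map_one]; simp
      change (res Z).det ≠ 0
      rw [this]; simp
    obtain ⟨Y, hY⟩ := ((Matrix.isUnit_iff_isUnit_det Z).2 hZd).exists_left_inv
    have : phi O b (Y * Z) x = 0 := by rw [map_mul, Module.End.mul_apply, hZ, map_zero]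
    rw [hY, map_one] at this
    exact this

end defect
end GLSt

open Matrix

namespace GLSt
set_option linter.unusedSectionVars false

section avg
variable {G V : Type} [Group G] [Finite G] [AddCommGroup V] [Module ℂ V]

open Classical in
/-- Twisted averaging operator. -/
noncomputable def avg (ρ : Representation ℂ G V) (U : Subgroup G) (lam : U →* ℂˣ) :
    Module.End ℂ V :=
  letI := Fintype.ofFinite U
  ∑ u : U, (lam u⁻¹ : ℂ) • ρ u

variable (ρ : Representation ℂ G V) (U : Subgroup G) (lam : U →* ℂˣ)

lemma avg_apply [Fintype U] (x : V) : avg ρ U lam x = ∑ u : U, (lam u⁻¹ : ℂ) • ρ u x := by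
  simp only [avg, LinearMap.sum_apply, LinearMap.smul_apply]
  congr!

lemma avg_mem (x : V) : avg ρ U lam x ∈ eig ρ U lam := by
  have := Fintype.ofFinite U
  intro v
  rw [avg_apply, map_sum, Finset.smul_sum]
  rw [← Equiv.sum_comp (Equiv.mulLeft v) (fun u : U => (lam v : ℂ) • (lam u⁻¹ : ℂ) • ρ u x)]
  refine Finset.sum_congr rfl fun u _ => ?_
  rw [map_smul, Equiv.coe_mulLeft, smul_smul, Subgroup.coe_mul, map_mul ρ, Module.End.mul_apply]
  congr 1
  rw [_root_.mul_inv_rev, map_mul, Units.val_mul, mul_left_comm, ← Units.val_mul, ← map_mul,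
    mul_inv_cancel, map_one, Units.val_one, mul_one]

lemma avg_rho (v : U) (x : V) : avg ρ U lam (ρ v x) = (lam v : ℂ) • avg ρ U lam x := by
  have := Fintype.ofFinite U
  rw [avg_apply, avg_apply, Finset.smul_sum]
  rw [← Equiv.sum_comp (Equiv.mulRight v) (fun u : U => (lam v : ℂ) • (lam u⁻¹ : ℂ) • ρ u x)]
  refine Finset.sum_congr rfl fun u _ => ?_
  rw [Equiv.coe_mulRight, smul_smul, Subgroup.coe_mul, map_mul ρ, Module.End.mul_apply]
  congr 1
  rw [_root_.mul_inv_rev, map_mul, Units.val_mul, ← mul_assoc, ← Units.val_mul, ← map_mul,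
    mul_inv_cancel, map_one, Units.val_one, one_mul]

lemma avg_of_mem (x : V) (hx : x ∈ eig ρ U lam) : avg ρ U lam x = (Nat.card U : ℂ) • x := by
  have := Fintype.ofFinite U
  rw [avg_apply, Finset.sum_congr rfl (g := fun _ => x)]
  · rw [Finset.sum_const, Finset.card_univ, Nat.card_eq_fintype_card, Nat.cast_smul_eq_nsmul]
  · intro u _
    rw [hx u, smul_smul, ← Units.val_mul, ← map_mul, inv_mul_cancel, map_one, Units.val_one,
      one_smul]

lemma card_ne : (Nat.card U : ℂ) ≠ 0 := by exact_mod_cast Nat.card_pos.ne'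

lemma eig_eq_zero_of_avg (x : V) (hx : x ∈ eig ρ U lam) (h : avg ρ U lam x = 0) : x = 0 := by
  rw [avg_of_mem _ _ _ _ hx] at h
  exact (smul_eq_zero.1 h).resolve_left (card_ne U)

end avg

section generic
variable {n : ℕ} {F : Type} [Field F] [Finite F]

/-- The generic character of the unitriangular group. -/
noncomputable def psi (e : Multiplicative F →* ℂˣ) : UU n F →* ℂˣ where
  toFun u := e (Multiplicative.ofAdd (sd u.1))
  map_one' := by
    have : sd (1 : GL (Fin n) F) = 0 := by
      have := sd_mul (1 : GL (Fin n) F) 1 (one_mem _) (one_mem _)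
      simpa using this
    show e (Multiplicative.ofAdd (sd (1 : GL (Fin n) F))) = 1
    rw [this]; simp
  map_mul' := by
    intro x y
    rw [Subgroup.coe_mul, sd_mul _ _ x.2 y.2, ofAdd_add, map_mul]

variable {V : Type} [AddCommGroup V] [Module ℂ V] (ρ : Representation ℂ (GL (Fin n) F) V)

lemma avg_psi_w (e : Multiplicative F →* ℂˣ) (he : e ≠ 1) (v : V)
    (hv : ∀ u ∈ UU n F, ρ u v = v) (w : Equiv.Perm (Fin n)) (hw : w ≠ w0) :
    avg ρ (UU n F) (psi e) (ρ (pm w) v) = 0 := by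
  obtain ⟨i, j, hij, hlt⟩ := exists_ascent w hw
  obtain ⟨t, ht⟩ : ∃ t, e t ≠ 1 := by
    by_contra hcon
    push Not at hcon
    exact he (MonoidHom.ext hcon)
  have hij' : i < j := by rw [Fin.lt_def]; omega
  have hx := xx_mem (F := F) i j hij' t.toAdd
  have h1 := avg_rho ρ (UU n F) (psi e) ⟨_, hx⟩ (ρ (pm w) v)
  have h2 : ρ (xx i j hij'.ne t.toAdd) (ρ (pm w) v) = ρ (pm w) v := by
    rw [← Module.End.mul_apply, ← map_mul]
    have h3 := pm_conj_xx w i j hij'.ne t.toAdd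
    have h4 : xx i j hij'.ne t.toAdd * pm w = pm w * xx (w⁻¹ i) (w⁻¹ j) hlt.ne t.toAdd := by
      rw [← h3, ← mul_assoc, ← mul_assoc, ← map_mul, mul_inv_cancel, map_one, one_mul]
    rw [h4, map_mul, Module.End.mul_apply, hv _ (xx_mem _ _ hlt _)]
  have h5 : psi e ⟨_, hx⟩ = e t := by
    show e (Multiplicative.ofAdd (sd (xx i j hij'.ne t.toAdd))) = e t
    rw [sd_xx i j hij]; simp
  simp only [h2, h5] at h1
  by_contra h0
  apply ht
  have h6 : ((e t : ℂ) - 1) • avg ρ (UU n F) (psi e) (ρ (pm w) v) = 0 := by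
    rw [sub_smul, one_smul, ← h1, sub_self]
  have := (smul_eq_zero.1 h6).resolve_right h0
  exact Units.ext (by simpa using sub_eq_zero.1 this)

lemma avg_psi_span (e : Multiplicative F →* ℂˣ) (he : e ≠ 1) (v : V)
    (hv : ∀ u ∈ UU n F, ρ u v = v) (hB : ∀ b ∈ BB n F, ∃ c : ℂ, ρ b v = c • v)
    (hspan : ⊤ ≤ Submodule.span ℂ (Set.range fun g => ρ g v)) (x : V) :
    avg ρ (UU n F) (psi e) x ∈ Submodule.span ℂ {avg ρ (UU n F) (psi e) (ρ (pm w0) v)} := by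
  have hx : x ∈ Submodule.span ℂ (Set.range fun g => ρ g v) := hspan trivial
  induction hx using Submodule.span_induction with
  | mem x hx =>
    obtain ⟨g, rfl⟩ := hx
    obtain ⟨u, hu, w, b, hb, rfl⟩ := bruhat g
    obtain ⟨c, hc⟩ := hB b hb
    simp only [map_mul, Module.End.mul_apply, hc, map_smul]
    refine Submodule.smul_mem _ _ ?_
    rw [avg_rho ρ (UU n F) (psi e) ⟨u, hu⟩]
    refine Submodule.smul_mem _ _ ?_
    by_cases hw : w = w0
    · subst hw; exact Submodule.mem_span_singleton_self _
    · rw [avg_psi_w ρ e he v hv w hw]; exact Submodule.zero_mem _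
  | zero => simp
  | add x y _ _ hx hy => rw [map_add]; exact Submodule.add_mem _ hx hy
  | smul c x _ hx => rw [map_smul]; exact Submodule.smul_mem _ _ hx

lemma finrank_psi_le [FiniteDimensional ℂ V] (e : Multiplicative F →* ℂˣ) (he : e ≠ 1) (v : V)
    (hv : ∀ u ∈ UU n F, ρ u v = v) (hB : ∀ b ∈ BB n F, ∃ c : ℂ, ρ b v = c • v)
    (hspan : ⊤ ≤ Submodule.span ℂ (Set.range fun g => ρ g v)) :
    Module.finrank ℂ (eig ρ (UU n F) (psi e)) ≤ 1 := by
  have h : eig ρ (UU n F) (psi e) ≤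
      Submodule.span ℂ {avg ρ (UU n F) (psi e) (ρ (pm w0) v)} := by
    intro x hx
    have h1 := avg_psi_span ρ e he v hv hB hspan x
    rw [avg_of_mem _ _ _ _ hx] at h1
    have := Submodule.smul_mem _ (Nat.card (UU n F) : ℂ)⁻¹ h1
    rwa [smul_smul, inv_mul_cancel₀ (card_ne _), one_smul] at this
  exact (Submodule.finrank_mono h).trans ((finrank_span_le_card _).trans (by simp))

end generic
end GLSt

open Matrix

namespace GLSt
set_option linter.unusedSectionVars false

section uniq
variable {n : ℕ} {F : Type} [Field F] [Finite F]
variable {V : Type} [AddCommGroup V] [Module ℂ V] (ρ : Representation ℂ (GL (Fin n) F) V)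

lemma span_top_of_irr {G : Type} [Group G] (ρ : Representation ℂ G V) (h : Irr ρ) (v : V)
    (hv : v ≠ 0) : ⊤ ≤ Submodule.span ℂ (Set.range fun g => ρ g v) := by
  rcases h.2 (Submodule.span ℂ (Set.range fun g => ρ g v)) (by
    intro g x hx
    induction hx using Submodule.span_induction with
    | mem x hx =>
      obtain ⟨k, rfl⟩ := hx
      refine Submodule.subset_span ⟨g * k, ?_⟩
      simp
    | zero => simp
    | add x y _ _ hx hy => rw [map_add]; exact Submodule.add_mem _ hx hy
    | smul c x _ hx => rw [map_smul]; exact Submodule.smul_mem _ _ hx) with h1 | h1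
  · exfalso; apply hv
    have : v ∈ Submodule.span ℂ (Set.range fun g => ρ g v) := Submodule.subset_span ⟨1, by simp⟩
    rwa [h1, Submodule.mem_bot] at this
  · exact h1.ge

lemma mem_eig_one (x : V) : x ∈ eig ρ (UU n F) 1 ↔ ∀ u ∈ UU n F, ρ u x = x := by
  change (∀ u : UU n F, ρ u x = (((1 : UU n F →* ℂˣ) u : ℂˣ) : ℂ) • x) ↔ _
  simp

lemma rho_mul {G : Type} [Group G] (ρ : Representation ℂ G V) (a b : G) (x : V) :
    ρ (a * b) x = ρ a (ρ b x) := by rw [map_mul]; rfl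

lemma exists_B_eigen [FiniteDimensional ℂ V] (h : eig ρ (UU n F) 1 ≠ ⊥) :
    ∃ v : V, v ≠ 0 ∧ (∀ u ∈ UU n F, ρ u v = v) ∧ ∀ d, ∃ c : ℂ, ρ (dg d) v = c • v := by
  let S : Set (Submodule ℂ V) := {W | W ≠ ⊥ ∧ W ≤ eig ρ (UU n F) 1 ∧ ∀ d, ∀ x ∈ W, ρ (dg d) x ∈ W}
  have hS : S.Nonempty := by
    refine ⟨eig ρ (UU n F) 1, h, le_rfl, ?_⟩
    intro d x hx
    rw [mem_eig_one] at hx ⊢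
    intro u hu
    have h1 := dg_conj_mem d⁻¹ u hu
    have h2 : u * dg d = dg d * (dg d⁻¹ * u * (dg d⁻¹)⁻¹) := by
      rw [map_inv]; group
    rw [← rho_mul, h2, rho_mul, hx _ h1]
  obtain ⟨W, hW, hmin⟩ := WellFounded.has_min (wellFounded_lt (α := Submodule ℂ V)) S hS
  obtain ⟨hW1, hW2, hW3⟩ := hW
  obtain ⟨v, hv, hv0⟩ := Submodule.exists_mem_ne_zero_of_ne_bot hW1
  refine ⟨v, hv0, fun u hu => (mem_eig_one ρ v).1 (hW2 hv) u hu, fun d => ?_⟩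
  have : Nontrivial W := Submodule.nontrivial_iff_ne_bot.2 hW1
  obtain ⟨c, hc⟩ := Module.End.exists_eigenvalue ((ρ (dg d)).restrict (hW3 d))
  obtain ⟨x, hx, hx0⟩ := hc.exists_hasEigenvector
  have hxe : ρ (dg d) x = c • (x : V) := by
    have := Module.End.mem_eigenspace_iff.1 hx
    exact congrArg Subtype.val this
  let W' := W ⊓ Module.End.eigenspace (ρ (dg d)) c
  have hW' : W' ∈ S := by
    refine ⟨?_, inf_le_left.trans hW2, ?_⟩
    · intro hb
      have : (x : V) ∈ W' := ⟨x.2, Module.End.mem_eigenspace_iff.2 hxe⟩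
      rw [hb, Submodule.mem_bot] at this
      exact hx0 (Subtype.ext this)
    · rintro d' y ⟨hy1, hy2⟩
      refine ⟨hW3 d' y hy1, ?_⟩
      rw [SetLike.mem_coe, Module.End.mem_eigenspace_iff] at hy2 ⊢
      rw [← rho_mul, ← map_mul, mul_comm, map_mul, rho_mul, hy2, map_smul]
  have h3 : W' = W := by
    by_contra hne
    exact hmin W' hW' (lt_of_le_of_ne inf_le_left hne)
  have h4 : v ∈ W' := by rw [h3]; exact hv
  exact ⟨c, Module.End.mem_eigenspace_iff.1 h4.2⟩

lemma avg_one_dg (d : Fin n → Fˣ) (x : V) :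
    ρ (dg d) (avg ρ (UU n F) 1 x) = avg ρ (UU n F) 1 (ρ (dg d) x) := by
  have := Fintype.ofFinite (UU n F)
  rw [avg_apply, avg_apply, map_sum]
  let f : UU n F → UU n F := fun u => ⟨dg d * u * (dg d)⁻¹, dg_conj_mem d u u.2⟩
  have hf : Function.Injective f := by
    intro a b hab
    have := congrArg Subtype.val hab
    simp only [f, mul_left_inj, mul_right_inj] at this
    exact Subtype.ext this
  refine Fintype.sum_bijective f (Finite.injective_iff_bijective.1 hf) _ _ fun u => ?_
  simp only [MonoidHom.one_apply, Units.val_one, one_smul, f]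
  rw [← rho_mul, ← rho_mul]
  congr 2
  group

lemma avg_swap_ne (i j : Fin n) (hij : (i : ℕ) + 1 = j) (v : V) (hv0 : v ≠ 0)
    (hv : ∀ u ∈ UU n F, ρ u v = v) (hT : ∀ d, ∃ c : ℂ, ρ (dg d) v = c • v) :
    avg ρ (UU n F) 1 (ρ (pm (Equiv.swap i j)) v) ≠ 0 := by
  classical
  intro h0
  have : Fintype F := Fintype.ofFinite F
  have hlt : i < j := by rw [Fin.lt_def]; omega
  let s : GL (Fin n) F := pm (Equiv.swap i j)
  let x : F → GL (Fin n) F := xx i j hlt.ne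
  have hx : ∀ t, x t ∈ UU n F := fun t => xx_mem i j hlt t
  have hss : s * s = 1 := swap_mul_self i j
  let Y : V := ∑ t : F, ρ (x t) (ρ s v)
  have havg : ∀ t, avg ρ (UU n F) 1 (ρ (x t) (ρ s v)) = 0 := by
    intro t
    rw [avg_rho ρ (UU n F) 1 ⟨x t, hx t⟩]
    show _ • avg ρ (UU n F) 1 (ρ (pm (Equiv.swap i j)) v) = 0
    rw [h0, smul_zero]
  have hxij : ∀ t, x t i j = t := by
    intro t; simp only [x]; rw [xx_apply]; simp [hlt.ne]
  have hY : Y ∈ eig ρ (UU n F) 1 := by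
    rw [mem_eig_one]
    intro u hu
    simp only [Y, map_sum]
    refine Fintype.sum_equiv (Equiv.addRight (u i j)) _ _ fun t => ?_
    rw [Equiv.coe_addRight]
    set k := (x (t + u i j))⁻¹ * (u * x t) with hk
    have hkU : k ∈ UU n F := mul_mem (inv_mem (hx _)) (mul_mem hu (hx _))
    have hk0 : k i j = 0 := by
      have e : (x (t + u i j))⁻¹ = x (-(t + u i j)) := xx_inv i j hlt.ne _
      rw [hk, e, UU_mul_adj _ _ (hx _) (mul_mem hu (hx _)) i j hij,
        UU_mul_adj _ _ hu (hx _) i j hij, hxij, hxij]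
      ring
    have hks := swap_conj_mem k hkU i j hij hk0
    have e1 : u * x t = x (t + u i j) * k := by rw [hk]; group
    have e2 : k * s = s * (s * k * s) := by
      rw [← mul_assoc, ← mul_assoc, hss, one_mul]
    rw [← rho_mul, e1, rho_mul, ← rho_mul ρ k, e2, rho_mul, hv _ hks]
  have hY0 : Y = 0 := by
    apply eig_eq_zero_of_avg ρ _ _ _ hY
    simp only [Y, map_sum, havg, Finset.sum_const_zero]
  have h1 : avg ρ (UU n F) 1 (ρ s Y) = 0 := by rw [hY0, map_zero, map_zero]
  simp only [Y, map_sum] at h1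
  rw [Finset.sum_eq_single (0 : F)] at h1
  · apply hv0
    apply eig_eq_zero_of_avg ρ _ _ _ ((mem_eig_one ρ v).2 hv)
    have : x 0 = 1 := xx_zero i j hlt.ne
    rwa [this, map_one, Module.End.one_apply, ← rho_mul, hss, map_one, Module.End.one_apply] at h1
  · intro t _ ht
    have hr := rank_one_rel i j hlt.ne (Units.mk0 t ht)
    obtain ⟨c, hc⟩ := hT (hh i j (Units.mk0 t ht) ∘ (Equiv.swap i j))
    have e1 : s * (x t * s) = x ↑(Units.mk0 t ht)⁻¹ * (dg (hh i j (Units.mk0 t ht)) * s) * x ↑(Units.mk0 t ht)⁻¹ := by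
      rw [← mul_assoc, ← mul_assoc]; exact hr
    rw [← rho_mul, ← rho_mul, mul_assoc, e1, rho_mul, hv _ (hx _), rho_mul, dg_mul_pm, rho_mul, hc,
      map_smul, map_smul, map_smul, havg, smul_zero]
  · intro h; exact absurd (Finset.mem_univ _) h

lemma exists_alpha (ℓ : ℕ) [Fact ℓ.Prime] (n : ℕ) (hn : 1 ≤ n) {V : Type} [AddCommGroup V]
    [Module ℂ V] [FiniteDimensional ℂ V] (ρ : Representation ℂ (GL (Fin n) (ZMod ℓ)) V) (h : Irr ρ)
    (hd : padicValNat ℓ (Module.finrank ℂ V) = padicValNat ℓ (Nat.card (GL (Fin n) (ZMod ℓ))))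
    (e : Multiplicative (ZMod ℓ) →* ℂˣ) (he : e ≠ 1) :
    eig ρ (UU n (ZMod ℓ)) (psi e) ≠ ⊥ ∧ ∃ (α : (ZMod ℓ)ˣ →* ℂˣ) (v : V), v ≠ 0 ∧
      ∀ b ∈ BB n (ZMod ℓ), ρ b v = (α b.det : ℂ) • v := by
  have hU := UU_isPGroup ℓ n
  refine ⟨(defect_zero_eig ℓ ρ h hd _ hU (psi e) 1).1, ?_⟩
  obtain ⟨h1, h2⟩ := defect_zero_eig ℓ ρ h hd _ hU 1 (psi e)
  obtain ⟨v, hv0, hv, hT⟩ := exists_B_eigen ρ h1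
  have hB : ∀ b ∈ BB n (ZMod ℓ), ∃ c : ℂ, ρ b v = c • v := by
    intro b hb
    obtain ⟨d, u, hu, rfl⟩ := BB_decomp b hb
    obtain ⟨c, hc⟩ := hT d
    exact ⟨c, by rw [rho_mul, hv u hu, hc]⟩
  have h3 := h2.trans (finrank_psi_le ρ e he v hv hB (span_top_of_irr ρ h v hv0))
  have hvU : v ∈ eig ρ (UU n (ZMod ℓ)) 1 := (mem_eig_one ρ v).2 hv
  have hone : ∀ y ∈ eig ρ (UU n (ZMod ℓ)) 1, ∃ c : ℂ, y = c • v := by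
    intro y hy
    have h4 := finrank_le_one_iff.1 h3
    obtain ⟨z, hz⟩ := h4
    obtain ⟨a, ha⟩ := hz ⟨v, hvU⟩
    obtain ⟨b, hb⟩ := hz ⟨y, hy⟩
    have ha' : a • (z : V) = v := congrArg Subtype.val ha
    have hb' : b • (z : V) = y := congrArg Subtype.val hb
    have ha0 : a ≠ 0 := by rintro rfl; apply hv0; rw [← ha', zero_smul]
    refine ⟨b * a⁻¹, ?_⟩
    rw [← hb', ← ha', smul_smul, mul_assoc, inv_mul_cancel₀ ha0, mul_one]
  choose θ hθ using hT
  have hcancel : ∀ a b : ℂ, a • v = b • v → a = b := fun a b hab => smul_left_injective ℂ hv0 hab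
  let Θ : (Fin n → (ZMod ℓ)ˣ) →* ℂˣ := MonoidHom.toHomUnits
    { toFun := θ
      map_one' := by apply hcancel; rw [← hθ, map_one, map_one, one_smul]; rfl
      map_mul' := by
        intro a b; apply hcancel
        rw [← hθ, map_mul, rho_mul, hθ b, map_smul, hθ a, smul_smul, mul_comm] }
  have hΘ : ∀ d, (Θ d : ℂ) = θ d := fun d => rfl
  have hsw : ∀ i j : Fin n, (i : ℕ) + 1 = j → ∀ d, Θ (d ∘ Equiv.swap i j) = Θ d := by
    intro i j hij d
    have hne := avg_swap_ne ρ i j hij v hv0 hv (fun d => ⟨_, hθ d⟩)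
    have h5 := avg_one_dg ρ d (ρ (pm (Equiv.swap i j)) v)
    rw [← rho_mul, dg_mul_pm, rho_mul, hθ, map_smul, map_smul] at h5
    obtain ⟨c, hc⟩ := hone _ (avg_mem ρ (UU n (ZMod ℓ)) 1 (ρ (pm (Equiv.swap i j)) v))
    have h6 : ρ (dg d) (avg ρ (UU n (ZMod ℓ)) 1 (ρ (pm (Equiv.swap i j)) v)) =
        θ d • avg ρ (UU n (ZMod ℓ)) 1 (ρ (pm (Equiv.swap i j)) v) := by
      rw [hc, map_smul, hθ, smul_comm]
    rw [h6] at h5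
    apply Units.ext
    rw [hΘ, hΘ]
    exact (smul_left_injective ℂ hne h5).symm
  have hsing : ∀ (k : ℕ) (hk : k < n) (a : (ZMod ℓ)ˣ),
      Θ (Pi.mulSingle ⟨k, hk⟩ a) = Θ (Pi.mulSingle ⟨0, hn⟩ a) := by
    intro k
    induction k with
    | zero => intro hk a; rfl
    | succ k ih =>
      intro hk a
      rw [← ih (by omega) a, ← hsw ⟨k, by omega⟩ ⟨k + 1, hk⟩ rfl]
      congr 1
      ext i
      simp only [Function.comp_apply, Pi.mulSingle_apply]
      by_cases h1 : i = ⟨k, by omega⟩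
      · subst h1; simp
      · by_cases h2 : i = ⟨k + 1, hk⟩
        · subst h2; simp
        · rw [Equiv.swap_apply_of_ne_of_ne h1 h2, if_neg h1, if_neg h2]
  let α : (ZMod ℓ)ˣ →* ℂˣ := Θ.comp (MonoidHom.mulSingle (fun _ : Fin n => (ZMod ℓ)ˣ) ⟨0, hn⟩)
  have hα : ∀ d, Θ d = α (∏ i, d i) := by
    intro d
    conv_lhs => rw [← Finset.univ_prod_mulSingle d]
    rw [map_prod, map_prod]
    exact Finset.prod_congr rfl fun i _ => hsing i i.2 (d i)
  refine ⟨α, v, hv0, ?_⟩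
  intro b hb
  obtain ⟨d, u, hu, rfl⟩ := BB_decomp b hb
  rw [rho_mul, hv u hu, hθ, map_mul, det_UU u hu, mul_one, det_dg, ← hα, hΘ]

end uniq
end GLSt

open Matrix

namespace GLSt
set_option linter.unusedSectionVars false

section steinberg
variable {n : ℕ} {F : Type} [Field F] [Finite F]

variable (n F) in
/-- The permutation module on cosets of the Borel subgroup. -/
abbrev MM : Type := (GL (Fin n) F ⧸ BB n F) → ℂ

/-- The permutation representation. -/
noncomputable def pr : Representation ℂ (GL (Fin n) F) (MM n F) where
  toFun g := LinearMap.funLeft ℂ ℂ (fun p => g⁻¹ • p)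
  map_one' := by ext x p; simp
  map_mul' := by
    intro a b
    refine LinearMap.ext fun x => funext fun p => ?_
    simp only [Module.End.mul_apply, LinearMap.funLeft_apply]
    rw [smul_smul, _root_.mul_inv_rev]

lemma pr_apply (g : GL (Fin n) F) (x : MM n F) (p : GL (Fin n) F ⧸ BB n F) :
    pr g x p = x (g⁻¹ • p) := rfl

open Classical in
/-- The basis vector of a coset. -/
noncomputable def cell (g : GL (Fin n) F) : MM n F := Pi.single (QuotientGroup.mk g) 1

open Classical in
lemma cell_apply (g : GL (Fin n) F) (p : GL (Fin n) F ⧸ BB n F) :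
    cell g p = if p = QuotientGroup.mk g then 1 else 0 := by
  rw [cell, Pi.single_apply]

lemma pr_cell (g h : GL (Fin n) F) : pr g (cell h) = cell (g * h) := by
  classical
  ext p
  rw [pr_apply, cell_apply, cell_apply]
  congr 1
  rw [inv_smul_eq_iff]; rfl

lemma cell_mul (g b : GL (Fin n) F) (hb : b ∈ BB n F) : cell (g * b) = cell g := by
  unfold cell
  rw [QuotientGroup.mk_mul_of_mem _ hb]

lemma cell_span : ⊤ ≤ Submodule.span ℂ (Set.range fun g => pr (n := n) (F := F) g (cell 1)) := by
  classical
  have : Fintype (GL (Fin n) F ⧸ BB n F) := Fintype.ofFinite _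
  rw [← (Pi.basisFun ℂ (GL (Fin n) F ⧸ BB n F)).span_eq, Submodule.span_le]
  rintro _ ⟨p, rfl⟩
  refine Submodule.subset_span ⟨p.out, ?_⟩
  simp only [pr_cell, mul_one]
  simp only [cell, QuotientGroup.out_eq', Pi.basisFun_apply]

/-- sign of a permutation as a complex number -/
noncomputable def sg (w : Equiv.Perm (Fin n)) : ℂ := ((Equiv.Perm.sign w : ℤ) : ℂ)

lemma sg_swap (i j : Fin n) (h : i ≠ j) (w : Equiv.Perm (Fin n)) :
    sg (Equiv.swap i j * w) = - sg w := by
  simp [sg, Equiv.Perm.sign_swap h]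

lemma sg_ne (w : Equiv.Perm (Fin n)) : sg w ≠ 0 := by
  simp [sg]

variable (n F) in
/-- Steinberg's vector. -/
noncomputable def ff : MM n F := ∑ w : Equiv.Perm (Fin n), sg w • cell (pm w)

/-- Half of Steinberg's vector. -/
noncomputable def fh (i j : Fin n) : MM n F :=
  ∑ w : Equiv.Perm (Fin n), if w⁻¹ i < w⁻¹ j then sg w • cell (pm w) else 0

lemma cell_dg (d : Fin n → Fˣ) (w : Equiv.Perm (Fin n)) :
    pr (dg d) (cell (pm w)) = cell (pm w) := by
  rw [pr_cell, dg_mul_pm, cell_mul _ _ (dg_mem _)]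

lemma ff_dg (d : Fin n → Fˣ) : pr (dg d) (ff n F) = ff n F := by
  simp only [ff, map_sum, map_smul, cell_dg]

lemma fh_dg (d : Fin n → Fˣ) (i j : Fin n) : pr (dg d) (fh i j : MM n F) = fh i j := by
  simp only [fh, map_sum]
  refine Finset.sum_congr rfl fun w _ => ?_
  split_ifs
  · rw [map_smul, cell_dg]
  · simp

lemma fh_xx (i j : Fin n) (h : i ≠ j) (t : F) : pr (xx i j h t) (fh i j : MM n F) = fh i j := by
  simp only [fh, map_sum]
  refine Finset.sum_congr rfl fun w _ => ?_
  split_ifs with hlt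
  · rw [map_smul, pr_cell]
    have h4 : xx i j h t * pm w = pm w * xx (w⁻¹ i) (w⁻¹ j) hlt.ne t := by
      rw [← pm_conj_xx w i j h t, ← mul_assoc, ← mul_assoc, ← map_mul, mul_inv_cancel, map_one, one_mul]
    rw [h4, cell_mul _ _ (UU_le_BB (xx_mem _ _ hlt _))]
  · simp

lemma ff_swap (i j : Fin n) (h : i ≠ j) : pr (pm (Equiv.swap i j)) (ff n F) = - ff n F := by
  simp only [ff, map_sum, map_smul, pr_cell, ← map_mul]
  rw [← Finset.sum_neg_distrib]
  refine Fintype.sum_equiv (Equiv.mulLeft (Equiv.swap i j)) _ _ fun w => ?_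
  rw [Equiv.coe_mulLeft, sg_swap i j h, neg_smul, neg_neg]

lemma ff_eq (i j : Fin n) (h : i ≠ j) :
    ff n F = fh i j - pr (pm (Equiv.swap i j)) (fh i j) := by
  have e : pr (pm (Equiv.swap i j)) (fh i j : MM n F) =
      - ∑ w : Equiv.Perm (Fin n), if w⁻¹ i < w⁻¹ j then 0 else sg w • cell (pm w) := by
    simp only [fh, map_sum]
    rw [← Finset.sum_neg_distrib]
    refine Fintype.sum_equiv (Equiv.mulLeft (Equiv.swap i j)) _ _ fun w => ?_
    rw [Equiv.coe_mulLeft, sg_swap i j h, _root_.mul_inv_rev, Equiv.Perm.mul_apply,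
      Equiv.Perm.mul_apply, Equiv.swap_inv, Equiv.swap_apply_left, Equiv.swap_apply_right]
    have hne : w⁻¹ i ≠ w⁻¹ j := fun e => h (w⁻¹.injective e)
    by_cases hlt : w⁻¹ i < w⁻¹ j
    · rw [if_pos hlt, if_neg (not_lt_of_gt hlt), map_smul, pr_cell, ← map_mul]; simp
    · rw [if_neg hlt, if_pos (lt_of_le_of_ne (not_lt.1 hlt) hne.symm)]; simp
  rw [e, sub_neg_eq_add, fh, ← Finset.sum_add_distrib, ff]
  refine Finset.sum_congr rfl fun w _ => ?_
  split_ifs <;> simp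

lemma ff_rel (i j : Fin n) (h : i ≠ j) (t : Fˣ) :
    pr (pm (Equiv.swap i j)) (pr (xx i j h (t : F)) (ff n F)) =
      pr (xx i j h ((t⁻¹ : Fˣ) : F)) (ff n F) - ff n F := by
  have hr := rank_one_rel i j h t
  rw [ff_eq i j h]
  simp only [map_sub, fh_xx]
  rw [← rho_mul pr (xx i j h (t : F)), ← rho_mul pr (pm _) (xx i j h (t : F) * _), ← mul_assoc, hr]
  rw [rho_mul, fh_xx, mul_assoc, dg_mul_pm, rho_mul, rho_mul, fh_dg]
  abel

variable (n F) in
/-- The Steinberg module. -/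
noncomputable def V0 : Submodule ℂ (MM n F) :=
  Submodule.span ℂ (Set.range fun u : UU n F => pr (u : GL (Fin n) F) (ff n F))

lemma mem_V0 (u : GL (Fin n) F) (hu : u ∈ UU n F) : pr u (ff n F) ∈ V0 n F :=
  Submodule.subset_span ⟨⟨u, hu⟩, rfl⟩

lemma ff_mem : ff n F ∈ V0 n F := by
  have := mem_V0 (1 : GL (Fin n) F) (one_mem _)
  simpa using this

lemma V0_stable_of (g : GL (Fin n) F) (hg : ∀ u ∈ UU n F, pr g (pr u (ff n F)) ∈ V0 n F) :
    ∀ x ∈ V0 n F, pr g x ∈ V0 n F := by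
  intro x hx
  induction hx using Submodule.span_induction with
  | mem x hx => obtain ⟨u, rfl⟩ := hx; exact hg u u.2
  | zero => simp
  | add x y _ _ hx hy => rw [map_add]; exact Submodule.add_mem _ hx hy
  | smul c x _ hx => rw [map_smul]; exact Submodule.smul_mem _ _ hx

lemma V0_stable (g : GL (Fin n) F) : ∀ x ∈ V0 n F, pr g x ∈ V0 n F := by
  classical
  let H : Submonoid (GL (Fin n) F) :=
    { carrier := {g | ∀ x ∈ V0 n F, pr g x ∈ V0 n F}
      one_mem' := by intro x hx; simpa using hx
      mul_mem' := by intro a b ha hb x hx; rw [rho_mul]; exact ha _ (hb _ hx) }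
  have hUst : ∀ u ∈ UU n F, u ∈ H := by
    intro u hu
    apply V0_stable_of
    intro v hv
    rw [← rho_mul]; exact mem_V0 _ (mul_mem hu hv)
  refine generation H hUst ?_ ?_ g
  · intro d
    apply V0_stable_of
    intro u hu
    have e : dg d * u = (dg d * u * (dg d)⁻¹) * dg d := by group
    rw [← rho_mul, e, rho_mul, ff_dg]
    exact mem_V0 _ (dg_conj_mem d u hu)
  · intro i j hij
    have hlt : i < j := by rw [Fin.lt_def]; omega
    apply V0_stable_of
    intro u hu
    set c := u i j
    let x : F → GL (Fin n) F := xx i j hlt.ne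
    have hx : ∀ t, x t ∈ UU n F := fun t => xx_mem i j hlt t
    have hxij : ∀ t, x t i j = t := by
      intro t; simp only [x]; rw [xx_apply]; simp [hlt.ne]
    let k := u * x (-c)
    have hk : k ∈ UU n F := mul_mem hu (hx _)
    have hk0 : k i j = 0 := by
      simp only [k]
      rw [UU_mul_adj _ _ hu (hx _) i j hij, hxij]
      show c + -c = 0
      ring
    have hks := swap_conj_mem k hk i j hij hk0
    have e0 : x (-c) * x c = 1 := by
      have e : (x c)⁻¹ = x (-c) := xx_inv i j hlt.ne _
      rw [← e, inv_mul_cancel]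
    have e1 : pm (Equiv.swap i j) * u = (pm (Equiv.swap i j) * k * pm (Equiv.swap i j)) *
        (pm (Equiv.swap i j) * x c) := by
      have e2 : u = k * x c := by simp only [k]; rw [mul_assoc, e0, mul_one]
      conv_lhs => rw [e2]
      have e3 := swap_mul_self (F := F) i j
      simp only [mul_assoc]
      rw [← mul_assoc (pm (Equiv.swap i j)) (pm (Equiv.swap i j)), e3, one_mul]
    rw [← rho_mul, e1, rho_mul]
    apply hUst _ hks
    by_cases hc : c = 0
    · have : x c = 1 := by rw [hc]; exact xx_zero i j hlt.ne
      rw [this, mul_one, ff_swap i j hlt.ne]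
      exact Submodule.neg_mem _ ff_mem
    · have := ff_rel (F := F) i j hlt.ne (Units.mk0 c hc)
      rw [rho_mul]
      rw [Units.val_mk0] at this
      rw [this]
      exact Submodule.sub_mem _ (mem_V0 _ (hx _)) ff_mem

open Classical in
lemma ff_coeff (u v : UU n F) :
    pr (u : GL (Fin n) F) (ff n F) (QuotientGroup.mk ((v : GL (Fin n) F) * pm w0)) =
      if u = v then sg (n := n) w0 else 0 := by
  classical
  simp only [ff, map_sum, map_smul, pr_cell, Finset.sum_apply, Pi.smul_apply, cell_apply]
  have key : ∀ w : Equiv.Perm (Fin n), (QuotientGroup.mk ((v : GL (Fin n) F) * pm w0) :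
      GL (Fin n) F ⧸ BB n F) = QuotientGroup.mk ((u : GL (Fin n) F) * pm w) → w = w0 ∧ u = v := by
    intro w e
    rw [QuotientGroup.eq] at e
    have h := big_cell ((v : GL (Fin n) F)⁻¹ * (u : GL (Fin n) F)) (mul_mem (inv_mem v.2) u.2) w (by
      convert e using 1; group)
    refine ⟨h.1, ?_⟩
    exact Subtype.ext (inv_mul_eq_one.1 h.2).symm
  by_cases huv : u = v
  · subst huv
    rw [if_pos rfl, Finset.sum_eq_single w0]
    · simp
    · intro w _ hw
      rw [if_neg (fun e => hw (key w e).1), smul_zero]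
    · intro h; exact absurd (Finset.mem_univ _) h
  · rw [if_neg huv]
    refine Finset.sum_eq_zero fun w _ => ?_
    rw [if_neg (fun e => huv (key w e).2), smul_zero]

lemma ff_linind : LinearIndependent ℂ (fun u : UU n F => pr (u : GL (Fin n) F) (ff n F)) := by
  classical
  have := Fintype.ofFinite (UU n F)
  rw [Fintype.linearIndependent_iff]
  intro c hc v
  have h := congrFun hc (QuotientGroup.mk ((v : GL (Fin n) F) * pm w0))
  simp only [Finset.sum_apply, Pi.smul_apply, ff_coeff] at h
  simpa [sg_ne] using h

lemma finrank_V0 : Module.finrank ℂ (V0 n F) = Nat.card (UU n F) := by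
  have := Fintype.ofFinite (UU n F)
  rw [V0, finrank_span_eq_card ff_linind, Nat.card_eq_fintype_card]

lemma avg_ff_ne (lam : UU n F →* ℂˣ) : avg pr (UU n F) lam (ff n F) ≠ 0 := by
  have := Fintype.ofFinite (UU n F)
  intro h
  rw [avg_apply] at h
  have := Fintype.linearIndependent_iff.1 (ff_linind (n := n) (F := F)) (fun u => (lam u⁻¹ : ℂ)) h 1
  simp at this

lemma avg_one_V0 (x : MM n F) (hx : x ∈ V0 n F) :
    avg pr (UU n F) 1 x ∈ Submodule.span ℂ {avg pr (UU n F) 1 (ff n F)} := by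
  induction hx using Submodule.span_induction with
  | mem x hx =>
    obtain ⟨u, rfl⟩ := hx
    simp only
    rw [avg_rho]
    exact Submodule.smul_mem _ _ (Submodule.mem_span_singleton_self _)
  | zero => simp
  | add x y _ _ hx hy => rw [map_add]; exact Submodule.add_mem _ hx hy
  | smul c x _ hx => rw [map_smul]; exact Submodule.smul_mem _ _ hx

lemma avg_stable {G V : Type} [Group G] [Finite G] [AddCommGroup V] [Module ℂ V]
    (ρ : Representation ℂ G V) (U : Subgroup G) (lam : U →* ℂˣ) (W : Submodule ℂ V)
    (hW : ∀ g, ∀ x ∈ W, ρ g x ∈ W) (x : V) (hx : x ∈ W) : avg ρ U lam x ∈ W := by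
  have := Fintype.ofFinite U
  rw [avg_apply]
  exact Submodule.sum_mem _ fun u _ => Submodule.smul_mem _ _ (hW _ _ hx)

lemma avg_ff_mem (W : Submodule ℂ (MM n F)) (hW : ∀ g, ∀ x ∈ W, pr g x ∈ W) (hW0 : W ≤ V0 n F)
    (hne : W ≠ ⊥) : avg pr (UU n F) 1 (ff n F) ∈ W := by
  have := Fintype.ofFinite (UU n F)
  obtain ⟨x, hx, hx0⟩ := Submodule.exists_mem_ne_zero_of_ne_bot hne
  obtain ⟨p, hp⟩ : ∃ p, x p ≠ 0 := by
    by_contra hcon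
    push Not at hcon
    exact hx0 (funext hcon)
  obtain ⟨g, rfl⟩ := QuotientGroup.mk_surjective p
  let y := pr g⁻¹ x
  have hy : y ∈ W := hW _ _ hx
  have hy1 : y (QuotientGroup.mk 1) ≠ 0 := by
    simp only [y, pr_apply, inv_inv]
    convert hp using 2
    show QuotientGroup.mk (g * 1) = _
    rw [mul_one]
  have h1 : avg pr (UU n F) 1 y (QuotientGroup.mk 1) = Nat.card (UU n F) * y (QuotientGroup.mk 1) := by
    rw [avg_apply, Finset.sum_apply, Finset.sum_congr rfl (g := fun _ => y (QuotientGroup.mk 1))]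
    · simp [Nat.card_eq_fintype_card]
    · intro u _
      simp only [MonoidHom.one_apply, Units.val_one, one_smul, pr_apply]
      congr 1
      show QuotientGroup.mk ((u : GL (Fin n) F)⁻¹ * 1) = _
      rw [mul_one, QuotientGroup.eq]
      simpa using UU_le_BB u.2
  have h2 : avg pr (UU n F) 1 y ≠ 0 := by
    intro h
    rw [h] at h1
    exact mul_ne_zero (card_ne _) hy1 h1.symm
  have h3 := avg_stable pr (UU n F) 1 W hW y hy
  obtain ⟨c, hc⟩ := Submodule.mem_span_singleton.1 (avg_one_V0 y (hW0 hy))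
  have hc0 : c ≠ 0 := by rintro rfl; rw [zero_smul] at hc; exact h2 hc.symm
  have h4 := Submodule.smul_mem W c⁻¹ h3
  rwa [← hc, smul_smul, inv_mul_cancel₀ hc0, one_smul] at h4

lemma V0_irr (W : Submodule ℂ (MM n F)) (hW : ∀ g, ∀ x ∈ W, pr g x ∈ W) (hW0 : W ≤ V0 n F)
    (hne : W ≠ ⊥) : W = V0 n F := by
  have : Fintype (GL (Fin n) F) := Fintype.ofFinite _
  obtain ⟨p, hp⟩ := W.subtype.exists_leftInverse_of_injective (Submodule.ker_subtype W)
  have hp' : ∀ x : W, p x = x := fun x => congrArg (fun f => f x) hp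
  let q : Module.End ℂ (MM n F) := (Nat.card (GL (Fin n) F) : ℂ)⁻¹ •
    ∑ g : GL (Fin n) F, pr g * (W.subtype.comp p) * pr g⁻¹
  have hc : (Nat.card (GL (Fin n) F) : ℂ) ≠ 0 := by exact_mod_cast Nat.card_pos.ne'
  have hq : ∀ x, q x = (Nat.card (GL (Fin n) F) : ℂ)⁻¹ •
    ∑ g : GL (Fin n) F, pr g (p (pr g⁻¹ x) : MM n F) := by
    intro x; simp [q, LinearMap.sum_apply]
  have hqW : ∀ x, q x ∈ W := by
    intro x; rw [hq]
    exact Submodule.smul_mem _ _ (Submodule.sum_mem _ fun g _ => hW _ _ (p _).2)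
  have hqid : ∀ x ∈ W, q x = x := by
    intro x hx
    rw [hq, Finset.sum_congr rfl (g := fun _ => x)]
    · rw [Finset.sum_const, Finset.card_univ, ← Nat.card_eq_fintype_card,
        ← Nat.cast_smul_eq_nsmul ℂ, smul_smul, inv_mul_cancel₀ hc, one_smul]
    · intro g _
      rw [hp' ⟨pr g⁻¹ x, hW _ _ hx⟩]
      simp only
      rw [← rho_mul, mul_inv_cancel, map_one]; rfl
  have hqc : ∀ h x, q (pr h x) = pr h (q x) := by
    intro h x
    rw [hq, hq, map_smul, map_sum]
    congr 1
    refine (Fintype.sum_equiv (Equiv.mulLeft h) _ _ fun g => ?_).symm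
    rw [Equiv.coe_mulLeft, rho_mul, ← rho_mul pr (h * g)⁻¹]
    congr 5
    group
  let K : Submodule ℂ (MM n F) := LinearMap.ker q ⊓ V0 n F
  have hK : K = ⊥ := by
    by_contra hK
    have h1 := avg_ff_mem K (by
      rintro g x ⟨hx1, hx2⟩
      refine ⟨?_, V0_stable g x hx2⟩
      have hx1' : q x = 0 := hx1
      show q (pr g x) = 0
      rw [hqc, hx1', map_zero]) inf_le_right hK
    have h2 := avg_ff_mem W hW hW0 hne
    have h3 : q _ = 0 := h1.1
    rw [hqid _ h2] at h3
    exact avg_ff_ne 1 h3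
  apply le_antisymm hW0
  intro x hx
  have hxK : x - q x ∈ K := by
    refine ⟨?_, Submodule.sub_mem _ hx (hW0 (hqW x))⟩
    show q (x - q x) = 0
    rw [map_sub, hqid _ (hqW x), sub_self]
  rw [hK, Submodule.mem_bot, sub_eq_zero] at hxK
  rw [hxK]; exact hqW x

end steinberg
end GLSt

open Matrix

namespace GLSt
set_option linter.unusedSectionVars false

section bridge
open CategoryTheory
variable {G : Type} [Group G]

/-- A morphism in `FDRep` from an equivariant linear map. -/
noncomputable def mkHom {V W : FDRep ℂ G} (f : V →ₗ[ℂ] W)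
    (hf : ∀ g x, f (V.ρ g x) = W.ρ g (f x)) : V ⟶ W :=
  ⟨InducedCategory.homMk (ModuleCat.ofHom f), fun g => by
    ext x
    exact hf g x⟩

/-- The linear map underlying a morphism in `FDRep`. -/
noncomputable def linOf {V W : FDRep ℂ G} (f : V ⟶ W) : V →ₗ[ℂ] W := f.hom.hom.hom

lemma linOf_mkHom {V W : FDRep ℂ G} (f : V →ₗ[ℂ] W)
    (hf : ∀ g x, f (V.ρ g x) = W.ρ g (f x)) : linOf (mkHom f hf) = f := rfl

lemma linOf_inj {V W : FDRep ℂ G} (f g : V ⟶ W) (h : linOf f = linOf g) : f = g := by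
  apply Action.Hom.ext
  apply InducedCategory.hom_ext
  apply ModuleCat.hom_ext
  exact h

lemma linOf_comp {V W X : FDRep ℂ G} (f : V ⟶ W) (g : W ⟶ X) :
    linOf (f ≫ g) = (linOf g).comp (linOf f) := rfl

lemma linOf_id {V : FDRep ℂ G} : linOf (𝟙 V) = LinearMap.id := rfl

lemma linOf_zero {V W : FDRep ℂ G} : linOf (0 : V ⟶ W) = 0 := rfl

lemma linOf_rho {V W : FDRep ℂ G} (f : V ⟶ W) (g : G) (x : V) :
    linOf f (V.ρ g x) = W.ρ g (linOf f x) := by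
  have := f.comm g
  exact congrArg (fun (h : V.V ⟶ W.V) => h.hom.hom x) this

/-- restriction of a representation to a stable subspace -/
noncomputable def subRep {V : Type} [AddCommGroup V] [Module ℂ V] (ρ : Representation ℂ G V)
    (W : Submodule ℂ V) (hW : ∀ g, ∀ x ∈ W, ρ g x ∈ W) : Representation ℂ G W where
  toFun g := (ρ g).restrict (hW g)
  map_one' := by ext x; simp
  map_mul' := by intro a b; ext x; simp

lemma irr_of_simple (V : FDRep ℂ G) (hV : Simple V) : Irr V.ρ := by
  constructor
  · by_contra hn
    rw [not_nontrivial_iff_subsingleton] at hn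
    apply id_nonzero V
    apply linOf_inj
    ext x
    exact Subsingleton.elim _ _
  · intro W hW
    by_cases hb : W = ⊥
    · exact Or.inl hb
    right
    let i : FDRep.of (subRep V.ρ W hW) ⟶ V := mkHom W.subtype (fun g x => rfl)
    have hi : linOf i = W.subtype := rfl
    have : Mono i := ⟨by
      intro Z a b hab
      apply linOf_inj
      have := congrArg linOf hab
      rw [linOf_comp, linOf_comp, hi] at this
      ext x
      exact congrArg (fun f => f x) this⟩
    have hne : i ≠ 0 := by
      intro h0
      have h1 := congrArg linOf h0
      rw [hi, linOf_zero] at h1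
      apply hb
      rw [Submodule.eq_bot_iff]
      intro x hx
      exact congrArg (fun f : W →ₗ[ℂ] V => f ⟨x, hx⟩) h1
    have := isIso_of_mono_of_nonzero hne
    have h2 := congrArg linOf (IsIso.inv_hom_id i)
    rw [linOf_comp, linOf_id, hi] at h2
    rw [eq_top_iff]
    intro x _
    have h3 := congrArg (fun f : V →ₗ[ℂ] V => f x) h2
    have h4 : ((linOf (inv i) x : W) : V) = x := h3
    rw [← h4]
    exact (linOf (inv i) x : W).2

lemma simple_of_irr {V : Type} [AddCommGroup V] [Module ℂ V] [FiniteDimensional ℂ V]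
    (ρ : Representation ℂ G V) (h : Irr ρ) : Simple (FDRep.of ρ) := by
  constructor
  intro Y f hf
  have hker : LinearMap.ker (linOf f) = ⊥ := by
    have hst : ∀ g, ∀ x ∈ LinearMap.ker (linOf f), Y.ρ g x ∈ LinearMap.ker (linOf f) := by
      intro g x hx
      rw [LinearMap.mem_ker] at hx ⊢
      rw [linOf_rho, hx, map_zero]
    let i : FDRep.of (subRep Y.ρ _ hst) ⟶ Y := mkHom (LinearMap.ker (linOf f)).subtype (fun g x => rfl)
    have h0 : i = 0 := by
      rw [← cancel_mono f, Limits.zero_comp]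
      apply linOf_inj
      ext x
      exact x.2
    have h1 := congrArg linOf h0
    rw [Submodule.eq_bot_iff]
    intro x hx
    exact congrArg (fun f : LinearMap.ker (linOf f) →ₗ[ℂ] Y => f ⟨x, hx⟩) h1
  constructor
  · intro hi h0
    have h2 := congrArg linOf (IsIso.inv_hom_id f)
    have hf0 : linOf f = 0 := by rw [h0]; rfl
    rw [linOf_comp, linOf_id, hf0] at h2
    obtain ⟨x, hx⟩ := @exists_ne V h.1 0
    exact hx (congrArg (fun f : V →ₗ[ℂ] V => f x) h2).symm
  · intro h0
    have hr : LinearMap.range (linOf f) = ⊤ := by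
      refine (h.2 (LinearMap.range (linOf f)) ?_).resolve_left ?_
      · rintro g _ ⟨x, rfl⟩
        exact ⟨Y.ρ g x, linOf_rho f g x⟩
      · intro hb
        apply h0
        apply linOf_inj
        exact LinearMap.range_eq_bot.1 hb
    let E : Y ≃ₗ[ℂ] V := LinearEquiv.ofBijective (linOf f)
      ⟨LinearMap.ker_eq_bot.1 hker, LinearMap.range_eq_top.1 hr⟩
    let j : FDRep.of ρ ⟶ Y := mkHom E.symm.toLinearMap (fun g x => by
      show E.symm (ρ g x) = Y.ρ g (E.symm x)
      rw [LinearEquiv.symm_apply_eq]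
      have h1 : E (Y.ρ g (E.symm x)) = ρ g (E (E.symm x)) := linOf_rho f g (E.symm x)
      rw [h1, LinearEquiv.apply_symm_apply])
    refine ⟨j, ?_, ?_⟩
    · apply linOf_inj
      ext x
      exact E.symm_apply_apply x
    · apply linOf_inj
      ext x
      exact E.apply_symm_apply x

end bridge
end GLSt

open Matrix

namespace GLSt
set_option linter.unusedSectionVars false

section final
variable {n : ℕ} {F : Type} [Field F] [Finite F]

variable (n) in
/-- The twisted Steinberg representation. -/
noncomputable def St (α : Fˣ →* ℂˣ) : Representation ℂ (GL (Fin n) F) (V0 n F) where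
  toFun g := (α g.det : ℂ) • subRep pr (V0 n F) V0_stable g
  map_one' := by simp
  map_mul' := by
    intro a b
    rw [map_mul, map_mul, map_mul, Units.val_mul, smul_mul_smul_comm]

lemma St_apply (α : Fˣ →* ℂˣ) (g : GL (Fin n) F) (x : V0 n F) :
    (St n α g x : MM n F) = (α g.det : ℂ) • pr g x := rfl

lemma St_irr (α : Fˣ →* ℂˣ) : Irr (St n α) := by
  constructor
  · refine ⟨⟨⟨ff n F, ff_mem⟩, 0, fun e => ?_⟩⟩
    have e' : ff n F = 0 := congrArg Subtype.val e
    exact avg_ff_ne (n := n) (F := F) 1 (by rw [e', map_zero])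
  · intro W hW
    by_cases hb : W = ⊥
    · exact Or.inl hb
    right
    have h1 := V0_irr (W.map (V0 n F).subtype) (by
      rintro g _ ⟨x, hx, rfl⟩
      refine ⟨(α g.det : ℂ)⁻¹ • St n α g x, W.smul_mem _ (hW g x hx), ?_⟩
      rw [map_smul]
      show (α g.det : ℂ)⁻¹ • (α g.det : ℂ) • pr g x = pr g x
      rw [smul_smul, inv_mul_cancel₀ (Units.ne_zero _), one_smul])
      (by rintro _ ⟨x, _, rfl⟩; exact x.2)
      (by
        intro e
        apply hb
        rw [Submodule.eq_bot_iff]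
        intro x hx
        have hm : (x : MM n F) ∈ W.map (V0 n F).subtype := ⟨x, hx, rfl⟩
        rw [e, Submodule.mem_bot] at hm
        exact Subtype.ext hm)
    rw [eq_top_iff]
    intro x _
    have hx : (x : MM n F) ∈ W.map (V0 n F).subtype := by rw [h1]; exact x.2
    obtain ⟨y, hy, e⟩ := hx
    rwa [Subtype.ext e] at hy

lemma idem_trace_zero {V : Type} [AddCommGroup V] [Module ℂ V] [FiniteDimensional ℂ V]
    (P : V →ₗ[ℂ] V) (hP : IsIdempotentElem P) (h : LinearMap.trace ℂ V P = 0) : P = 0 :=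
  (LinearMap.IsIdempotentElem.trace_eq_zero_iff hP).1 h

lemma avg_hom {G V W : Type} [Group G] [Finite G] [AddCommGroup V] [Module ℂ V]
    [AddCommGroup W] [Module ℂ W] (ρ : Representation ℂ G V) (σ : Representation ℂ G W)
    (U : Subgroup G) (lam : U →* ℂˣ) (f : V →ₗ[ℂ] W) (hf : ∀ u ∈ U, ∀ x, f (ρ u x) = σ u (f x))
    (x : V) : f (avg ρ U lam x) = avg σ U lam (f x) := by
  have := Fintype.ofFinite U
  rw [avg_apply, avg_apply, map_sum]
  refine Finset.sum_congr rfl fun u _ => ?_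
  rw [map_smul, hf _ u.2]

lemma exists_pi {V : Type} [AddCommGroup V] [Module ℂ V]
    (ρ : Representation ℂ (GL (Fin n) F) V) (α : Fˣ →* ℂˣ) (v : V)
    (hv : ∀ b ∈ BB n F, ρ b v = (α b.det : ℂ) • v) :
    ∃ π : MM n F →ₗ[ℂ] V, π (cell 1) = v ∧
      ∀ g x, π (pr g x) = (α g.det : ℂ)⁻¹ • ρ g (π x) := by
  classical
  have : Fintype (GL (Fin n) F ⧸ BB n F) := Fintype.ofFinite _
  let π : MM n F →ₗ[ℂ] V := (Pi.basisFun ℂ (GL (Fin n) F ⧸ BB n F)).constr ℂ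
    (fun p => (α p.out.det : ℂ)⁻¹ • ρ p.out v)
  have hπ : ∀ g, π (cell g) = (α g.det : ℂ)⁻¹ • ρ g v := by
    intro g
    have e : cell g = Pi.basisFun ℂ (GL (Fin n) F ⧸ BB n F) (QuotientGroup.mk g) := by
      simp [cell]
    rw [e]
    simp only [π]
    rw [Module.Basis.constr_basis]
    obtain ⟨b, hb⟩ := QuotientGroup.mk_out_eq_mul (BB n F) g
    rw [hb, rho_mul, hv _ b.2, map_smul, smul_smul, map_mul, map_mul, Units.val_mul]
    congr 1
    rw [mul_inv, mul_assoc, inv_mul_cancel₀ (Units.ne_zero _), mul_one]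
  refine ⟨π, ?_, ?_⟩
  · rw [hπ]; simp
  · intro g x
    have hx : x ∈ Submodule.span ℂ (Set.range fun g => pr (n := n) (F := F) g (cell 1)) :=
      cell_span trivial
    induction hx using Submodule.span_induction with
    | mem x hx =>
      obtain ⟨k, rfl⟩ := hx
      simp only [pr_cell, mul_one]
      rw [hπ, hπ, map_smul, smul_smul, rho_mul, map_mul, map_mul, Units.val_mul, mul_inv]
    | zero => simp
    | add x y _ _ hx hy => rw [map_add, map_add, map_add, map_add, smul_add, hx, hy]
    | smul c x _ hx => rw [map_smul, map_smul, map_smul, map_smul, hx, smul_comm]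

lemma trace_eq {V : Type} [AddCommGroup V] [Module ℂ V] [FiniteDimensional ℂ V]
    (ρ : Representation ℂ (GL (Fin n) F) V) (h : Irr ρ) (α : Fˣ →* ℂˣ) (v : V) (hv0 : v ≠ 0)
    (hv : ∀ b ∈ BB n F, ρ b v = (α b.det : ℂ) • v)
    (e : Multiplicative F →* ℂˣ) (he : e ≠ 1) (hψ : eig ρ (UU n F) (psi e) ≠ ⊥)
    (g : GL (Fin n) F) :
    LinearMap.trace ℂ V (ρ g) = LinearMap.trace ℂ (V0 n F) (St n α g) := by
  obtain ⟨π, hπ1, hπ⟩ := exists_pi ρ α v hv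
  have hπU : ∀ u ∈ UU n F, ∀ x, π (pr u x) = ρ u (π x) := by
    intro u hu x
    rw [hπ, det_UU u hu]; simp
  have hsurj : ∀ y, ∃ x, π x = y := by
    intro y
    have hy : y ∈ Submodule.span ℂ (Set.range fun g => ρ g v) := span_top_of_irr ρ h v hv0 trivial
    have : Submodule.span ℂ (Set.range fun g => ρ g v) ≤ LinearMap.range π := by
      rw [Submodule.span_le]
      rintro _ ⟨k, rfl⟩
      refine ⟨(α k.det : ℂ) • pr k (cell 1), ?_⟩
      rw [map_smul, hπ, hπ1, smul_smul, mul_inv_cancel₀ (Units.ne_zero _), one_smul]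
    exact this hy
  obtain ⟨y, hy, hy0⟩ := Submodule.exists_mem_ne_zero_of_ne_bot hψ
  obtain ⟨m, rfl⟩ := hsurj y
  have hcellU : ∀ b ∈ BB n F, pr b (cell 1 : MM n F) = cell 1 := by
    intro b hb
    rw [pr_cell, mul_one, ← one_mul b, cell_mul _ _ hb]
  have hsp := avg_psi_span pr e he (cell 1 : MM n F) (fun u hu => hcellU u (UU_le_BB hu))
    (fun b hb => ⟨1, by rw [hcellU b hb, one_smul]⟩) cell_span
  set z := avg pr (UU n F) (psi e) (pr (pm w0) (cell 1 : MM n F))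
  obtain ⟨c, hc⟩ := Submodule.mem_span_singleton.1 (hsp m)
  obtain ⟨c', hc'⟩ := Submodule.mem_span_singleton.1 (hsp (ff n F))
  have hz : π z ≠ 0 := by
    intro hz
    apply hy0
    apply eig_eq_zero_of_avg ρ _ _ _ hy
    rw [← avg_hom pr ρ (UU n F) (psi e) π hπU, ← hc, map_smul, hz, smul_zero]
  have hc0 : c' ≠ 0 := by
    rintro rfl
    rw [zero_smul] at hc'
    exact avg_ff_ne (psi e) hc'.symm
  let T : V0 n F →ₗ[ℂ] V := π.comp (V0 n F).subtype
  have hT : ∀ g x, T (St n α g x) = ρ g (T x) := by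
    intro g x
    show π ((α g.det : ℂ) • pr g x) = ρ g (π x)
    rw [map_smul, hπ, smul_smul, mul_inv_cancel₀ (Units.ne_zero _), one_smul]
  have hTne : ∃ x, T x ≠ 0 := by
    refine ⟨⟨avg pr (UU n F) (psi e) (ff n F), avg_stable _ _ _ _ V0_stable _ ff_mem⟩, ?_⟩
    show π (avg pr (UU n F) (psi e) (ff n F)) ≠ 0
    rw [← hc', map_smul]
    exact smul_ne_zero hc0 hz
  obtain ⟨x0, hx0⟩ := hTne
  have hker : LinearMap.ker T = ⊥ := by
    refine ((St_irr α).2 (LinearMap.ker T) ?_).resolve_right ?_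
    · intro g x hx
      rw [LinearMap.mem_ker] at hx ⊢
      rw [hT, hx, map_zero]
    · intro e
      have : x0 ∈ LinearMap.ker T := by rw [e]; trivial
      exact hx0 this
  have hrange : LinearMap.range T = ⊤ := by
    refine (h.2 (LinearMap.range T) ?_).resolve_left ?_
    · rintro g _ ⟨x, rfl⟩
      exact ⟨_, hT g x⟩
    · intro e
      have : T x0 ∈ LinearMap.range T := ⟨x0, rfl⟩
      rw [e, Submodule.mem_bot] at this
      exact hx0 this
  let E : V0 n F ≃ₗ[ℂ] V := LinearEquiv.ofBijective T
    ⟨LinearMap.ker_eq_bot.1 hker, LinearMap.range_eq_top.1 hrange⟩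
  have hconj : ρ g = E.conj (St n α g) := by
    ext y
    rw [LinearEquiv.conj_apply_apply]
    have : E (St n α g (E.symm y)) = ρ g (E (E.symm y)) := hT g _
    rw [this, LinearEquiv.apply_symm_apply]
  rw [hconj, LinearMap.trace_conj']

lemma trace_St (α : Fˣ →* ℂˣ) (g : GL (Fin n) F) :
    LinearMap.trace ℂ (V0 n F) (St n α g) =
      (α g.det : ℂ) * LinearMap.trace ℂ (V0 n F) (St n 1 g) := by
  have : St n α g = (α g.det : ℂ) • St n 1 g := by
    ext x : 2
    show (α g.det : ℂ) • pr g (x : MM n F) = (α g.det : ℂ) • ((1 : ℂ) • pr g (x : MM n F))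
    rw [one_smul]
  rw [this, map_smul, smul_eq_mul]

lemma St_inj (hn : 1 ≤ n) (α β : Fˣ →* ℂˣ)
    (h : ∀ g, LinearMap.trace ℂ (V0 n F) (St n α g) = LinearMap.trace ℂ (V0 n F) (St n β g)) :
    α = β := by
  have := Fintype.ofFinite (UU n F)
  ext a
  let t : GL (Fin n) F := dg (Pi.mulSingle ⟨0, hn⟩ a)
  have ht : t.det = a := by
    simp only [t]
    rw [det_dg, Finset.prod_pi_mulSingle']
    simp
  let N := avg (St n (1 : Fˣ →* ℂˣ)) (UU n F) 1
  have hsub : ∀ x : V0 n F, ((N x : V0 n F) : MM n F) = avg pr (UU n F) 1 (x : MM n F) := by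
    intro x
    exact avg_hom (St n (1 : Fˣ →* ℂˣ)) pr (UU n F) 1 (V0 n F).subtype (by
      intro u _ y
      show ((1 : ℂ) • pr u (y : MM n F)) = _
      rw [one_smul]; rfl) x
  have hNN : N * N = (Nat.card (UU n F) : ℂ) • N := by
    ext x : 1
    exact avg_of_mem _ _ _ _ (avg_mem _ _ _ _)
  have hN0 : N ≠ 0 := by
    intro h0
    have h1 := hsub ⟨ff n F, ff_mem⟩
    rw [h0] at h1
    exact avg_ff_ne 1 h1.symm
  have hNtr : LinearMap.trace ℂ (V0 n F) N ≠ 0 := by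
    intro h0
    have hid : IsIdempotentElem ((Nat.card (UU n F) : ℂ)⁻¹ • N) := by
      unfold IsIdempotentElem
      rw [smul_mul_smul_comm, hNN, smul_smul, mul_assoc, inv_mul_cancel₀ (card_ne _), mul_one]
    have h1 := idem_trace_zero _ hid (by
      rw [map_smul, h0, smul_zero])
    exact hN0 ((smul_eq_zero.1 h1).resolve_left (inv_ne_zero (card_ne _)))
  have htN : St n 1 t * N = N := by
    ext x : 2
    show (1 : ℂ) • pr t ((N x : V0 n F) : MM n F) = ((N x : V0 n F) : MM n F)
    rw [one_smul, hsub]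
    obtain ⟨c, hc⟩ := Submodule.mem_span_singleton.1 (avg_one_V0 _ x.2)
    rw [← hc, map_smul, avg_one_dg, ff_dg]
  have hsum : ∀ γ : Fˣ →* ℂˣ, ∑ u : UU n F, LinearMap.trace ℂ (V0 n F) (St n γ (t * u)) =
      (γ a : ℂ) * LinearMap.trace ℂ (V0 n F) N := by
    intro γ
    have e1 : N = ∑ u : UU n F, St n 1 (u : GL (Fin n) F) := by
      ext x : 1
      rw [LinearMap.sum_apply]
      simp only [N]
      rw [avg_apply]
      simp
    rw [← htN]
    conv_rhs => rw [e1, Finset.mul_sum, map_sum, Finset.mul_sum]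
    refine Finset.sum_congr rfl fun u _ => ?_
    rw [trace_St, map_mul, det_UU _ u.2, mul_one, ht, map_mul]
  have h2 := hsum α
  rw [Finset.sum_congr rfl (fun u _ => h _), hsum β] at h2
  exact (mul_right_cancel₀ hNtr h2).symm

end final
end GLSt

open GLSt
theorem GL_defect_zero_count (ℓ : ℕ) (hℓ : ℓ.Prime) (n : ℕ) (hn : 1 ≤ n) :
    Set.ncard { f : GL (Fin n) (ZMod ℓ) → ℂ |
      ∃ V : FDRep ℂ (GL (Fin n) (ZMod ℓ)), CategoryTheory.Simple V ∧ V.character = f ∧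
        padicValNat ℓ (Module.finrank ℂ V) =
          padicValNat ℓ (Nat.card (GL (Fin n) (ZMod ℓ))) } = ℓ - 1 := by
  have : Fact ℓ.Prime := ⟨hℓ⟩
  obtain ⟨e, he⟩ : ∃ e : Multiplicative (ZMod ℓ) →* ℂˣ, e ≠ 1 := by
    have h1 := CommGroup.card_monoidHom_of_hasEnoughRootsOfUnity (Multiplicative (ZMod ℓ)) ℂ
    have h2 : Nat.card (Multiplicative (ZMod ℓ)) = ℓ := by
      rw [Nat.card_congr Multiplicative.toAdd, Nat.card_zmod]
    rw [h2] at h1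
    have : Finite (Multiplicative (ZMod ℓ) →* ℂˣ) :=
      Nat.finite_of_card_ne_zero (by rw [h1]; exact hℓ.ne_zero)
    have := Finite.one_lt_card_iff_nontrivial.1 (by rw [h1]; exact hℓ.one_lt)
    exact exists_ne 1
  let Φ : ((ZMod ℓ)ˣ →* ℂˣ) → (GL (Fin n) (ZMod ℓ) → ℂ) :=
    fun α g => LinearMap.trace ℂ (V0 n (ZMod ℓ)) (St n α g)
  have hset : { f : GL (Fin n) (ZMod ℓ) → ℂ |
      ∃ V : FDRep ℂ (GL (Fin n) (ZMod ℓ)), CategoryTheory.Simple V ∧ V.character = f ∧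
        padicValNat ℓ (Module.finrank ℂ V) =
          padicValNat ℓ (Nat.card (GL (Fin n) (ZMod ℓ))) } = Set.range Φ := by
    ext f
    constructor
    · rintro ⟨V, hV, rfl, hd⟩
      have hirr := irr_of_simple V hV
      obtain ⟨hψ, α, v, hv0, hv⟩ := exists_alpha ℓ n hn V.ρ hirr hd e he
      refine ⟨α, funext fun g => ?_⟩
      exact (trace_eq V.ρ hirr α v hv0 hv e he hψ g).symm
    · rintro ⟨α, rfl⟩
      refine ⟨FDRep.of (St n α), simple_of_irr _ (St_irr α), rfl, ?_⟩
      rw [← val_card]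
      congr 1
      exact finrank_V0
  have hinj : Function.Injective Φ := fun α β h => St_inj hn α β (fun g => congrFun h g)
  rw [hset, Set.ncard_range_of_injective hinj,
    CommGroup.card_monoidHom_of_hasEnoughRootsOfUnity, Nat.card_eq_fintype_card,
    ZMod.card_units]
end
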